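/- arXiv:1402.0401 — 3 statements merged into one kernel-verified Lean document; each statement's English description precedes it below -/
import Mathlib

section
/- Let G be a finitely generated group having a free subgroup of finite index. Then there exists a constant M > 0 such that for every endomorphism φ of G, the periodic subgroup Per(φ) = ⋃_{n ≥ 1} Fix(φⁿ) is generated by at most M elements. -/
/-- The periodic set `Per(φ) = ⋃_{n ≥ 1} Fix(φⁿ)` of an endomorphism `φ`. -/
def perSet {G : Type*} [Group G] (φ : Monoid.End G) : Set G :=
  {x | ∃ n, 1 ≤ n ∧ (φ ^ n) x = x}

/-! ### Part 1: pretrees with medians and the Euler characteristic identity -/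

/-- A pretree with medians: `B a y b` says that `y` lies on the arc `[a,b]`. -/
structure PreTree (T : Type*) where
  B : T → T → T → Prop
  left : ∀ a b, B a a b
  symm : ∀ {a y b}, B a y b → B b y a
  tri : ∀ {a y c} (b), B a y c → B a y b ∨ B b y c
  anti : ∀ {a y b}, B a y b → B a b y → y = b
  med : ∀ a b c, ∃ m, B a m b ∧ B a m c ∧ B b m c

namespace PreTree

variable {T : Type*} (S : PreTree T)

theorem right (a b : T) : S.B a b b := S.symm (S.left b a)

theorem eq_of_self {a y : T} (h : S.B a y a) : y = a := S.anti h (S.left a y)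

theorem trans {a z y b : T} (h1 : S.B a z y) (h2 : S.B a y b) : S.B a z b := by
  rcases S.tri b h1 with h | h
  · exact h
  · have : y = z := by
      rcases S.tri z h2 with h3 | h3
      · exact S.anti h3 h1
      · exact S.anti (S.symm h3) h
    rw [← this]; exact h2

theorem trans' {a z y b : T} (h1 : S.B a z y) (h2 : S.B a y b) : S.B z y b := by
  rcases S.tri z h2 with h3 | h3
  · rw [S.anti h3 h1]; exact S.left _ _
  · exact h3

/-- if `q ∈ [a,b]` and `y ∈ [q,a] ∩ [q,b]` then `y = q` -/
theorem eq_of_both {q a b y : T} (h : S.B a q b) (h1 : S.B q y a) (h2 : S.B q y b) : y = q := by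
  rcases S.tri y h with h3 | h3
  · exact S.anti (S.symm h1) h3
  · exact S.anti (S.symm h2) (S.symm h3)

/-- hull of a finite set -/
def hull (W : Finset T) : Set T := {y | ∃ a ∈ W, ∃ b ∈ W, S.B a y b}

theorem hull_mono {W W' : Finset T} (h : W ⊆ W') : S.hull W ⊆ S.hull W' := by
  rintro y ⟨a, ha, b, hb, hy⟩
  exact ⟨a, h ha, b, h hb, hy⟩

theorem subset_hull {W : Finset T} {y : T} (h : y ∈ W) : y ∈ S.hull W :=
  ⟨y, h, y, h, S.left _ _⟩

/-- the direction at `y` towards `z` -/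
def dir (y z : T) : T × Set T := (y, {z' | z' ≠ y ∧ ¬ S.B z y z'})

theorem dir_eq_iff {y z z' : T} (hz : z ≠ y) (hz' : z' ≠ y) :
    S.dir y z = S.dir y z' ↔ ¬ S.B z y z' := by
  constructor
  · intro h
    have h2 : {zz | zz ≠ y ∧ ¬ S.B z y zz} = {zz | zz ≠ y ∧ ¬ S.B z' y zz} :=
      congrArg Prod.snd h
    have : z' ∈ {zz | zz ≠ y ∧ ¬ S.B z' y zz} :=
      ⟨hz', fun h => hz' (S.eq_of_self h).symm⟩
    rw [← h2] at this
    exact this.2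
  · intro h
    unfold dir
    congr 1
    ext w
    simp only [Set.mem_setOf_eq]
    constructor
    · rintro ⟨h1, h2⟩
      refine ⟨h1, fun h3 => ?_⟩
      rcases S.tri z h3 with h4 | h4
      · exact h (S.symm h4)
      · exact h2 h4
    · rintro ⟨h1, h2⟩
      refine ⟨h1, fun h3 => ?_⟩
      rcases S.tri z' h3 with h4 | h4
      · exact h h4
      · exact h2 h4

open Classical in
/-- the directions at `y` hit by `W` -/
noncomputable def dirs (W : Finset T) (y : T) : Finset (T × Set T) :=
  (W.filter (fun z => z ≠ y)).image (S.dir y)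

theorem mem_dirs {W : Finset T} {y : T} {d : T × Set T} :
    d ∈ S.dirs W y ↔ ∃ z ∈ W, z ≠ y ∧ S.dir y z = d := by
  classical
  simp [dirs, and_assoc]

theorem dirs_mono {W W' : Finset T} (h : W ⊆ W') (y : T) : S.dirs W y ⊆ S.dirs W' y := by
  intro d hd
  rw [mem_dirs] at hd ⊢
  obtain ⟨z, hz, h1⟩ := hd
  exact ⟨z, h hz, h1⟩

/-- valence -/
noncomputable def val (W : Finset T) (y : T) : ℕ := (S.dirs W y).card

theorem val_mono {W W' : Finset T} (h : W ⊆ W') (y : T) : S.val W y ≤ S.val W' y :=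
  Finset.card_le_card (S.dirs_mono h y)

theorem two_le_val {W : Finset T} {y : T} (hy : y ∈ S.hull W) (hW : y ∉ W) : 2 ≤ S.val W y := by
  classical
  obtain ⟨a, ha, b, hb, h⟩ := hy
  have hay : a ≠ y := fun h => hW (h ▸ ha)
  have hby : b ≠ y := fun h => hW (h ▸ hb)
  have : S.dir y a ≠ S.dir y b := fun h' => ((S.dir_eq_iff hay hby).1 h') h
  have h2 : ({S.dir y a, S.dir y b} : Finset _) ⊆ S.dirs W y := by
    intro d hd
    rw [mem_dirs]
    simp only [Finset.mem_insert, Finset.mem_singleton] at hd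
    rcases hd with rfl | rfl
    · exact ⟨a, ha, hay, rfl⟩
    · exact ⟨b, hb, hby, rfl⟩
  calc 2 = ({S.dir y a, S.dir y b} : Finset _).card := (Finset.card_pair this).symm
    _ ≤ _ := Finset.card_le_card h2

theorem dirs_insert_self [DecidableEq T] (W : Finset T) (b : T) : S.dirs (insert b W) b = S.dirs W b := by
  ext d
  simp only [mem_dirs, Finset.mem_insert]
  constructor
  · rintro ⟨z, rfl | hz, h1, h2⟩
    · exact absurd rfl h1
    · exact ⟨z, hz, h1, h2⟩
  · rintro ⟨z, hz, h1, h2⟩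
    exact ⟨z, Or.inr hz, h1, h2⟩

open Classical in
theorem dirs_insert_ne (W : Finset T) {b y : T} (h : b ≠ y) :
    S.dirs (insert b W) y = insert (S.dir y b) (S.dirs W y) := by
  ext d
  simp only [mem_dirs, Finset.mem_insert]
  constructor
  · rintro ⟨z, rfl | hz, h1, h2⟩
    · exact Or.inl h2.symm
    · exact Or.inr ⟨z, hz, h1, h2⟩
  · rintro (rfl | ⟨z, hz, h1, h2⟩)
    · exact ⟨b, Or.inl rfl, h, rfl⟩
    · exact ⟨z, Or.inr hz, h1, h2⟩

theorem val_eq_one {W : Finset T} (hne : W.Nonempty) {y : T} (hy : y ∉ S.hull W) :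
    S.val W y = 1 := by
  obtain ⟨a, ha⟩ := hne
  have hyW : ∀ z ∈ W, z ≠ y := fun z hz h => hy (h ▸ S.subset_hull hz)
  unfold val
  rw [Finset.card_eq_one]
  refine ⟨S.dir y a, ?_⟩
  ext d
  rw [mem_dirs, Finset.mem_singleton]
  constructor
  · rintro ⟨z, hz, h1, rfl⟩
    rw [S.dir_eq_iff h1 (hyW a ha)]
    exact fun h => hy ⟨z, hz, a, ha, h⟩
  · rintro rfl
    exact ⟨a, ha, hyW a ha, rfl⟩

/-- projection to the hull -/
theorem exists_proj {W : Finset T} (hne : W.Nonempty) (w : T) :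
    ∃ q ∈ S.hull W, ∀ a ∈ W, S.B w q a := by
  classical
  induction hne using Finset.Nonempty.cons_induction with
  | singleton a => exact ⟨a, S.subset_hull (by simp), by simp [S.right]⟩
  | cons b W hb hne ih =>
    rw [Finset.cons_eq_insert]
    obtain ⟨q, hq, hqa⟩ := ih
    obtain ⟨m, h1, h2, h3⟩ := S.med w q b
    refine ⟨m, ?_, ?_⟩
    · by_cases hmq : m = q
      · rw [hmq]; exact S.hull_mono (Finset.subset_insert _ _) hq
      · obtain ⟨a, ha⟩ := hne
        refine ⟨a, by simp [ha], b, by simp, ?_⟩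
        rcases S.tri a h3 with h | h
        · exact absurd (S.anti (S.symm h) (S.symm (S.trans' h1 (hqa a ha)))) hmq
        · exact h
    · intro a ha
      rw [Finset.mem_insert] at ha
      rcases ha with rfl | ha
      · exact h2
      · exact S.trans h1 (hqa a ha)

theorem exists_dir_of_hull {W : Finset T} {q y : T} (hq : q ∈ S.hull W) (h : y ≠ q) :
    S.dir y q ∈ S.dirs W y := by
  obtain ⟨a, ha, b, hb, hab⟩ := hq
  rw [mem_dirs]
  by_cases h1 : S.B q y a
  · by_cases h2 : S.B q y b
    · exact absurd (S.eq_of_both hab h1 h2) h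
    · have hb' : b ≠ y := fun h' => h2 (h' ▸ S.right _ _)
      exact ⟨b, hb, hb', (S.dir_eq_iff hb' h.symm).2 fun h => h2 (S.symm h)⟩
  · have hb' : a ≠ y := fun h' => h1 (h' ▸ S.right _ _)
    exact ⟨a, ha, hb', (S.dir_eq_iff hb' h.symm).2 fun h => h1 (S.symm h)⟩

theorem hull_insert {W : Finset T} [DecidableEq T] {b : T} (hb : b ∈ S.hull W) :
    S.hull (insert b W) = S.hull W := by
  have key : ∀ y, ∀ a ∈ W, S.B a y b → y ∈ S.hull W := by
    intro y a ha h
    obtain ⟨c, hc, d, hd, hcd⟩ := hb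
    by_cases hyb : y = b
    · subst hyb; exact ⟨c, hc, d, hd, hcd⟩
    by_cases h1 : S.B b y c
    · by_cases h2 : S.B b y d
      · exact absurd (S.eq_of_both hcd h1 h2) hyb
      · rcases S.tri d h with h3 | h3
        · exact ⟨a, ha, d, hd, h3⟩
        · exact absurd (S.symm h3) h2
    · rcases S.tri c h with h3 | h3
      · exact ⟨a, ha, c, hc, h3⟩
      · exact absurd (S.symm h3) h1
  apply Set.Subset.antisymm _ (S.hull_mono (Finset.subset_insert _ _))
  rintro y ⟨a, ha, c, hc, h⟩
  rw [Finset.mem_insert] at ha hc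
  rcases ha with rfl | ha <;> rcases hc with rfl | hc
  · rw [S.eq_of_self h]; exact hb
  · exact key y c hc (S.symm h)
  · exact key y a ha h
  · exact ⟨a, ha, c, hc, h⟩

/-- The Euler characteristic identity for the hull of a finite set. -/
theorem euler {W : Finset T} (hne : W.Nonempty) :
    ∃ A0 : Finset T, (A0 : Set T) ⊆ S.hull W ∧ ∀ A : Finset T, A0 ⊆ A → (A : Set T) ⊆ S.hull W →
      ∑ y ∈ A, ((S.val W y : ℤ) - 2) = -2 := by
  classical
  induction hne using Finset.Nonempty.cons_induction with
  | singleton a =>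
    refine ⟨{a}, by simpa using S.subset_hull (by simp), ?_⟩
    intro A h1 h2
    have : A = {a} := by
      apply Finset.Subset.antisymm _ h1
      intro y hy
      obtain ⟨c, hc, d, hd, h⟩ := h2 hy
      rw [Finset.mem_singleton] at hc hd
      subst hc; subst hd
      simp [S.eq_of_self h]
    subst this
    have : S.val {a} a = 0 := by
      unfold val
      rw [Finset.card_eq_zero, Finset.eq_empty_iff_forall_notMem]
      intro d hd
      rw [mem_dirs] at hd
      obtain ⟨z, hz, h1, _⟩ := hd
      exact h1 (by simpa using hz)
    simp [this]
  | cons b W hb hne ih =>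
    rw [Finset.cons_eq_insert]
    obtain ⟨A0, hA0, hA⟩ := ih
    by_cases hbW : b ∈ S.hull W
    · refine ⟨A0, by rwa [S.hull_insert hbW], ?_⟩
      intro A h1 h2
      rw [S.hull_insert hbW] at h2
      rw [← hA A h1 h2]
      refine Finset.sum_congr rfl fun y hy => ?_
      have : S.dirs (insert b W) y = S.dirs W y := by
        by_cases hyb : y = b
        · subst hyb; exact S.dirs_insert_self _ _
        · rw [S.dirs_insert_ne W (Ne.symm hyb)]
          exact Finset.insert_eq_of_mem (S.exists_dir_of_hull hbW hyb)
      simp [val, this]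
    · obtain ⟨q, hq, hqa⟩ := S.exists_proj hne b
      have hqb : b ≠ q := fun h => hbW (h ▸ hq)
      refine ⟨insert b (insert q A0), ?_, ?_⟩
      · intro y hy
        simp only [Finset.coe_insert, Set.mem_insert_iff] at hy
        rcases hy with rfl | rfl | hy
        · exact S.subset_hull (by simp)
        · exact S.hull_mono (Finset.subset_insert _ _) hq
        · exact S.hull_mono (Finset.subset_insert _ _) (hA0 hy)
      intro A h1 h2
      have hbA : b ∈ A := h1 (by simp)
      have hqA : q ∈ A := h1 (by simp)
      rw [← Finset.sum_filter_add_sum_filter_not A (fun y => y ∈ S.hull W)]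
      have e1 : ∑ y ∈ A with y ∈ S.hull W, ((S.val (insert b W) y : ℤ) - 2) = -1 := by
        have e := hA (A.filter (fun y => y ∈ S.hull W)) (by
          intro y hy
          rw [Finset.mem_filter]
          exact ⟨h1 (by simp [hy]), hA0 hy⟩) (by
          intro y hy
          simp at hy
          exact hy.2)
        have hq' : q ∈ A.filter (fun y => y ∈ S.hull W) := by simp [hqA, hq]
        rw [← Finset.add_sum_erase _ _ hq'] at e ⊢
        have e3 : S.val (insert b W) q = S.val W q + 1 := by
          unfold val
          rw [S.dirs_insert_ne W hqb, Finset.card_insert_of_notMem]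
          rw [mem_dirs]
          rintro ⟨z, hz, h3, h4⟩
          rw [S.dir_eq_iff h3 hqb] at h4
          exact h4 (S.symm (hqa z hz))
        have e4 : ∑ y ∈ (A.filter (fun y => y ∈ S.hull W)).erase q,
            ((S.val (insert b W) y : ℤ) - 2) = ∑ y ∈ (A.filter (fun y => y ∈ S.hull W)).erase q,
            ((S.val W y : ℤ) - 2) := by
          refine Finset.sum_congr rfl fun y hy => ?_
          rw [Finset.mem_erase, Finset.mem_filter] at hy
          obtain ⟨hyq, hyA, hyW⟩ := hy
          have hyb : b ≠ y := fun h => hbW (h ▸ hyW)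
          have h5 : ¬ S.B b y q := by
            intro h5
            obtain ⟨a, ha, c, hc, hac⟩ := hyW
            have h6 := S.trans' h5 (hqa a ha)
            have h7 := S.trans' h5 (hqa c hc)
            rcases S.tri q hac with h8 | h8
            · exact hyq (S.anti h8 (S.symm h6))
            · exact hyq (S.anti (S.symm h8) (S.symm h7))
          have h6 : S.dir y b = S.dir y q := (S.dir_eq_iff hyb (Ne.symm hyq)).2 h5
          have : S.dirs (insert b W) y = S.dirs W y := by
            rw [S.dirs_insert_ne W hyb, h6]
            exact Finset.insert_eq_of_mem (S.exists_dir_of_hull hq hyq)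
          simp [val, this]
        rw [e4, e3]
        push_cast
        linarith
      have e2 : ∑ y ∈ A with y ∉ S.hull W, ((S.val (insert b W) y : ℤ) - 2) = -1 := by
        have hb' : b ∈ A.filter (fun y => y ∉ S.hull W) := by simp [hbA, hbW]
        rw [← Finset.add_sum_erase _ _ hb']
        have e3 : S.val (insert b W) b = 1 := by
          rw [← S.val_eq_one hne hbW]; simp [val, S.dirs_insert_self]
        rw [e3, Finset.sum_eq_zero]
        · norm_num
        · intro y hy
          rw [Finset.mem_erase, Finset.mem_filter] at hy
          obtain ⟨hyb, hyA, hyW⟩ := hy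
          have : S.val (insert b W) y = 2 := by
            apply le_antisymm
            · unfold val
              rw [S.dirs_insert_ne W (Ne.symm hyb)]
              refine (Finset.card_insert_le _ _).trans ?_
              have := S.val_eq_one hne hyW
              unfold val at this
              omega
            · apply S.two_le_val (h2 hyA)
              simp only [Finset.mem_insert, not_or]
              exact ⟨hyb, fun h => hyW (S.subset_hull h)⟩
          simp [this]
      rw [e1, e2]
      norm_num

end PreTree

/-! ### Part 2: the counting argument -/

open scoped Pointwise in
theorem PreTree.dir_smul {T G : Type*} (S : PreTree T) [Group G] [MulAction G T]
    (hB : ∀ (g : G) a y b, S.B a y b → S.B (g • a) (g • y) (g • b)) (g : G) (y z : T) :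
    g • S.dir y z = S.dir (g • y) (g • z) := by
  unfold PreTree.dir
  refine Prod.ext rfl ?_
  ext w
  change w ∈ g • {z' | z' ≠ y ∧ ¬ S.B z y z'} ↔ w ≠ g • y ∧ ¬ S.B (g • z) (g • y) w
  rw [Set.mem_smul_set_iff_inv_smul_mem]
  change (g⁻¹ • w ≠ y ∧ ¬ S.B z y (g⁻¹ • w)) ↔ _
  have h1 : g⁻¹ • w = y ↔ w = g • y := inv_smul_eq_iff
  have h2 : S.B z y (g⁻¹ • w) ↔ S.B (g • z) (g • y) w := by
    constructor
    · intro h; simpa using hB g _ _ _ h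
    · intro h; simpa using hB g⁻¹ _ _ _ h
  rw [Ne, h1, h2]

open scoped Pointwise in
theorem PreTree.count {T G X : Type*} (S : PreTree T) [Group G] [MulAction G T] [Fintype X]
    (hB : ∀ (g : G) a y b, S.B a y b → S.B (g • a) (g • y) (g • b)) (s : X → G)
    (pref : T × Set T → X × Bool)
    (hpref : ∀ y z, z ≠ y → ∀ x, pref (S.dir y z) = (x, true) ∨
      pref (s x • S.dir y z) = (x, false))
    (W : Finset T) (hW : W.Nonempty) (Wx : X → Finset T) (hWx : ∀ x, (Wx x).Nonempty)
    (hsub : ∀ x, Wx x ⊆ W) (himg : ∀ x, ∀ y ∈ Wx x, s x • y ∈ W) :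
    ∑ x, (Wx x).card + 1 ≤ W.card + Fintype.card X := by
  classical
  -- facts about hulls and valences under generators
  have hullsub : ∀ x, S.hull (Wx x) ⊆ S.hull W := fun x => S.hull_mono (hsub x)
  have hullimg : ∀ x, ∀ y ∈ S.hull (Wx x), s x • y ∈ S.hull W := by
    rintro x y ⟨a, ha, b, hb, h⟩
    exact ⟨_, himg x a ha, _, himg x b hb, hB _ _ _ _ h⟩
  have dirsimg : ∀ x y, ∀ d ∈ S.dirs (Wx x) y, s x • d ∈ S.dirs W (s x • y) := by
    intro x y d hd
    rw [S.mem_dirs] at hd ⊢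
    obtain ⟨z, hz, h1, rfl⟩ := hd
    exact ⟨s x • z, himg x z hz, fun h => h1 (smul_left_cancel _ h), (S.dir_smul hB _ _ _).symm⟩
  have valimg : ∀ x y, S.val (Wx x) y ≤ S.val W (s x • y) := by
    intro x y
    unfold PreTree.val
    exact Finset.card_le_card_of_injOn (fun d => s x • d) (fun d hd => dirsimg x y d hd)
      (fun d _ d' _ h => smul_left_cancel _ h)
  -- edges
  let E : Finset T → Finset (X × T) := fun A =>
    (Finset.univ ×ˢ A).filter (fun e => e.2 ∈ S.hull (Wx e.1) ∧ s e.1 • e.2 ∈ A)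
  have memE : ∀ A e, e ∈ E A ↔ e.2 ∈ A ∧ e.2 ∈ S.hull (Wx e.1) ∧ s e.1 • e.2 ∈ A := by
    intro A e; simp [E]
  let Φ : Finset T → ℤ := fun A =>
    ∑ y ∈ A, ((S.val W y : ℤ) - 2) - ∑ e ∈ E A, ((S.val (Wx e.1) e.2 : ℤ) - 2)
  let good : Finset T → Prop := fun A =>
    W ⊆ A ∧ (A : Set T) ⊆ S.hull W ∧ Φ A ≤ 2 * (Fintype.card X : ℤ) - 2
  -- Step 1 : a good set exists
  have step1 : ∃ A, good A := by
    obtain ⟨A0, hA0, hA⟩ := S.euler hW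
    choose Ax hAx hAx' using fun x => S.euler (hWx x)
    let A : Finset T := A0 ∪ W ∪ Finset.univ.biUnion (fun x => Ax x ∪ (Ax x).image (s x • ·))
    have hAhull : (A : Set T) ⊆ S.hull W := by
      intro y hy
      simp only [A, Finset.coe_union, Finset.coe_biUnion, Set.mem_union, Set.mem_iUnion,
        Finset.mem_coe, Finset.mem_univ, Finset.coe_image, Set.mem_image] at hy
      rcases hy with (h | h) | ⟨x, _, h | ⟨z, hz, rfl⟩⟩
      · exact hA0 h
      · exact S.subset_hull h
      · exact hullsub x (hAx x h)
      · exact hullimg x z (hAx x hz)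
    refine ⟨A, ?_, hAhull, ?_⟩
    · intro y hy; simp [A, hy]
    · have e1 := hA A (by intro y hy; simp [A, hy]) hAhull
      have e2 : ∑ e ∈ E A, ((S.val (Wx e.1) e.2 : ℤ) - 2) = ∑ x : X, (-2 : ℤ) := by
        have : ∑ e ∈ E A, ((S.val (Wx e.1) e.2 : ℤ) - 2) =
            ∑ x : X, ∑ y ∈ A, if (y ∈ S.hull (Wx x) ∧ s x • y ∈ A) then
              ((S.val (Wx x) y : ℤ) - 2) else 0 := by
          rw [← Finset.sum_product', Finset.sum_filter]
        rw [this]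
        refine Finset.sum_congr rfl fun x _ => ?_
        rw [← Finset.sum_filter]
        apply hAx' x
        · intro y hy
          rw [Finset.mem_filter]
          refine ⟨?_, hAx x hy, ?_⟩
          · simp only [A, Finset.mem_union, Finset.mem_biUnion]
            exact Or.inr ⟨x, Finset.mem_univ _, Or.inl hy⟩
          · simp only [A, Finset.mem_union, Finset.mem_biUnion]
            exact Or.inr ⟨x, Finset.mem_univ _, Or.inr (Finset.mem_image_of_mem _ hy)⟩
        · intro y hy
          rw [Finset.mem_coe, Finset.mem_filter] at hy
          exact hy.2.1
      have : Φ A = -2 - ∑ x : X, (-2 : ℤ) := by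
        change _ - _ = _
        rw [e1, e2]
      rw [this]
      simp
      linarith
  -- Step 2 : a minimal good set
  obtain ⟨A, ⟨hWA, hAh, hΦ⟩, hmin⟩ : ∃ A, good A ∧ ∀ y ∈ A, y ∉ W → ¬ good (A.erase y) := by
    have hex : ∃ m, ∃ A, good A ∧ A.card = m := by
      obtain ⟨A, hA⟩ := step1
      exact ⟨_, A, hA, rfl⟩
    obtain ⟨A, hA, hc⟩ := Nat.find_spec hex
    refine ⟨A, hA, fun y hy _ hg => ?_⟩
    have h1 := Nat.find_min' hex ⟨_, hg, rfl⟩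
    have h2 := Finset.card_erase_lt_of_mem hy
    omega
  -- Step 3 : every vertex outside `W` has degree at least two
  have step3 : ∀ y ∈ A, y ∉ W → 2 ≤ ((E A).filter (fun e => e.2 = y)).card +
      ((E A).filter (fun e => s e.1 • e.2 = y)).card := by
    intro y hy hyW
    by_contra hlt
    apply hmin y hy hyW
    refine ⟨?_, ?_, le_trans ?_ hΦ⟩
    · intro z hz
      rw [Finset.mem_erase]
      exact ⟨fun h => hyW (h ▸ hz), hWA hz⟩
    · intro z hz
      exact hAh (Finset.mem_of_mem_erase hz)
    · have hsplit : E (A.erase y) = (E A).filter (fun e => ¬ (e.2 = y ∨ s e.1 • e.2 = y)) := by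
        ext e
        rw [memE, Finset.mem_filter, memE]
        simp only [Finset.mem_erase]
        tauto
      have hsum := Finset.sum_filter_add_sum_filter_not (E A)
        (fun e => (e.2 = y ∨ s e.1 • e.2 = y)) (fun e => ((S.val (Wx e.1) e.2 : ℤ) - 2))
      rw [← hsplit] at hsum
      have hsum2 := Finset.add_sum_erase A (fun y => ((S.val W y : ℤ) - 2)) hy
      have hval : 2 ≤ S.val W y := S.two_le_val (hAh hy) hyW
      have hinc : ((E A).filter (fun e => (e.2 = y ∨ s e.1 • e.2 = y))).card ≤ 1 := by
        rw [Finset.filter_or]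
        refine (Finset.card_union_le _ _).trans ?_
        omega
      have hincsum : ∑ e ∈ (E A).filter (fun e => (e.2 = y ∨ s e.1 • e.2 = y)),
          ((S.val (Wx e.1) e.2 : ℤ) - 2) ≤ (S.val W y : ℤ) - 2 := by
        rcases Nat.le_one_iff_eq_zero_or_eq_one.1 hinc with h | h
        · rw [Finset.card_eq_zero.1 h]
          simp
          exact_mod_cast hval
        · obtain ⟨e, he⟩ := Finset.card_eq_one.1 h
          have hmem : e ∈ (E A).filter (fun e => (e.2 = y ∨ s e.1 • e.2 = y)) := by simp [he]
          rw [he, Finset.sum_singleton]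
          rw [Finset.mem_filter] at hmem
          have : S.val (Wx e.1) e.2 ≤ S.val W y := by
            rcases hmem.2 with h | h
            · rw [← h]; exact S.val_mono (hsub _) _
            · rw [← h]; exact valimg _ _
          have : (S.val (Wx e.1) e.2 : ℤ) ≤ S.val W y := by exact_mod_cast this
          linarith
      change ∑ y ∈ A.erase y, ((S.val W y : ℤ) - 2) -
        ∑ e ∈ E (A.erase y), ((S.val (Wx e.1) e.2 : ℤ) - 2) ≤
        ∑ y ∈ A, ((S.val W y : ℤ) - 2) - ∑ e ∈ E A, ((S.val (Wx e.1) e.2 : ℤ) - 2)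
      linarith
  -- Step 4 : directions
  have step4 : ∑ e ∈ E A, S.val (Wx e.1) e.2 ≤ ∑ y ∈ A, S.val W y := by
    unfold PreTree.val
    rw [← Finset.card_sigma, ← Finset.card_sigma]
    have hfst : ∀ (U : Finset T) y d, d ∈ S.dirs U y → d.1 = y := by
      intro U y d hd
      rw [S.mem_dirs] at hd
      obtain ⟨z, _, _, rfl⟩ := hd
      rfl
    have hpf : ∀ (U : Finset T) y d, d ∈ S.dirs U y → ∀ x, pref d = (x, true) ∨
        pref (s x • d) = (x, false) := by
      intro U y d hd x
      rw [S.mem_dirs] at hd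
      obtain ⟨z, _, h1, rfl⟩ := hd
      exact hpref y z h1 x
    refine Finset.card_le_card_of_injOn (fun p : (Σ _ : X × T, T × Set T) =>
      if pref p.2 = (p.1.1, true) then (⟨p.1.2, p.2⟩ : (Σ _ : T, T × Set T)) else
        ⟨s p.1.1 • p.1.2, s p.1.1 • p.2⟩) ?_ ?_
    · rintro ⟨⟨x, y⟩, d⟩ hp
      simp only [Finset.coe_sigma, Set.mem_sigma_iff, Finset.mem_coe] at hp
      obtain ⟨h1, h2⟩ := hp
      rw [memE] at h1
      dsimp only at h1 h2 ⊢
      split_ifs with h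
      · simp only [Finset.coe_sigma, Set.mem_sigma_iff, Finset.mem_coe]
        exact ⟨h1.1, S.dirs_mono (hsub x) _ h2⟩
      · simp only [Finset.coe_sigma, Set.mem_sigma_iff, Finset.mem_coe]
        exact ⟨h1.2.2, dirsimg x y d h2⟩
    · rintro ⟨⟨x, y⟩, d⟩ hp ⟨⟨x', y'⟩, d'⟩ hp' heq
      simp only [Finset.coe_sigma, Set.mem_sigma_iff, Finset.mem_coe] at hp hp'
      have f1 := hfst _ _ _ hp.2
      have f2 := hfst _ _ _ hp'.2
      have g1 := hpf _ _ _ hp.2 x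
      have g2 := hpf _ _ _ hp'.2 x'
      dsimp only at f1 f2 heq
      subst f1 f2
      split_ifs at heq with h h' h'
      · simp only [Sigma.mk.injEq, heq_eq_eq] at heq
        obtain ⟨_, rfl⟩ := heq
        rw [h] at h'
        simp only [Prod.mk.injEq, and_true] at h'
        rw [h']
      · simp only [Sigma.mk.injEq, heq_eq_eq] at heq
        obtain ⟨_, h3⟩ := heq
        have h4 := g2.resolve_left h'
        rw [← h3, h] at h4
        simp at h4
      · simp only [Sigma.mk.injEq, heq_eq_eq] at heq
        obtain ⟨_, h3⟩ := heq
        have h4 := g1.resolve_left h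
        rw [h3, h'] at h4
        simp at h4
      · simp only [Sigma.mk.injEq, heq_eq_eq] at heq
        obtain ⟨_, h3⟩ := heq
        have h4 := g1.resolve_left h
        have h5 := g2.resolve_left h'
        rw [h3, h5] at h4
        simp only [Prod.mk.injEq, and_true] at h4
        subst h4
        rw [smul_left_cancel _ h3]
  -- Step 5 : conclusion
  have step5 : ((E A).card : ℤ) - A.card ≤ (Fintype.card X : ℤ) - 1 := by
    have e1 : ∑ y ∈ A, ((S.val W y : ℤ) - 2) = ((∑ y ∈ A, S.val W y : ℕ) : ℤ) - 2 * A.card := by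
      push_cast
      rw [Finset.sum_sub_distrib]
      simp [mul_comm]
    have e2 : ∑ e ∈ E A, ((S.val (Wx e.1) e.2 : ℤ) - 2) =
        ((∑ e ∈ E A, S.val (Wx e.1) e.2 : ℕ) : ℤ) - 2 * (E A).card := by
      push_cast
      rw [Finset.sum_sub_distrib]
      simp [mul_comm]
    have e3 : ((∑ e ∈ E A, S.val (Wx e.1) e.2 : ℕ) : ℤ) ≤ ((∑ y ∈ A, S.val W y : ℕ) : ℤ) := by
      exact_mod_cast step4
    change ∑ y ∈ A, ((S.val W y : ℤ) - 2) - ∑ e ∈ E A, ((S.val (Wx e.1) e.2 : ℤ) - 2) ≤ _ at hΦ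
    rw [e1, e2] at hΦ
    linarith
  have c1 : ∑ x, (Wx x).card ≤ ((E A).filter (fun e => e.2 ∈ W ∧ s e.1 • e.2 ∈ W)).card := by
    rw [← Finset.card_sigma]
    refine Finset.card_le_card_of_injOn (fun p => (p.1, p.2)) ?_ ?_
    · rintro ⟨x, y⟩ hp
      simp only [Finset.coe_sigma, Set.mem_sigma_iff, Finset.mem_coe] at hp
      rw [Finset.mem_coe, Finset.mem_filter, memE]
      have := hp.2
      exact ⟨⟨hWA (hsub x this), S.subset_hull this, hWA (himg x y this)⟩, hsub x this,
        himg x y this⟩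
    · rintro ⟨x, y⟩ _ ⟨x', y'⟩ _ h
      simp only [Prod.mk.injEq] at h
      obtain ⟨rfl, rfl⟩ := h
      rfl
  have c2 : (A \ W).card ≤ ((E A).filter (fun e => ¬ (e.2 ∈ W ∧ s e.1 • e.2 ∈ W))).card := by
    have h1 : ∑ y ∈ A \ W, ((E A).filter (fun e => e.2 = y)).card =
        ((E A).filter (fun e => e.2 ∉ W)).card := by
      rw [Finset.card_eq_sum_card_fiberwise (f := fun e => e.2) (t := A \ W)]
      · refine Finset.sum_congr rfl fun y hy => ?_
        rw [Finset.mem_sdiff] at hy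
        congr 1
        ext e
        simp only [Finset.mem_filter]
        constructor
        · rintro ⟨h, rfl⟩; exact ⟨⟨h, hy.2⟩, rfl⟩
        · rintro ⟨⟨h, _⟩, h'⟩; exact ⟨h, h'⟩
      · intro e he
        rw [Finset.mem_coe, Finset.mem_filter, memE] at he
        simp [he.1.1, he.2]
    have h2 : ∑ y ∈ A \ W, ((E A).filter (fun e => s e.1 • e.2 = y)).card =
        ((E A).filter (fun e => s e.1 • e.2 ∉ W)).card := by
      rw [Finset.card_eq_sum_card_fiberwise (f := fun e => s e.1 • e.2) (t := A \ W)]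
      · refine Finset.sum_congr rfl fun y hy => ?_
        rw [Finset.mem_sdiff] at hy
        congr 1
        ext e
        simp only [Finset.mem_filter]
        constructor
        · rintro ⟨h, rfl⟩; exact ⟨⟨h, hy.2⟩, rfl⟩
        · rintro ⟨⟨h, _⟩, h'⟩; exact ⟨h, h'⟩
      · intro e he
        rw [Finset.mem_coe, Finset.mem_filter, memE] at he
        simp [he.1.2.2, he.2]
    have h3 : ∑ y ∈ A \ W, 2 ≤ ∑ y ∈ A \ W, (((E A).filter (fun e => e.2 = y)).card +
        ((E A).filter (fun e => s e.1 • e.2 = y)).card) := by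
      refine Finset.sum_le_sum fun y hy => ?_
      rw [Finset.mem_sdiff] at hy
      exact step3 y hy.1 hy.2
    rw [Finset.sum_add_distrib, h1, h2, Finset.sum_const, smul_eq_mul] at h3
    have h4 : ((E A).filter (fun e => e.2 ∉ W)).card ≤
        ((E A).filter (fun e => ¬ (e.2 ∈ W ∧ s e.1 • e.2 ∈ W))).card := by
      apply Finset.card_le_card
      intro e
      simp only [Finset.mem_filter]
      tauto
    have h5 : ((E A).filter (fun e => s e.1 • e.2 ∉ W)).card ≤
        ((E A).filter (fun e => ¬ (e.2 ∈ W ∧ s e.1 • e.2 ∈ W))).card := by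
      apply Finset.card_le_card
      intro e
      simp only [Finset.mem_filter]
      tauto
    omega
  have c3 := Finset.card_filter_add_card_filter_not (s := E A) (fun e => e.2 ∈ W ∧ s e.1 • e.2 ∈ W)
  have c4 := Finset.card_sdiff_add_card_eq_card hWA
  have c5 : ((E A).card : ℤ) + 1 ≤ A.card + Fintype.card X := by linarith
  have c6 : (E A).card + 1 ≤ A.card + Fintype.card X := by exact_mod_cast c5
  omega

/-! ### Part 3: rank of a stabilizer -/

theorem FreeGroup.finite_ball {X : Type*} [DecidableEq X] [Finite X] (R : ℕ) :
    {g : FreeGroup X | g.norm ≤ R}.Finite := by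
  classical
  have h := List.finite_length_le (X × Bool) R
  exact Set.Finite.of_finite_image (h.subset (by
    rintro _ ⟨g, hg, rfl⟩
    exact hg)) (f := FreeGroup.toWord) FreeGroup.toWord_injective.injOn

theorem exists_wf_rec {T F : Type*} [Group F] (l : T → ℕ) (p : T → T) (L : T → F) (P : T → Prop)
    [DecidablePred P] (h : ∀ v, P v → l (p v) < l v) :
    ∃ t : T → F, ∀ v, t v = if P v then L v * t (p v) else 1 := by
  have wf : WellFounded (fun a b : T => l a < l b) := (measure l).wf
  let t : T → F := wf.fix (fun v ih => if hv : P v then L v * ih (p v) (h v hv) else 1)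
  refine ⟨t, fun v => ?_⟩
  change wf.fix _ v = _
  rw [wf.fix_eq]
  split_ifs <;> rfl

theorem stabilizer_rank {X T : Type*} [Fintype X] [Nonempty X] [MulAction (FreeGroup X) T] (o : T)
    (hcount : ∀ W : Finset T, W.Nonempty → ∀ Wx : X → Finset T, (∀ x, (Wx x).Nonempty) →
      (∀ x, Wx x ⊆ W) → (∀ x, ∀ y ∈ Wx x, FreeGroup.of x • y ∈ W) →
      ∑ x, (Wx x).card + 1 ≤ W.card + Fintype.card X) :
    ∃ S : Finset (FreeGroup X), Subgroup.closure (S : Set (FreeGroup X)) =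
      MulAction.stabilizer (FreeGroup X) o ∧ S.card ≤ Fintype.card X := by
  classical
  let O : Set T := MulAction.orbit (FreeGroup X) o
  have hOo : o ∈ O := MulAction.mem_orbit_self o
  have hOs : ∀ (g : FreeGroup X) v, v ∈ O → g • v ∈ O := by
    intro g v hv
    exact MulAction.mem_orbit_of_mem_orbit g hv
  let l : T → ℕ := fun v => sInf {n | ∃ g : FreeGroup X, g.norm = n ∧ g • o = v}
  have hl : ∀ g : FreeGroup X, l (g • o) ≤ g.norm := fun g => Nat.sInf_le ⟨g, rfl, rfl⟩
  have hl' : ∀ v ∈ O, ∃ g : FreeGroup X, g.norm = l v ∧ g • o = v := by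
    rintro v ⟨g, hg⟩
    exact Nat.sInf_mem (s := {n | ∃ g : FreeGroup X, g.norm = n ∧ g • o = v}) ⟨_, g, rfl, hg⟩
  have hpar : ∀ v, ∃ a : X × Bool, v ∈ O → v ≠ o →
      ((FreeGroup.mk [a])⁻¹ • v ∈ O ∧ l ((FreeGroup.mk [a])⁻¹ • v) < l v) := by
    intro v
    by_cases hv : v ∈ O ∧ v ≠ o
    · obtain ⟨g, hg, hgv⟩ := hl' v hv.1
      rcases hw : g.toWord with _ | ⟨a, w⟩
      · rw [FreeGroup.toWord_eq_nil_iff] at hw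
        rw [hw, one_smul] at hgv
        exact absurd hgv.symm hv.2
      · refine ⟨a, fun _ _ => ⟨hOs _ _ hv.1, ?_⟩⟩
        have h1 : g = FreeGroup.mk [a] * FreeGroup.mk w := by
          rw [FreeGroup.mul_mk, List.singleton_append, ← hw, FreeGroup.mk_toWord]
        have h2 : (FreeGroup.mk [a])⁻¹ • v = FreeGroup.mk w • o := by
          rw [← hgv, h1, mul_smul, inv_smul_smul]
        rw [h2]
        refine (hl _).trans_lt (FreeGroup.norm_mk_le.trans_lt ?_)
        rw [← hg, FreeGroup.norm, hw]
        simp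
    · obtain ⟨x⟩ := ‹Nonempty X›
      exact ⟨(x, true), fun h1 h2 => absurd ⟨h1, h2⟩ hv⟩
  choose a ha using hpar
  let p : T → T := fun v => (FreeGroup.mk [a v])⁻¹ • v
  obtain ⟨t, ht⟩ := exists_wf_rec l p (fun v => FreeGroup.mk [a v]) (fun v => v ∈ O ∧ v ≠ o)
    (fun v hv => (ha v hv.1 hv.2).2)
  have hto : t o = 1 := by rw [ht]; simp
  have htv : ∀ v ∈ O, v ≠ o → t v = FreeGroup.mk [a v] * t (p v) := by
    intro v h1 h2; rw [ht]; simp [h1, h2]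
  have htact : ∀ n, ∀ v ∈ O, l v = n → t v • o = v := by
    intro n
    induction n using Nat.strong_induction_on with
    | _ n ih =>
      intro v hv hn
      by_cases hvo : v = o
      · rw [hvo, hto, one_smul]
      · rw [htv v hv hvo, mul_smul, ih _ (hn ▸ (ha v hv hvo).2) (p v) (ha v hv hvo).1 rfl]
        exact smul_inv_smul _ _
  let NT : Set (Σ _ : X, T) := {e | e.2 ∈ O ∧ t (FreeGroup.of e.1 • e.2) ≠ FreeGroup.of e.1 * t e.2}
  -- the parent edge
  let ed : T → (Σ _ : X, T) := fun v => if (a v).2 = true then ⟨(a v).1, p v⟩ else ⟨(a v).1, v⟩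
  have hed : ∀ v, (a v).2 = true ∧ FreeGroup.mk [a v] = FreeGroup.of (a v).1 ∧
        ed v = ⟨(a v).1, p v⟩ ∧ FreeGroup.of (a v).1 • p v = v ∨
      (a v).2 = false ∧ (FreeGroup.mk [a v])⁻¹ = FreeGroup.of (a v).1 ∧
        ed v = ⟨(a v).1, v⟩ ∧ FreeGroup.of (a v).1 • v = p v := by
    intro v
    rcases h : a v with ⟨x, b⟩
    cases b
    · right
      have : (FreeGroup.mk [(x, false)])⁻¹ = FreeGroup.of x := by
        rw [FreeGroup.inv_mk]; rfl
      refine ⟨rfl, this, by simp [ed, h], ?_⟩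
      simp only [p, h]
      rw [this]
    · left
      have : (FreeGroup.mk [(x, true)]) = FreeGroup.of x := rfl
      refine ⟨rfl, this, by simp [ed, h], ?_⟩
      simp only [p, h]
      rw [this, smul_inv_smul]
  have hbound : ∀ N : Finset (Σ _ : X, T), (N : Set _) ⊆ NT → N.card ≤ Fintype.card X := by
    intro N hN
    obtain ⟨R, hR1, hR⟩ : ∃ R, 1 ≤ R ∧ ∀ e ∈ N, l e.2 ≤ R ∧ l (FreeGroup.of e.1 • e.2) ≤ R := by
      refine ⟨1 + ∑ e ∈ N, (l e.2 + l (FreeGroup.of e.1 • e.2)), by omega, fun e he => ?_⟩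
      have := Finset.single_le_sum (f := fun e : (Σ _ : X, T) => l e.2 + l (FreeGroup.of e.1 • e.2))
        (fun _ _ => Nat.zero_le _) he
      omega
    have hfin : {v | v ∈ O ∧ l v ≤ R}.Finite := by
      refine ((FreeGroup.finite_ball (X := X) R).image (fun g => g • o)).subset ?_
      rintro v ⟨hv, hlv⟩
      obtain ⟨g, h1, h2⟩ := hl' v hv
      exact ⟨g, by rw [Set.mem_setOf_eq]; omega, h2⟩
    let W : Finset T := hfin.toFinset
    have memW : ∀ v, v ∈ W ↔ v ∈ O ∧ l v ≤ R := by
      intro v; rw [Set.Finite.mem_toFinset]; rfl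
    let Wx : X → Finset T := fun x => W.filter (fun v => FreeGroup.of x • v ∈ W)
    have hoW : o ∈ W := (memW o).2 ⟨hOo, by
      have := hl 1
      simp at this
      omega⟩
    have key := hcount W ⟨o, hoW⟩ Wx (by
      intro x
      refine ⟨o, Finset.mem_filter.2 ⟨hoW, (memW _).2 ⟨hOs _ _ hOo, ?_⟩⟩⟩
      have := hl (FreeGroup.of x)
      rw [FreeGroup.norm_of] at this
      omega) (fun x => Finset.filter_subset _ _) (fun x y hy => (Finset.mem_filter.1 hy).2)
    rw [← Finset.card_sigma] at key
    have hpW : ∀ v ∈ W, v ≠ o → p v ∈ W := by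
      intro v hv hvo
      rw [memW] at hv ⊢
      have := ha v hv.1 hvo
      exact ⟨this.1, this.2.le.trans hv.2⟩
    have hsub : N ∪ (W.erase o).image ed ⊆ Finset.univ.sigma Wx := by
      intro e he
      rw [Finset.mem_union, Finset.mem_image] at he
      rw [Finset.mem_sigma]
      refine ⟨Finset.mem_univ _, Finset.mem_filter.2 ?_⟩
      rcases he with he | ⟨v, hv, rfl⟩
      · rw [memW, memW]
        have := (hN he).1
        exact ⟨⟨this, (hR e he).1⟩, hOs _ _ this, (hR e he).2⟩
      · rw [Finset.mem_erase] at hv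
        have h1 := hpW v hv.2 hv.1
        rcases hed v with ⟨_, _, h2, h3⟩ | ⟨_, _, h2, h3⟩
        · rw [h2]; dsimp only; rw [h3]; exact ⟨h1, hv.2⟩
        · rw [h2]; dsimp only; rw [h3]; exact ⟨hv.2, h1⟩
    have hdisj : Disjoint N ((W.erase o).image ed) := by
      rw [Finset.disjoint_left]
      intro e he he'
      rw [Finset.mem_image] at he'
      obtain ⟨v, hv, rfl⟩ := he'
      have := (hN he).2
      rw [Finset.mem_erase, memW] at hv
      have h5 := htv v hv.2.1 hv.1
      rcases hed v with ⟨_, h1, h2, h3⟩ | ⟨_, h1, h2, h3⟩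
      · rw [h2] at this; dsimp only at this; rw [h3] at this
        rw [h1] at h5
        exact this h5
      · rw [h2] at this; dsimp only at this; rw [h3] at this
        apply this
        rw [← h1, h5, inv_mul_cancel_left]
    have hinj : Set.InjOn ed (W.erase o : Finset T) := by
      intro v hv w hw hvw
      rw [Finset.mem_coe, Finset.mem_erase, memW] at hv hw
      have hv' := (ha v hv.2.1 hv.1).2
      have hw' := (ha w hw.2.1 hw.1).2
      change l (p v) < l v at hv'
      change l (p w) < l w at hw'
      rcases hed v with ⟨_, _, h2, h3⟩ | ⟨_, _, h2, h3⟩ <;>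
      rcases hed w with ⟨_, _, h2', h3'⟩ | ⟨_, _, h2', h3'⟩ <;>
      rw [h2, h2'] at hvw <;> simp only [Sigma.mk.injEq, heq_eq_eq] at hvw <;>
      obtain ⟨e1, e2⟩ := hvw
      · rw [← h3, ← h3', e1, e2]
      · rw [e1, e2, h3'] at h3
        rw [e2] at hv'
        rw [h3] at hw'
        omega
      · rw [← e1, ← e2, h3] at h3'
        rw [← e2] at hw'
        rw [h3'] at hv'
        omega
      · exact e2
    have hc := Finset.card_le_card hsub
    rw [Finset.card_union_of_disjoint hdisj, Finset.card_image_of_injOn hinj,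
      Finset.card_erase_of_mem hoW] at hc
    have : 0 < W.card := Finset.card_pos.2 ⟨o, hoW⟩
    omega
  have hNTfin : NT.Finite := by
    by_contra hinf
    obtain ⟨N, hN, hc⟩ := (Set.not_finite.1 hinf : NT.Infinite).exists_subset_card_eq
      (Fintype.card X + 1)
    have := hbound N hN
    omega
  let gen : (Σ _ : X, T) → FreeGroup X := fun e =>
    (t (FreeGroup.of e.1 • e.2))⁻¹ * (FreeGroup.of e.1 * t e.2)
  refine ⟨hNTfin.toFinset.image gen, ?_, Finset.card_image_le.trans (hbound _ (by simp))⟩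
  set Q := Subgroup.closure ((hNTfin.toFinset.image gen : Finset _) : Set (FreeGroup X)) with hQ
  apply le_antisymm
  · rw [hQ, Subgroup.closure_le]
    intro g hg
    simp only [Finset.coe_image, Set.Finite.coe_toFinset, Set.mem_image] at hg
    obtain ⟨e, he, rfl⟩ := hg
    rw [SetLike.mem_coe, MulAction.mem_stabilizer_iff]
    simp only [gen]
    rw [mul_smul, mul_smul, htact _ e.2 he.1 rfl, inv_smul_eq_iff,
      htact _ _ (hOs _ _ he.1) rfl]
  · have main : ∀ g : FreeGroup X, ∀ v ∈ O, (t (g • v))⁻¹ * (g * t v) ∈ Q := by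
      have hof : ∀ x, ∀ v ∈ O, (t (FreeGroup.of x • v))⁻¹ * (FreeGroup.of x * t v) ∈ Q := by
        intro x v hv
        by_cases h : (⟨x, v⟩ : Σ _ : X, T) ∈ NT
        · apply Subgroup.subset_closure
          simp only [Finset.coe_image, Set.Finite.coe_toFinset, Set.mem_image]
          exact ⟨_, h, rfl⟩
        · have : t (FreeGroup.of x • v) = FreeGroup.of x * t v := by
            by_contra h'
            exact h ⟨hv, h'⟩
          rw [this, inv_mul_cancel]
          exact Q.one_mem
      intro g
      induction g using FreeGroup.induction_on with
      | C1 => intro v _; simp [Q.one_mem]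
      | of x => exact hof x
      | inv_of x _ =>
        intro v hv
        have := Q.inv_mem (hof x ((FreeGroup.of x)⁻¹ • v) (hOs _ _ hv))
        rw [smul_inv_smul] at this
        convert this using 1
        group
      | mul g h ihg ihh =>
        intro v hv
        have := Q.mul_mem (ihg (h • v) (hOs _ _ hv)) (ihh v hv)
        convert this using 1
        rw [mul_smul]
        group
    intro g hg
    rw [MulAction.mem_stabilizer_iff] at hg
    have := main g o hOo
    rwa [hg, hto, inv_one, one_mul, mul_one] at this

/-! ### Part 4: common prefixes and the preference function -/

theorem List.exists_common_start {α : Type*} (L₁ L₂ : List α) :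
    ∃ p a b, L₁ = p ++ a ∧ L₂ = p ++ b ∧ ∀ x ∈ a.head?, x ∉ b.head? := by
  classical
  induction L₁ generalizing L₂ with
  | nil => exact ⟨[], [], L₂, rfl, rfl, by simp⟩
  | cons x L ih =>
    rcases L₂ with _ | ⟨y, L'⟩
    · exact ⟨[], x :: L, [], rfl, rfl, by simp⟩
    · by_cases h : x = y
      · subst h
        obtain ⟨p, a, b, rfl, rfl, h3⟩ := ih L'
        exact ⟨x :: p, a, b, rfl, rfl, h3⟩
      · exact ⟨[], x :: L, y :: L', rfl, rfl, by simpa using fun h' => h h'.symm⟩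

theorem FreeGroup.exists_start {X : Type*} [DecidableEq X] (g h : FreeGroup X) :
    ∃ p a b, g.toWord = p ++ a ∧ h.toWord = p ++ b ∧ (∀ x ∈ a.head?, x ∉ b.head?) ∧
      (g⁻¹ * h).toWord = FreeGroup.invRev a ++ b := by
  obtain ⟨p, a, b, h1, h2, h3⟩ := List.exists_common_start g.toWord h.toWord
  refine ⟨p, a, b, h1, h2, h3, ?_⟩
  have hg : g = FreeGroup.mk p * FreeGroup.mk a := by
    rw [FreeGroup.mul_mk, ← h1, FreeGroup.mk_toWord]
  have hh : h = FreeGroup.mk p * FreeGroup.mk b := by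
    rw [FreeGroup.mul_mk, ← h2, FreeGroup.mk_toWord]
  have e : g⁻¹ * h = FreeGroup.mk (FreeGroup.invRev a ++ b) := by
    rw [← FreeGroup.mul_mk, ← FreeGroup.inv_mk, hg, hh]
    group
  have ra : FreeGroup.IsReduced a :=
    List.IsChain.right_of_append (l₁ := p) (h1 ▸ FreeGroup.isReduced_toWord (x := g))
  have rb : FreeGroup.IsReduced b :=
    List.IsChain.right_of_append (l₁ := p) (h2 ▸ FreeGroup.isReduced_toWord (x := h))
  have ra' : FreeGroup.IsReduced (FreeGroup.invRev a) :=
    List.IsChain.left_of_append (l₂ := FreeGroup.invRev p) (by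
      have h := FreeGroup.isReduced_toWord (x := g⁻¹)
      rw [FreeGroup.toWord_inv, h1, FreeGroup.invRev_append] at h
      exact h)
  have : FreeGroup.IsReduced (FreeGroup.invRev a ++ b) := by
    unfold FreeGroup.IsReduced at ra' rb ⊢
    rw [List.isChain_append]
    refine ⟨ra', rb, ?_⟩
    rintro ⟨x, e⟩ hx ⟨y, e'⟩ hy
    have : (x, !e) ∈ a.head? := by
      simp only [FreeGroup.invRev, List.getLast?_reverse, List.head?_map, Option.mem_def,
        Option.map_eq_some_iff] at hx ⊢
      obtain ⟨⟨x', e2'⟩, h5, h6⟩ := hx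
      simp only [Prod.mk.injEq] at h6
      obtain ⟨rfl, rfl⟩ := h6
      simpa using h5
    have h4 := h3 _ this
    dsimp only
    rintro rfl
    by_contra hne
    apply h4
    have : (!e) = e' := by cases e <;> cases e' <;> simp_all
    rwa [this]
  rw [e, FreeGroup.toWord_mk, this.reduce_eq]

theorem FreeGroup.head_mul {X : Type*} [DecidableEq X] (h s : FreeGroup X)
    (hs : s.norm < h.norm) : (h * s).toWord.head? = h.toWord.head? := by
  obtain ⟨p, a, b, h1, h2, _, h4⟩ := FreeGroup.exists_start h⁻¹ s
  rw [inv_inv] at h4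
  have h5 : h.toWord = FreeGroup.invRev a ++ FreeGroup.invRev p := by
    rw [← inv_inv h, FreeGroup.toWord_inv, h1, FreeGroup.invRev_append]
  have ha : FreeGroup.invRev a ≠ [] := by
    intro ha
    unfold FreeGroup.norm at hs
    rw [h5, h2, ha] at hs
    simp at hs
  rw [h4, h5, List.head?_append_of_ne_nil _ ha, List.head?_append_of_ne_nil _ ha]

theorem FreeGroup.head_of_mul {X : Type*} [DecidableEq X] (h : FreeGroup X) (x : X) :
    h.toWord.head? = some (x, false) ∨ (FreeGroup.of x * h).toWord.head? = some (x, true) := by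
  obtain ⟨p, a, b, h1, h2, _, h4⟩ := FreeGroup.exists_start (FreeGroup.of x)⁻¹ h
  rw [inv_inv] at h4
  rw [FreeGroup.toWord_inv, FreeGroup.toWord_of] at h1
  simp only [FreeGroup.invRev, List.map_cons, List.map_nil, List.reverse_singleton,
    Bool.not_true] at h1
  rcases p with _ | ⟨q, p⟩
  · right
    rw [h4]
    rw [List.nil_append] at h1
    rw [← h1]
    simp [FreeGroup.invRev]
  · left
    rw [h2]
    simp only [List.cons_append, List.cons.injEq] at h1
    rw [← h1.1]
    simp

theorem exists_pref {X D : Type*} [Finite X] [Nonempty X] [MulAction (FreeGroup X) D] :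
    ∃ pref : D → X × Bool, ∀ δ : D,
      (∀ g h : FreeGroup X, g • δ = δ → h • δ = δ → g * h = h * g) →
      ∀ x, pref δ = (x, true) ∨ pref (FreeGroup.of x • δ) = (x, false) := by
  classical
  let ω : Ultrafilter ℕ := Filter.hyperfilter ℕ
  -- representatives
  obtain ⟨rep, γ, hγ, hrep⟩ : ∃ (rep : D → D) (γ : D → FreeGroup X), (∀ δ, γ δ • rep δ = δ) ∧
      ∀ (g : FreeGroup X) δ, rep (g • δ) = rep δ := by
    let rep : D → D := fun δ => (Quotient.mk (MulAction.orbitRel (FreeGroup X) D) δ).out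
    have h1 : ∀ δ, ∃ g : FreeGroup X, g • rep δ = δ := by
      intro δ
      have : (MulAction.orbitRel (FreeGroup X) D) (rep δ) δ :=
        Quotient.mk_out (s := MulAction.orbitRel (FreeGroup X) D) δ
      have := (MulAction.orbitRel (FreeGroup X) D).symm this
      exact MulAction.orbitRel_apply.1 this
    choose γ hγ using h1
    refine ⟨rep, γ, hγ, fun g δ => ?_⟩
    have : Quotient.mk (MulAction.orbitRel (FreeGroup X) D) (g • δ) =
        Quotient.mk (MulAction.orbitRel (FreeGroup X) D) δ := by
      apply Quotient.sound
      change (MulAction.orbitRel (FreeGroup X) D) (g • δ) δ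
      rw [MulAction.orbitRel_apply]
      exact ⟨g, rfl⟩
    simp only [rep, this]
  have hc : ∀ δ : D, ∃ c : FreeGroup X, c ≠ 1 ∧
      ((∀ g h : FreeGroup X, g • δ = δ → h • δ = δ → g * h = h * g) →
        ∀ g : FreeGroup X, g • δ = δ → g * c = c * g) := by
    intro δ
    by_cases h : ∃ c : FreeGroup X, c • δ = δ ∧ c ≠ 1
    · obtain ⟨c, h1, h2⟩ := h
      exact ⟨c, h2, fun h g hg => h g c hg h1⟩
    · obtain ⟨x⟩ := ‹Nonempty X›
      refine ⟨FreeGroup.of x, FreeGroup.of_ne_one x, fun _ g hg => ?_⟩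
      have : g = 1 := by
        by_contra h'
        exact h ⟨g, hg, h'⟩
      rw [this]; simp
  choose c hc1 hc2 using hc
  let ev : D → FreeGroup X → X × Bool → Prop := fun δ g a =>
    ∀ᶠ K in (ω : Filter ℕ), (g * c (rep δ) ^ K).toWord.head? = some a
  let pref : D → X × Bool := fun δ => if h : ∃ a, ev δ (γ δ) a then
    ((Classical.choose h).1, !(Classical.choose h).2) else (Classical.arbitrary X, true)
  have hpref : ∀ δ a, ev δ (γ δ) a → pref δ = (a.1, !a.2) := by
    intro δ a ha
    have h : ∃ a, ev δ (γ δ) a := ⟨a, ha⟩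
    have h1 := Classical.choose_spec h
    have h2 : Classical.choose h = a := by
      obtain ⟨K, e1, e2⟩ := (h1.and ha).exists
      rw [e1] at e2
      exact Option.some.inj e2
    simp only [pref, dif_pos h, h2]
  -- invariance
  have hbig : ∀ δ g n, ∀ᶠ K in (ω : Filter ℕ), n < (g * c (rep δ) ^ K).norm := by
    intro δ g n
    have hfin := FreeGroup.finite_ball (X := X) n
    have hinj : Function.Injective (fun K : ℕ => g * c (rep δ) ^ K) := by
      intro K K' h
      exact injective_pow_iff_not_isOfFinOrder.2 (not_isOfFinOrder_of_isMulTorsionFree (hc1 _))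
        (mul_left_cancel h)
    have := (hfin.preimage (hinj.injOn (s := _))).compl_mem_hyperfilter
    filter_upwards [this] with K hK
    simpa using hK
  have hinv : ∀ δ, (∀ g h : FreeGroup X, g • δ = δ → h • δ = δ → g * h = h * g) →
      ∀ g, g • rep δ = δ → ∀ a, ev δ g a → ev δ (γ δ) a := by
    intro δ hδ g hg a ha
    let s := g⁻¹ * γ δ
    have hs : s • rep δ = rep δ := by
      simp only [s]
      rw [mul_smul, hγ, inv_smul_eq_iff, hg]
    have hcomm : s * c (rep δ) = c (rep δ) * s := by
      apply hc2 _ _ _ hs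
      intro u v hu hv
      have key : ∀ u : FreeGroup X, u • rep δ = rep δ → (g * u * g⁻¹) • δ = δ := by
        intro u hu
        have : g⁻¹ • δ = rep δ := by rw [inv_smul_eq_iff, hg]
        rw [mul_smul, mul_smul, this, hu, hg]
      have := hδ _ _ (key u hu) (key v hv)
      have e : g * (u * v) * g⁻¹ = g * (v * u) * g⁻¹ := by
        calc g * (u * v) * g⁻¹ = g * u * g⁻¹ * (g * v * g⁻¹) := by group
          _ = _ := this
          _ = _ := by group
      exact mul_left_cancel (mul_right_cancel e)
    filter_upwards [ha, hbig δ g s.norm] with K h1 h2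
    have e : γ δ * c (rep δ) ^ K = g * c (rep δ) ^ K * s := by
      have h3 : s * c (rep δ) ^ K = c (rep δ) ^ K * s := (Commute.pow_right hcomm K)
      have h4 : γ δ = g * s := by simp [s]
      rw [h4, mul_assoc, h3, mul_assoc]
    rw [e, FreeGroup.head_mul _ _ h2, h1]
  refine ⟨pref, fun δ hδ x => ?_⟩
  have h : ∀ᶠ K in (ω : Filter ℕ), (γ δ * c (rep δ) ^ K).toWord.head? = some (x, false) ∨
      (FreeGroup.of x * (γ δ * c (rep δ) ^ K)).toWord.head? = some (x, true) :=
    Filter.Eventually.of_forall fun K => FreeGroup.head_of_mul _ _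
  rcases Ultrafilter.eventually_or.1 h with h | h
  · left
    exact hpref δ _ h
  · right
    have hx : ev (FreeGroup.of x • δ) (γ (FreeGroup.of x • δ)) (x, true) := by
      apply hinv _ _ (FreeGroup.of x * γ δ)
      · rw [hrep, mul_smul, hγ]
      · simp only [ev, hrep, mul_assoc]
        exact h
      · intro u v hu hv
        have key : ∀ u : FreeGroup X, u • FreeGroup.of x • δ = FreeGroup.of x • δ →
            ((FreeGroup.of x)⁻¹ * u * FreeGroup.of x) • δ = δ := by
          intro u hu
          rw [mul_smul, mul_smul, hu, inv_smul_smul]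
        have := hδ _ _ (key u hu) (key v hv)
        have e : (FreeGroup.of x)⁻¹ * (u * v) * FreeGroup.of x =
            (FreeGroup.of x)⁻¹ * (v * u) * FreeGroup.of x := by
          calc _ = (FreeGroup.of x)⁻¹ * u * (FreeGroup.of x) *
              ((FreeGroup.of x)⁻¹ * v * (FreeGroup.of x)) := by group
            _ = _ := this
            _ = _ := by group
        exact mul_left_cancel (mul_right_cancel e)
    exact hpref _ _ hx

/-! ### Part 5: the limit tree of an injective endomorphism -/

namespace FreeGroup

variable {X : Type*} [DecidableEq X]

/-- the word metric -/
def fd (g h : FreeGroup X) : ℕ := (g⁻¹ * h).norm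

theorem fd_self (g : FreeGroup X) : fd g g = 0 := by simp [fd]

theorem fd_comm (g h : FreeGroup X) : fd g h = fd h g := by
  unfold fd
  rw [← norm_inv_eq]
  simp

theorem fd_triangle (g h k : FreeGroup X) : fd g k ≤ fd g h + fd h k := by
  unfold fd
  have : g⁻¹ * k = (g⁻¹ * h) * (h⁻¹ * k) := by group
  rw [this]
  exact norm_mul_le _ _

theorem fd_mul (u g h : FreeGroup X) : fd (u * g) (u * h) = fd g h := by
  unfold fd
  congr 1
  group

theorem fd_one_left (g : FreeGroup X) : fd 1 g = g.norm := by simp [fd]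

theorem exists_gromov (g h : FreeGroup X) :
    ∃ n, g.norm + h.norm = fd g h + 2 * n ∧ n ≤ g.norm ∧ n ≤ h.norm ∧
      ∀ m ≤ g.norm, m ≤ h.norm → (m ≤ n ↔ g.toWord.take m = h.toWord.take m) := by
  obtain ⟨p, a, b, h1, h2, h3, h4⟩ := exists_start g h
  have n1 : g.norm = p.length + a.length := by rw [norm, h1, List.length_append]
  have n2 : h.norm = p.length + b.length := by rw [norm, h2, List.length_append]
  have n3 : fd g h = a.length + b.length := by
    rw [fd, norm, h4, List.length_append, invRev_length]
  refine ⟨p.length, by omega, by omega, by omega, fun m hm hm' => ?_⟩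
  rw [h1, h2]
  constructor
  · intro hmn
    rw [List.take_append_of_le_length hmn, List.take_append_of_le_length hmn]
  · intro he
    by_contra hlt
    have he' := congrArg (fun L => L[p.length]?) he
    simp only [List.getElem?_take] at he'
    rw [if_pos (by omega), if_pos (by omega), List.getElem?_append_right le_rfl,
      List.getElem?_append_right le_rfl, Nat.sub_self] at he'
    rcases a with _ | ⟨x, a⟩
    · simp at n1; omega
    · rcases b with _ | ⟨y, b⟩
      · simp at n2; omega
      · simp at he' h3
        exact h3 he'.symm

theorem four_point_one (a b c : FreeGroup X) :
    fd a c + b.norm ≤ fd a b + c.norm ∨ fd a c + b.norm ≤ fd b c + a.norm := by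
  obtain ⟨n, h1, h2, h3, h4⟩ := exists_gromov a b
  obtain ⟨n', h1', h2', h3', h4'⟩ := exists_gromov b c
  obtain ⟨k, k1, k2, k3, k4⟩ := exists_gromov a c
  have : min n n' ≤ k := by
    rw [k4 _ (by omega) (by omega)]
    exact ((h4 _ (by omega) (by omega)).1 (by omega)).trans
      ((h4' _ (by omega) (by omega)).1 (by omega))
  omega

theorem four_point (y a b c : FreeGroup X) :
    fd a c + fd y b ≤ fd a b + fd y c ∨ fd a c + fd y b ≤ fd b c + fd y a := by
  have := four_point_one (y⁻¹ * a) (y⁻¹ * b) (y⁻¹ * c)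
  simp only [fd_mul] at this
  exact this

theorem exists_median_one (b c : FreeGroup X) :
    ∃ m, m.norm + fd m b = b.norm ∧ m.norm + fd m c = c.norm ∧ fd b m + fd m c = fd b c := by
  obtain ⟨p, β, γ, h1, h2, h3, h4⟩ := exists_start b c
  have n1 : b.norm = p.length + β.length := by rw [norm, h1, List.length_append]
  have n2 : c.norm = p.length + γ.length := by rw [norm, h2, List.length_append]
  have n3 : fd b c = β.length + γ.length := by
    rw [fd, norm, h4, List.length_append, invRev_length]
  have hb : b = mk p * mk β := by rw [mul_mk, ← h1, mk_toWord]
  have hc : c = mk p * mk γ := by rw [mul_mk, ← h2, mk_toWord]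
  have e1 : fd (mk p) b ≤ β.length := by
    rw [fd, hb, inv_mul_cancel_left]; exact norm_mk_le
  have e2 : fd (mk p) c ≤ γ.length := by
    rw [fd, hc, inv_mul_cancel_left]; exact norm_mk_le
  have e3 : (mk p).norm ≤ p.length := norm_mk_le
  have t1 := fd_triangle 1 (mk p) b
  have t2 := fd_triangle 1 (mk p) c
  have t3 := fd_triangle b (mk p) c
  simp only [fd_one_left] at t1 t2
  have s := fd_comm b (mk p)
  exact ⟨mk p, by omega, by omega, by omega⟩

theorem exists_median (a b c : FreeGroup X) :
    ∃ m, fd a m + fd m b = fd a b ∧ fd a m + fd m c = fd a c ∧ fd b m + fd m c = fd b c := by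
  obtain ⟨m, h1, h2, h3⟩ := exists_median_one (a⁻¹ * b) (a⁻¹ * c)
  refine ⟨a * m, ?_, ?_, ?_⟩
  · rw [← fd_mul a⁻¹ (a * m) b, ← fd_mul a⁻¹ a (a * m)]
    simpa [fd_one_left, fd] using h1
  · rw [← fd_mul a⁻¹ (a * m) c, ← fd_mul a⁻¹ a (a * m)]
    simpa [fd_one_left, fd] using h2
  · rw [← fd_mul a⁻¹ (a * m) c, ← fd_mul a⁻¹ b (a * m), ← fd_mul a⁻¹ b c]
    simpa using h3

theorem shift_start (a z : FreeGroup X) (N : ℕ)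
    (h : z.toWord.take N = (a * z).toWord.take N) :
    ∃ i j, i ≤ a.norm ∧ j ≤ a.norm ∧ ∀ s, j ≤ s → i + (s - j) ≤ N →
      a * mk (z.toWord.take s) = mk (z.toWord.take (i + (s - j))) := by
  obtain ⟨p, α, β, h1, h2, _, h4⟩ := exists_start a⁻¹ z
  rw [inv_inv] at h4
  have n1 : a.norm = p.length + α.length := by
    rw [← norm_inv_eq, norm, h1, List.length_append]
  have ha : a = (mk p * mk α)⁻¹ := by rw [mul_mk, ← h1, mk_toWord, inv_inv]
  refine ⟨α.length, p.length, by omega, by omega, fun s hs hN => ?_⟩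
  have e1 : z.toWord.take s = p ++ β.take (s - p.length) := by
    rw [h2, List.take_append, List.take_of_length_le hs]
  have e2 : z.toWord.take (α.length + (s - p.length)) =
      invRev α ++ β.take (s - p.length) := by
    have := congrArg (List.take (α.length + (s - p.length))) h
    rw [List.take_take, List.take_take, min_eq_left hN] at this
    rw [this, h4, List.take_append, List.take_of_length_le (by rw [invRev_length]; omega),
      invRev_length, Nat.add_sub_cancel_left]
  rw [e1, e2, ← mul_mk, ← mul_mk, ← inv_mk, ha]
  group

theorem commute_of_shift (a b z : FreeGroup X) (C : ℕ) (ha : a.norm ≤ C) (hb : b.norm ≤ C)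
    (ha' : fd (a * z) z + 8 * C < (a * z).norm + z.norm)
    (hb' : fd (b * z) z + 8 * C < (b * z).norm + z.norm) : a * b = b * a := by
  have key : ∀ u : FreeGroup X, fd (u * z) z + 8 * C < (u * z).norm + z.norm →
      z.toWord.take (4 * C) = (u * z).toWord.take (4 * C) := by
    intro u hu
    obtain ⟨n, h1, h2, h3, h4⟩ := exists_gromov (u * z) z
    exact ((h4 (4 * C) (by omega) (by omega)).1 (by omega)).symm
  obtain ⟨i, j, hi, hj, h⟩ := shift_start a z _ (key a ha')
  obtain ⟨i', j', hi', hj', h'⟩ := shift_start b z _ (key b hb')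
  have e1 : a * b * mk (z.toWord.take (2 * C)) = b * a * mk (z.toWord.take (2 * C)) := by
    rw [mul_assoc, mul_assoc, h (2 * C) (by omega) (by omega), h' (2 * C) (by omega) (by omega),
      h _ (by omega) (by omega), h' _ (by omega) (by omega)]
    congr 2
    omega
  exact mul_right_cancel e1

end FreeGroup

namespace FreeGroup

variable {X : Type*} [DecidableEq X]

/-- two sequences are equivalent if they stay at bounded distance along the ultrafilter -/
def seqSetoid (X : Type*) [DecidableEq X] : Setoid (ℕ → FreeGroup X) where
  r u v := ∃ C, ∀ᶠ k in (Filter.hyperfilter ℕ : Filter ℕ), fd (u k) (v k) ≤ C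
  iseqv := by
    refine ⟨fun u => ⟨0, by simp [fd_self]⟩, ?_, ?_⟩
    · rintro u v ⟨C, h⟩
      exact ⟨C, h.mono fun k hk => by rwa [fd_comm]⟩
    · rintro u v w ⟨C, h⟩ ⟨C', h'⟩
      refine ⟨C + C', ?_⟩
      filter_upwards [h, h'] with k h1 h2
      exact (fd_triangle _ (v k) _).trans (by omega)

/-- the limit tree -/
def Model (X : Type*) [DecidableEq X] : Type _ := Quotient (seqSetoid X)

/-- class of a sequence -/
def toModel (u : ℕ → FreeGroup X) : Model X := Quotient.mk (seqSetoid X) u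

theorem toModel_eq {u v : ℕ → FreeGroup X} : toModel u = toModel v ↔
    ∃ C, ∀ᶠ k in (Filter.hyperfilter ℕ : Filter ℕ), fd (u k) (v k) ≤ C :=
  ⟨fun h => Quotient.exact h, fun h => Quotient.sound (s := seqSetoid X) h⟩

theorem toModel_surj (a : Model X) : ∃ u, toModel u = a := Quotient.exists_rep a

/-- betweenness for sequences -/
def seqB (u v w : ℕ → FreeGroup X) : Prop :=
  ∃ C, ∀ᶠ k in (Filter.hyperfilter ℕ : Filter ℕ), fd (u k) (v k) + fd (v k) (w k) ≤ fd (u k) (w k) + C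

theorem seqB_congr {u v w u' v' w' : ℕ → FreeGroup X} (h1 : toModel u = toModel u')
    (h2 : toModel v = toModel v') (h3 : toModel w = toModel w') (h : seqB u v w) :
    seqB u' v' w' := by
  rw [toModel_eq] at h1 h2 h3
  obtain ⟨C1, h1⟩ := h1
  obtain ⟨C2, h2⟩ := h2
  obtain ⟨C3, h3⟩ := h3
  obtain ⟨C, h⟩ := h
  refine ⟨C + 2 * C1 + 2 * C2 + 2 * C3, ?_⟩
  filter_upwards [h, h1, h2, h3] with k h h1 h2 h3
  have t1 := fd_triangle (u' k) (u k) (v' k)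
  have t2 := fd_triangle (u k) (v k) (v' k)
  have t3 := fd_triangle (v' k) (v k) (w' k)
  have t4 := fd_triangle (v k) (w k) (w' k)
  have t5 := fd_triangle (u k) (u' k) (w k)
  have t6 := fd_triangle (u' k) (w' k) (w k)
  have s1 := fd_comm (u' k) (u k)
  have s2 := fd_comm (v' k) (v k)
  have s3 := fd_comm (w' k) (w k)
  omega

/-- betweenness on the limit tree -/
def modelB (a y b : Model X) : Prop :=
  ∃ u v w, toModel u = a ∧ toModel v = y ∧ toModel w = b ∧ seqB u v w

theorem modelB_mk {u v w : ℕ → FreeGroup X} :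
    modelB (toModel u) (toModel v) (toModel w) ↔ seqB u v w := by
  constructor
  · rintro ⟨u', v', w', h1, h2, h3, h⟩
    exact seqB_congr h1 h2 h3 h
  · intro h
    exact ⟨u, v, w, rfl, rfl, rfl, h⟩

/-- the limit tree as a pretree with medians -/
def modelTree (X : Type*) [DecidableEq X] : PreTree (Model X) where
  B := modelB
  left a b := by
    obtain ⟨u, rfl⟩ := toModel_surj a
    obtain ⟨v, rfl⟩ := toModel_surj b
    rw [modelB_mk]
    exact ⟨0, by simp [fd_self]⟩
  symm {a y b} := by
    obtain ⟨u, rfl⟩ := toModel_surj a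
    obtain ⟨v, rfl⟩ := toModel_surj y
    obtain ⟨w, rfl⟩ := toModel_surj b
    rw [modelB_mk, modelB_mk]
    rintro ⟨C, h⟩
    refine ⟨C, h.mono fun k hk => ?_⟩
    have s1 := fd_comm (w k) (v k)
    have s2 := fd_comm (v k) (u k)
    have s3 := fd_comm (w k) (u k)
    omega
  tri {a y c} b := by
    obtain ⟨u, rfl⟩ := toModel_surj a
    obtain ⟨v, rfl⟩ := toModel_surj y
    obtain ⟨w, rfl⟩ := toModel_surj c
    obtain ⟨z, rfl⟩ := toModel_surj b
    rw [modelB_mk, modelB_mk, modelB_mk]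
    rintro ⟨C, h⟩
    have : ∀ᶠ k in (Filter.hyperfilter ℕ : Filter ℕ),
        fd (u k) (v k) + fd (v k) (z k) ≤ fd (u k) (z k) + C ∨
        fd (z k) (v k) + fd (v k) (w k) ≤ fd (z k) (w k) + C := by
      filter_upwards [h] with k hk
      have s1 := fd_comm (v k) (z k)
      have s2 := fd_comm (v k) (u k)
      rcases four_point (v k) (u k) (z k) (w k) with h | h
      · left; omega
      · right; omega
    rcases Ultrafilter.eventually_or.1 this with h | h
    · exact Or.inl ⟨C, h⟩
    · exact Or.inr ⟨C, h⟩
  anti {a y b} := by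
    obtain ⟨u, rfl⟩ := toModel_surj a
    obtain ⟨v, rfl⟩ := toModel_surj y
    obtain ⟨w, rfl⟩ := toModel_surj b
    rw [modelB_mk, modelB_mk, toModel_eq]
    rintro ⟨C, h⟩ ⟨C', h'⟩
    refine ⟨C + C', ?_⟩
    filter_upwards [h, h'] with k h h'
    have := fd_comm (v k) (w k)
    omega
  med a b c := by
    obtain ⟨u, rfl⟩ := toModel_surj a
    obtain ⟨v, rfl⟩ := toModel_surj b
    obtain ⟨w, rfl⟩ := toModel_surj c
    choose m h1 h2 h3 using fun k => exists_median (u k) (v k) (w k)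
    refine ⟨toModel m, ?_⟩
    rw [modelB_mk, modelB_mk, modelB_mk]
    exact ⟨⟨0, by simp [h1]⟩, ⟨0, by simp [h2]⟩, ⟨0, by simp [h3]⟩⟩

/-- the twisted action on the limit tree -/
@[reducible] def modelAction (φ : Monoid.End (FreeGroup X)) : MulAction (FreeGroup X) (Model X) where
  smul g := Quotient.map (fun u k => (φ ^ k) g * u k) (by
    rintro u v ⟨C, h⟩
    exact ⟨C, h.mono fun k hk => by rwa [fd_mul]⟩)
  one_smul a := by
    obtain ⟨u, rfl⟩ := toModel_surj a
    change toModel (fun k => (φ ^ k) 1 * u k) = _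
    simp
  mul_smul g h a := by
    obtain ⟨u, rfl⟩ := toModel_surj a
    change toModel (fun k => (φ ^ k) (g * h) * u k) =
      toModel (fun k => (φ ^ k) g * ((φ ^ k) h * u k))
    simp [mul_assoc]

theorem End_pow_succ {G : Type*} [Group G] (φ : Monoid.End G) (m n : ℕ) (g : G) :
    (φ ^ (m + n)) g = (φ ^ m) ((φ ^ n) g) := by
  rw [pow_add]; rfl

theorem End_pow_inj {G : Type*} [Group G] (φ : Monoid.End G) (hφ : Function.Injective φ) (n : ℕ) :
    Function.Injective (φ ^ n : Monoid.End G) := by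
  induction n with
  | zero => exact fun a b h => h
  | succ n ih =>
    intro a b h
    rw [End_pow_succ, End_pow_succ] at h
    have := ih h
    rw [pow_one] at this
    exact hφ this

open scoped Pointwise in
theorem per_injective [Fintype X] [Nonempty X] (φ : Monoid.End (FreeGroup X))
    (hφ : Function.Injective φ) :
    ∃ S : Finset (FreeGroup X), (Subgroup.closure (S : Set (FreeGroup X)) : Set (FreeGroup X)) =
      perSet φ ∧ S.card ≤ Fintype.card X := by
  let _ := modelAction φ
  have hsm : ∀ (g : FreeGroup X) u, g • toModel u = toModel (fun k => (φ ^ k) g * u k) :=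
    fun g u => rfl
  have hB : ∀ (g : FreeGroup X) a y b, (modelTree X).B a y b →
      (modelTree X).B (g • a) (g • y) (g • b) := by
    intro g a y b
    obtain ⟨u, rfl⟩ := toModel_surj a
    obtain ⟨v, rfl⟩ := toModel_surj y
    obtain ⟨w, rfl⟩ := toModel_surj b
    rw [hsm, hsm, hsm]
    change modelB _ _ _ → modelB _ _ _
    rw [modelB_mk, modelB_mk]
    rintro ⟨C, h⟩
    exact ⟨C, by simpa only [fd_mul] using h⟩
  obtain ⟨pref, hpref⟩ := exists_pref (X := X) (D := Model X × Set (Model X))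
  have hcomm : ∀ y z, z ≠ y → ∀ g h : FreeGroup X,
      g • (modelTree X).dir y z = (modelTree X).dir y z →
      h • (modelTree X).dir y z = (modelTree X).dir y z → g * h = h * g := by
    intro y z hzy g h hg hh
    have key : ∀ g : FreeGroup X, g • (modelTree X).dir y z = (modelTree X).dir y z →
        g • y = y ∧ ¬ (modelTree X).B (g • z) y z := by
      intro g hg
      rw [(modelTree X).dir_smul hB] at hg
      have h1 : g • y = y := congrArg Prod.fst hg
      rw [h1, (modelTree X).dir_eq_iff _ hzy] at hg
      · exact ⟨h1, hg⟩
      · intro h2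
        apply hzy
        rw [← h1] at h2
        exact smul_left_cancel _ h2
    obtain ⟨g1, g2⟩ := key g hg
    obtain ⟨h1, h2⟩ := key h hh
    obtain ⟨u, rfl⟩ := toModel_surj y
    obtain ⟨w, rfl⟩ := toModel_surj z
    rw [hsm] at g1 g2 h1 h2
    rw [toModel_eq] at g1 h1
    change ¬ modelB _ _ _ at g2
    change ¬ modelB _ _ _ at h2
    rw [modelB_mk] at g2 h2
    obtain ⟨C, g1⟩ := g1
    obtain ⟨C', h1⟩ := h1
    simp only [seqB, not_exists] at g2 h2
    have g3 := Ultrafilter.eventually_not.2 (g2 (8 * (C + C')))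
    have h3 := Ultrafilter.eventually_not.2 (h2 (8 * (C + C')))
    obtain ⟨k, ⟨⟨g1, h1⟩, g3⟩, h3⟩ := (((g1.and h1).and g3).and h3).exists
    apply End_pow_inj φ hφ k
    have tr : ∀ g : FreeGroup X, ∀ C, fd ((φ ^ k) g * u k) (u k) ≤ C →
        ((u k)⁻¹ * (φ ^ k) g * u k).norm ≤ C := by
      intro g C hC
      rw [fd_comm] at hC
      unfold fd at hC
      rwa [← mul_assoc] at hC
    have tr2 : ∀ g : FreeGroup X, ¬ (fd ((φ ^ k) g * w k) (u k) + fd (u k) (w k) ≤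
        fd ((φ ^ k) g * w k) (w k) + 8 * (C + C')) →
        fd (((u k)⁻¹ * (φ ^ k) g * u k) * ((u k)⁻¹ * w k)) ((u k)⁻¹ * w k) + 8 * (C + C') <
        (((u k)⁻¹ * (φ ^ k) g * u k) * ((u k)⁻¹ * w k)).norm + ((u k)⁻¹ * w k).norm := by
      intro g hg
      have e : ((u k)⁻¹ * (φ ^ k) g * u k) * ((u k)⁻¹ * w k) = (u k)⁻¹ * ((φ ^ k) g * w k) := by
        group
      rw [e, fd_mul]
      rw [fd_comm _ (u k)] at hg
      exact not_le.1 hg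
    have := commute_of_shift ((u k)⁻¹ * (φ ^ k) g * u k) ((u k)⁻¹ * (φ ^ k) h * u k)
      ((u k)⁻¹ * w k) (C + C') ((tr g C g1).trans (by omega)) ((tr h C' h1).trans (by omega))
      (tr2 g g3) (tr2 h h3)
    have e : (u k)⁻¹ * ((φ ^ k) g * (φ ^ k) h) * u k = (u k)⁻¹ * ((φ ^ k) h * (φ ^ k) g) * u k := by
      calc _ = (u k)⁻¹ * (φ ^ k) g * u k * ((u k)⁻¹ * (φ ^ k) h * u k) := by group
        _ = _ := this
        _ = _ := by group
    rw [_root_.map_mul, _root_.map_mul]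
    exact mul_left_cancel (mul_right_cancel e)
  obtain ⟨S, hS, hc⟩ := stabilizer_rank (X := X) (toModel (fun _ => (1 : FreeGroup X)))
    (fun W hW Wx h1 h2 h3 => (modelTree X).count hB FreeGroup.of pref
      (fun y z hyz x => hpref _ (hcomm y z hyz) x) W hW Wx h1 h2 h3)
  refine ⟨S, ?_, hc⟩
  rw [hS]
  ext g
  rw [SetLike.mem_coe, MulAction.mem_stabilizer_iff, hsm, toModel_eq]
  constructor
  · rintro ⟨C, hC⟩
    have hinf : {k | fd ((φ ^ k) g * 1) 1 ≤ C}.Infinite := by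
      intro hfin
      exact hfin.notMem_hyperfilter hC
    have hmaps : Set.MapsTo (fun k : ℕ => (φ ^ k) g) {k | fd ((φ ^ k) g * 1) 1 ≤ C}
        {h | h.norm ≤ C} := by
      intro k hk
      change fd ((φ ^ k) g * 1) 1 ≤ C at hk
      rw [mul_one, fd_comm, fd_one_left] at hk
      exact hk
    obtain ⟨i, _, j, _, hij, he⟩ := hinf.exists_lt_map_eq_of_mapsTo hmaps (finite_ball C)
    refine ⟨j - i, by omega, ?_⟩
    apply End_pow_inj φ hφ i
    rw [← End_pow_succ]
    rw [he]
    congr 2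
    omega
  · rintro ⟨n, hn, he⟩
    refine ⟨∑ i ∈ Finset.range n, ((φ ^ i) g).norm, Filter.Eventually.of_forall fun k => ?_⟩
    rw [mul_one, fd_comm, fd_one_left]
    have h1 : ∀ q r, (φ ^ (r + n * q)) g = (φ ^ r) g := by
      intro q r
      induction q with
      | zero => rfl
      | succ q ih =>
        rw [mul_add, mul_one, ← add_assoc, End_pow_succ, he, ih]
    rw [← Nat.mod_add_div k n, h1]
    exact Finset.single_le_sum (f := fun i => ((φ ^ i) g).norm) (fun _ _ => Nat.zero_le _)
      (Finset.mem_range.2 (Nat.mod_lt _ hn))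

end FreeGroup

/-! ### Part 6: the Hopf property and arbitrary endomorphisms of free groups -/

theorem exists_perm_extend {α : Type*} [Finite α] (p : α → Prop) (f : {a // p a} → α)
    (hf : Function.Injective f) : ∃ σ : Equiv.Perm α, ∀ a (ha : p a), σ a = f ⟨a, ha⟩ := by
  classical
  have := Fintype.ofFinite α
  let e : {a // p a} ≃ {a // a ∈ Set.range f} := Equiv.ofInjective f hf
  refine ⟨e.extendSubtype, fun a ha => ?_⟩
  rw [Equiv.extendSubtype_apply_of_mem e a ha]
  rfl

/-- Free groups of finite rank are residually finite. -/
theorem FreeGroup.exists_finite_quotient {X : Type} [Finite X] (g : FreeGroup X) (hg : g ≠ 1) :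
    ∃ (B : Type) (_ : Finite B) (ρ : FreeGroup X →* Equiv.Perm B), ρ g ≠ 1 := by
  classical
  let R := g.norm
  let B : Type := {h : FreeGroup X // h.norm ≤ R}
  have hBfin : Finite B := (FreeGroup.finite_ball R).to_subtype
  have hσ : ∀ x : X, ∃ σ : Equiv.Perm B, ∀ (h : B) (hh : (FreeGroup.of x * h.1).norm ≤ R),
      σ h = ⟨FreeGroup.of x * h.1, hh⟩ := by
    intro x
    exact exists_perm_extend (fun h : B => (FreeGroup.of x * h.1).norm ≤ R)
      (fun h => ⟨FreeGroup.of x * h.1.1, h.2⟩) (by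
        rintro ⟨⟨a, _⟩, _⟩ ⟨⟨b, _⟩, _⟩ h
        have h := mul_left_cancel (congrArg Subtype.val h)
        subst h
        rfl)
  choose σ hσ using hσ
  refine ⟨B, hBfin, FreeGroup.lift σ, fun h => ?_⟩
  have key : ∀ w : List (X × Bool), ∀ hw : w.length ≤ R,
      FreeGroup.lift σ (FreeGroup.mk w) ⟨1, by simp⟩ =
        (⟨FreeGroup.mk w, FreeGroup.norm_mk_le.trans hw⟩ : B) := by
    intro w
    induction w with
    | nil =>
      intro _
      have : FreeGroup.mk ([] : List (X × Bool)) = 1 := rfl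
      simp only [this]
      rfl
    | cons a w ih =>
      intro hw
      rw [List.length_cons] at hw
      have e : FreeGroup.mk (a :: w) = FreeGroup.mk [a] * FreeGroup.mk w := by
        rw [FreeGroup.mul_mk]; rfl
      have hn : (FreeGroup.mk (a :: w)).norm ≤ R := FreeGroup.norm_mk_le.trans (by simpa using hw)
      have e2 : FreeGroup.lift σ (FreeGroup.mk (a :: w)) =
        FreeGroup.lift σ (FreeGroup.mk [a]) * FreeGroup.lift σ (FreeGroup.mk w) := by
        rw [e, _root_.map_mul]
      rw [e2, Equiv.Perm.mul_apply, ih (by omega)]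
      obtain ⟨x, b⟩ := a
      cases b
      · have e3 : FreeGroup.mk [(x, false)] = (FreeGroup.of x)⁻¹ := rfl
        rw [e3, _root_.map_inv, FreeGroup.lift_apply_of, Equiv.Perm.inv_eq_iff_eq]
        have e4 : FreeGroup.of x * FreeGroup.mk ((x, false) :: w) = FreeGroup.mk w := by
          rw [e, e3, mul_inv_cancel_left]
        rw [hσ x ⟨_, hn⟩ (by
          dsimp only
          rw [e4]; exact FreeGroup.norm_mk_le.trans (by omega))]
        simp only [e4]
      · have e3 : FreeGroup.mk [(x, true)] = FreeGroup.of x := rfl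
        rw [e3, FreeGroup.lift_apply_of, hσ x _ (by dsimp only; rw [← e3, ← e]; exact hn)]
        simp only [e, e3]
  have h1 := key g.toWord le_rfl
  simp only [FreeGroup.mk_toWord, h] at h1
  have h2 := congrArg Subtype.val h1
  exact hg h2.symm

/-- Free groups of finite rank are Hopfian. -/
theorem FreeGroup.hopf {X : Type} [Finite X] (f : FreeGroup X →* FreeGroup X)
    (hf : Function.Surjective f) : Function.Injective f := by
  rw [injective_iff_map_eq_one]
  intro g hg
  by_contra hne
  obtain ⟨B, hB, ρ, hρ⟩ := FreeGroup.exists_finite_quotient g hne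
  have : Finite (FreeGroup X →* Equiv.Perm B) := Finite.of_equiv _ FreeGroup.lift
  have hinj : Function.Injective (fun θ : FreeGroup X →* Equiv.Perm B => θ.comp f) := by
    intro θ θ' h
    ext1 x
    obtain ⟨y, hy⟩ := hf (FreeGroup.of x)
    rw [← hy]
    exact DFunLike.congr_fun h y
  obtain ⟨θ, hθ⟩ := Finite.surjective_of_injective hinj ρ
  apply hρ
  rw [← hθ]
  change θ (f g) = 1
  rw [hg, _root_.map_one]

theorem FreeGroup.rank_le {X Y : Type*} [Finite X] (f : FreeGroup X →* FreeGroup Y)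
    (hf : Function.Surjective f) : Finite Y ∧ Nat.card Y ≤ Nat.card X := by
  let A := Multiplicative (ZMod 2)
  have : Finite A := inferInstanceAs (Finite (ZMod 2))
  have hA : Nat.card A = 2 := Nat.card_zmod 2
  have hinj : Function.Injective (fun θ : Y → A => FreeGroup.lift.symm ((FreeGroup.lift θ).comp f)) := by
    intro θ θ' h
    apply FreeGroup.lift.injective
    have h := FreeGroup.lift.symm.injective h
    ext1 x
    obtain ⟨y, hy⟩ := hf (FreeGroup.of x)
    rw [← hy]
    exact DFunLike.congr_fun h y
  have hfin : Finite (Y → A) := Finite.of_injective _ hinj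
  have hY : Finite Y := by
    classical
    refine Finite.of_injective (β := Y → A) (fun y z => if y = z then Multiplicative.ofAdd 1 else 1) ?_
    intro y z h
    by_contra hne
    have := congrFun h z
    simp [hne] at this
    exact absurd this (by decide)
  refine ⟨hY, ?_⟩
  have := Nat.card_le_card_of_injective _ hinj
  rw [Nat.card_fun, Nat.card_fun, hA] at this
  exact (Nat.pow_le_pow_iff_right (by norm_num)).1 this

theorem perSet_transport {K G : Type*} [Group K] [Group G] (f : K →* G) (hf : Function.Injective f)
    (ψ : Monoid.End K) (φ : Monoid.End G) (h : ∀ x, f (ψ x) = φ (f x)) :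
    f '' perSet ψ = perSet φ ∩ Set.range f := by
  have hn : ∀ n x, f ((ψ ^ n) x) = (φ ^ n) (f x) := by
    intro n
    induction n with
    | zero => intro x; rfl
    | succ n ih =>
      intro x
      rw [FreeGroup.End_pow_succ, FreeGroup.End_pow_succ, ih, pow_one, pow_one, h]
  ext y
  constructor
  · rintro ⟨x, ⟨n, h1, h2⟩, rfl⟩
    exact ⟨⟨n, h1, by rw [← hn, h2]⟩, x, rfl⟩
  · rintro ⟨⟨n, h1, h2⟩, x, rfl⟩
    exact ⟨x, ⟨n, h1, hf (by rw [hn, h2])⟩, rfl⟩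

theorem perSet_transport_fg {K G : Type*} [Group K] [Group G] (f : K →* G)
    (hf : Function.Injective f)
    (ψ : Monoid.End K) (φ : Monoid.End G) (h : ∀ x, f (ψ x) = φ (f x)) (m : ℕ)
    (hS : ∃ S : Finset K, (Subgroup.closure (S : Set K) : Set K) = perSet ψ ∧ S.card ≤ m) :
    ∃ S : Finset G, (Subgroup.closure (S : Set G) : Set G) = perSet φ ∩ Set.range f ∧
      S.card ≤ m := by
  classical
  obtain ⟨S, h1, h2⟩ := hS
  refine ⟨S.image f, ?_, Finset.card_image_le.trans h2⟩
  rw [← perSet_transport f hf ψ φ h, ← h1, Finset.coe_image, ← MonoidHom.map_closure]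
  rfl

theorem FreeGroup.per_fg (n : ℕ) : ∀ (X : Type) [Finite X], Nat.card X = n →
    ∀ φ : Monoid.End (FreeGroup X), ∃ S : Finset (FreeGroup X),
      (Subgroup.closure (S : Set (FreeGroup X)) : Set (FreeGroup X)) = perSet φ ∧ S.card ≤ n := by
  classical
  induction n using Nat.strong_induction_on with
  | _ n ih =>
    intro X _ hX φ
    have := Fintype.ofFinite X
    rcases isEmpty_or_nonempty X with hE | hE
    · refine ⟨∅, ?_, by simp⟩
      have hs : ∀ a : FreeGroup X, a = 1 := fun a => Subsingleton.elim _ _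
      ext a
      rw [hs a]
      simp only [SetLike.mem_coe, one_mem, true_iff]
      exact ⟨1, le_rfl, _root_.map_one _⟩
    by_cases hφ : Function.Injective φ
    · rw [← hX, Nat.card_eq_fintype_card]
      exact FreeGroup.per_injective φ hφ
    let φ' : FreeGroup X →* FreeGroup X := φ
    let H : Subgroup (FreeGroup X) := φ'.range
    let Y := IsFreeGroup.Generators H
    let e : H ≃* FreeGroup Y := IsFreeGroup.toFreeGroup H
    let f : FreeGroup X →* FreeGroup Y := e.toMonoidHom.comp φ'.rangeRestrict
    have hf : Function.Surjective f := e.surjective.comp φ'.rangeRestrict_surjective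
    obtain ⟨hY, hle⟩ := FreeGroup.rank_le f hf
    have hlt : Nat.card Y < n := by
      rw [← hX]
      refine lt_of_le_of_ne hle fun heq => hφ ?_
      obtain ⟨c⟩ := Finite.card_eq.1 heq
      have := FreeGroup.hopf ((FreeGroup.freeGroupCongr c).toMonoidHom.comp f)
        ((FreeGroup.freeGroupCongr c).surjective.comp hf)
      intro a b hab
      apply this
      have : φ'.rangeRestrict a = φ'.rangeRestrict b := Subtype.ext hab
      simp [f, this]
    let i : FreeGroup Y →* FreeGroup X := H.subtype.comp e.symm.toMonoidHom
    have hi : Function.Injective i := H.subtype_injective.comp e.symm.injective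
    have hmem : ∀ x, φ' x ∈ H := fun x => ⟨x, rfl⟩
    let ψ : Monoid.End (FreeGroup Y) := e.toMonoidHom.comp (φ'.rangeRestrict.comp i)
    have hψ : ∀ x, i (ψ x) = φ (i x) := by
      intro x
      simp only [i, ψ]
      change ((e.symm (e (φ'.rangeRestrict _)) : H) : FreeGroup X) = _
      rw [e.symm_apply_apply]
      rfl
    obtain ⟨S, h1, h2⟩ := perSet_transport_fg i hi ψ φ hψ _ (ih _ hlt Y rfl ψ)
    refine ⟨S, ?_, h2.trans hlt.le⟩
    rw [h1, Set.inter_eq_left]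
    rintro x ⟨m, hm, hx⟩
    obtain ⟨m, rfl⟩ : ∃ k, m = 1 + k := ⟨m - 1, by omega⟩
    rw [FreeGroup.End_pow_succ, pow_one] at hx
    refine ⟨e ⟨x, ⟨_, hx⟩⟩, ?_⟩
    simp [i]

/-! ### Part 7: reduction from virtually free groups -/

theorem finite_hom_of_fg {G Q : Type*} [Group G] [Group.FG G] [Group Q] [Finite Q] :
    Finite (G →* Q) := by
  obtain ⟨S, hS⟩ := Group.fg_def.1 (inferInstance : Group.FG G)
  refine Finite.of_injective (β := S → Q) (fun f s => f s) ?_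
  intro f f' h
  refine MonoidHom.eq_of_eqOn_dense hS ?_
  intro s hs
  exact congrFun h ⟨s, hs⟩

theorem free_rank_finite {H : Type*} [Group H] [IsFreeGroup H] [Group.FG H] :
    ∃ r : ℕ, Nonempty (H ≃* FreeGroup (Fin r)) := by
  obtain ⟨S, hS⟩ := Group.fg_def.1 (inferInstance : Group.FG H)
  let Y := IsFreeGroup.Generators H
  let e : H ≃* FreeGroup Y := IsFreeGroup.toFreeGroup H
  let f : FreeGroup S →* FreeGroup Y := e.toMonoidHom.comp (FreeGroup.lift (fun s : S => (s : H)))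
  have hf : Function.Surjective f := by
    refine e.surjective.comp ?_
    rw [← MonoidHom.range_eq_top, FreeGroup.range_lift_eq_closure]
    rw [← hS]
    congr 1
    ext x
    simp
  obtain ⟨hY, _⟩ := FreeGroup.rank_le f hf
  obtain ⟨n, ⟨c⟩⟩ := Finite.exists_equiv_fin Y
  exact ⟨n, ⟨e.trans (FreeGroup.freeGroupCongr c)⟩⟩

/-- the periodic subgroup -/
def perSubgroup {G : Type*} [Group G] (φ : Monoid.End G) : Subgroup G where
  carrier := perSet φ
  one_mem' := ⟨1, le_rfl, _root_.map_one _⟩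
  inv_mem' := by
    rintro x ⟨n, h1, h2⟩
    exact ⟨n, h1, by rw [_root_.map_inv, h2]⟩
  mul_mem' := by
    have key : ∀ x n m, (φ ^ n) x = x → (φ ^ (n * m)) x = x := by
      intro x n m h
      induction m with
      | zero => rfl
      | succ m ih => rw [mul_add, mul_one, FreeGroup.End_pow_succ, h, ih]
    rintro x y ⟨n, h1, h2⟩ ⟨m, h3, h4⟩
    refine ⟨n * m, Nat.one_le_iff_ne_zero.2 (by positivity), ?_⟩
    rw [_root_.map_mul, key x n m h2, mul_comm n m, key y m n h4]

/-- if `G` is a finitely generated group with a free subgroup of finite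
index, then there is a constant `M > 0` such that for every endomorphism `φ` of `G` the
periodic subgroup `Per(φ)` is generated by at most `M` elements. -/
theorem perSet_uniformly_fg_of_virtually_free {G : Type*} [Group G] [Group.FG G]
    (F : Subgroup G) [IsFreeGroup ↥F] [F.FiniteIndex] :
    ∃ M : ℕ, 0 < M ∧ ∀ φ : Monoid.End G,
      ∃ S : Finset G, (Subgroup.closure (S : Set G) : Set G) = perSet φ ∧ S.card ≤ M := by
  classical
  let N : Subgroup G := ⨅ f : G →* Equiv.Perm (G ⧸ F), f.ker
  have hQ : Finite (G ⧸ F) := inferInstance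
  have hfin : Finite (G →* Equiv.Perm (G ⧸ F)) := finite_hom_of_fg
  have hNfi : N.FiniteIndex := Subgroup.finiteIndex_iInf fun f => inferInstance
  have hNF : N ≤ F := by
    intro g hg
    have h1 : g ∈ (MulAction.toPermHom G (G ⧸ F)).ker := (Subgroup.mem_iInf.1 hg) _
    rw [MonoidHom.mem_ker] at h1
    have h2 := congrArg (fun σ : Equiv.Perm (G ⧸ F) => σ ((1 : G) : G ⧸ F)) h1
    change ((g * 1 : G) : G ⧸ F) = ((1 : G) : G ⧸ F) at h2
    rw [mul_one] at h2
    have h3 := QuotientGroup.eq.1 h2.symm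
    simpa using h3
  have hinv : ∀ (φ : Monoid.End G), ∀ g ∈ N, φ g ∈ N := by
    intro φ g hg
    refine Subgroup.mem_iInf.2 fun f => ?_
    exact (Subgroup.mem_iInf.1 hg) (f.comp φ)
  have hfree : IsFreeGroup N := IsFreeGroup.ofMulEquiv (Subgroup.subgroupOfEquivOfLe hNF)
  have hfg : Group.FG N := inferInstance
  obtain ⟨r, ⟨e⟩⟩ := free_rank_finite (H := N)
  have hGN : Finite (G ⧸ N) := inferInstance
  have := Fintype.ofFinite (G ⧸ N)
  refine ⟨r + Fintype.card (G ⧸ N) + 1, by omega, fun φ => ?_⟩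
  let i : FreeGroup (Fin r) →* G := N.subtype.comp e.symm.toMonoidHom
  have hi : Function.Injective i := N.subtype_injective.comp e.symm.injective
  have hrange : Set.range i = N := by
    ext g
    constructor
    · rintro ⟨x, rfl⟩
      exact (e.symm x).2
    · intro hg
      exact ⟨e ⟨g, hg⟩, by simp [i]⟩
  have hmem : ∀ x, ((φ : G →* G).comp i) x ∈ N := by
    intro x
    exact hinv φ _ (e.symm x).2
  let ψ : Monoid.End (FreeGroup (Fin r)) :=
    e.toMonoidHom.comp (((φ : G →* G).comp i).codRestrict N hmem)
  have hψ : ∀ x, i (ψ x) = φ (i x) := by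
    intro x
    change ((e.symm (e _) : N) : G) = _
    rw [e.symm_apply_apply]
    rfl
  obtain ⟨S, h1, h2⟩ := perSet_transport_fg i hi ψ φ hψ _
    (FreeGroup.per_fg r (Fin r) (by simp) ψ)
  rw [hrange] at h1
  have hrep : ∀ q : G ⧸ N, ∃ g ∈ perSubgroup φ,
      ∀ p ∈ perSubgroup φ, (p : G ⧸ N) = q → (g : G ⧸ N) = q := by
    intro q
    by_cases h : ∃ p ∈ perSubgroup φ, (p : G ⧸ N) = q
    · obtain ⟨p, hp, hpq⟩ := h
      exact ⟨p, hp, fun _ _ _ => hpq⟩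
    · exact ⟨1, one_mem _, fun p hp hpq => absurd ⟨p, hp, hpq⟩ h⟩
  choose rep hrep1 hrep2 using hrep
  refine ⟨S ∪ Finset.univ.image rep, ?_, ?_⟩
  · change _ = ((perSubgroup φ : Subgroup G) : Set G)
    rw [SetLike.coe_set_eq]
    apply le_antisymm
    · rw [Subgroup.closure_le]
      intro g hg
      rw [Finset.coe_union, Set.mem_union] at hg
      rcases hg with hg | hg
      · have : g ∈ (Subgroup.closure (S : Set G) : Set G) := Subgroup.subset_closure hg
        rw [h1] at this
        exact this.1
      · rw [Finset.coe_image] at hg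
        obtain ⟨q, _, rfl⟩ := hg
        exact hrep1 q
    · intro p hp
      have e1 : ((rep (p : G ⧸ N) : G) : G ⧸ N) = (p : G ⧸ N) := hrep2 _ p hp rfl
      have e2 : (rep (p : G ⧸ N))⁻¹ * p ∈ N := QuotientGroup.eq.1 e1
      have e3 : (rep (p : G ⧸ N))⁻¹ * p ∈ (Subgroup.closure (S : Set G) : Set G) := by
        rw [h1]
        exact ⟨(perSubgroup φ).mul_mem ((perSubgroup φ).inv_mem (hrep1 _)) hp, e2⟩
      have e4 : (rep (p : G ⧸ N))⁻¹ * p ∈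
          Subgroup.closure ((S ∪ Finset.univ.image rep : Finset G) : Set G) :=
        Subgroup.closure_mono (by simp) e3
      have e5 : rep (p : G ⧸ N) ∈
          Subgroup.closure ((S ∪ Finset.univ.image rep : Finset G) : Set G) :=
        Subgroup.subset_closure (by simp)
      have := Subgroup.mul_mem _ e5 e4
      rwa [mul_inv_cancel_left] at this
  · refine (Finset.card_union_le _ _).trans ?_
    have : (Finset.univ.image rep).card ≤ Fintype.card (G ⧸ N) := Finset.card_image_le
    omega
end

section
/- Let G be a finitely generated group having a free subgroup of finite index, and let φ be an endomorphism of G. Then there exists a constant R_φ ≥ 1 such that every x ∈ Per(φ) has period at most R_φ, i.e., φ^{R_φ}(x) = x for all x ∈ Per(φ). -/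
namespace VFree

section Magnus
open Classical in
/-- The square-zero operator attached to a generator. -/
noncomputable def opN {α : Type*} (a : α) : Module.End ℤ (List α → ℤ) where
  toFun f := fun w => match w with
    | [] => 0
    | b :: t => if b = a ∧ t.head? ≠ some a then f t else 0
  map_add' f g := by
    ext w
    cases w with
    | nil => simp
    | cons b t =>
      simp only [Pi.add_apply]
      split_ifs <;> simp
  map_smul' c f := by
    ext w
    cases w with
    | nil => simp
    | cons b t =>
      simp only [Pi.smul_apply, RingHom.id_apply]
      split_ifs <;> simp

theorem opN_nil {α : Type*} (a : α) (f : List α → ℤ) : opN a f [] = 0 := rfl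

open Classical in
theorem opN_cons {α : Type*} (a b : α) (t : List α) (f : List α → ℤ) :
    opN a f (b :: t) = if b = a ∧ t.head? ≠ some a then f t else 0 := rfl

theorem opN_of_head_ne {α : Type*} (a : α) (t : List α) (f : List α → ℤ)
    (h : t.head? ≠ some a) : opN a f t = 0 := by
  cases t with
  | nil => rfl
  | cons b t =>
    rw [opN_cons, if_neg]
    rintro ⟨rfl, -⟩
    simp at h

theorem opN_self {α : Type*} (a : α) (t : List α) (f : List α → ℤ)
    (h : t.head? ≠ some a) : opN a f (a :: t) = f t := by
  rw [opN_cons, if_pos ⟨rfl, h⟩]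

theorem opN_sq {α : Type*} (a : α) : opN a * opN a = 0 := by
  ext f w
  cases w with
  | nil => rfl
  | cons b t =>
    rw [Module.End.mul_apply, opN_cons]
    split_ifs with h
    · rw [opN_of_head_ne a t f h.2]; rfl
    · rfl

/-- The unit `1 + p N_a`. -/
noncomputable def opU {α : Type*} (p : ℤ) (a : α) : (Module.End ℤ (List α → ℤ))ˣ where
  val := 1 + p • opN a
  inv := 1 - p • opN a
  val_inv := by
    have := opN_sq a
    rw [mul_sub, add_mul, add_mul, smul_mul_smul_comm, this]
    simp
  inv_val := by
    have := opN_sq a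
    rw [mul_add, sub_mul, sub_mul, smul_mul_smul_comm, this]
    simp

/-- The Magnus-type representation of the free group. -/
noncomputable def rho {α : Type*} (p : ℤ) : FreeGroup α →* (Module.End ℤ (List α → ℤ))ˣ :=
  FreeGroup.lift (opU p)

/-- sign of a letter -/
def sg (b : Bool) : ℤ := if b then 1 else -1

theorem rho_cons {α : Type*} (p : ℤ) (a : α) (b : Bool) (L : List (α × Bool))
    (f : List α → ℤ) (w : List α) :
    ((rho p (FreeGroup.mk ((a, b) :: L)) : (Module.End ℤ (List α → ℤ))ˣ) :
      Module.End ℤ (List α → ℤ)) f w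
    = ((rho p (FreeGroup.mk L) : (Module.End ℤ (List α → ℤ))ˣ) :
      Module.End ℤ (List α → ℤ)) f w + sg b * p *
      opN a (((rho p (FreeGroup.mk L) : (Module.End ℤ (List α → ℤ))ˣ) :
      Module.End ℤ (List α → ℤ)) f) w := by
  have : FreeGroup.mk ((a, b) :: L) = FreeGroup.mk [(a, b)] * FreeGroup.mk L := by
    simp [FreeGroup.mul_mk]
  rw [this, map_mul, Units.val_mul, Module.End.mul_apply]
  cases b
  · have : ((rho p (FreeGroup.mk [(a, false)]) : (Module.End ℤ (List α → ℤ))ˣ) :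
      Module.End ℤ (List α → ℤ)) = 1 - p • opN a := by
      simp [rho, FreeGroup.lift_mk]; rfl
    rw [this]
    simp [sg, sub_eq_add_neg]
  · have : ((rho p (FreeGroup.mk [(a, true)]) : (Module.End ℤ (List α → ℤ))ˣ) :
      Module.End ℤ (List α → ℤ)) = 1 + p • opN a := by
      simp [rho, FreeGroup.lift_mk]; rfl
    rw [this]
    simp [sg]

open Classical in
/-- the indicator of the empty word -/
noncomputable def vac {α : Type*} : List α → ℤ := fun w => if w = [] then 1 else 0

theorem rho_word {α : Type*} (p : ℤ) (hp : p ≠ 0) (L : List (α × Bool)) :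
    ∀ (a : α) (b : Bool), FreeGroup.IsReduced ((a, b) :: L) →
    ∃ (t : List α) (n : ℕ), t.head? ≠ some a ∧ 0 < n ∧
      (rho p (FreeGroup.mk ((a, b) :: L))).val vac (a :: t)
        = sg b * n * p * (rho p (FreeGroup.mk ((a, b) :: L))).val vac t ∧
      (rho p (FreeGroup.mk ((a, b) :: L))).val vac t ≠ 0 ∧
      (∀ u : List α, t.length + 1 < u.length →
        (rho p (FreeGroup.mk ((a, b) :: L))).val vac u = 0) ∧
      ∀ u : List α, t.length < u.length → u.head? ≠ some a →
        (rho p (FreeGroup.mk ((a, b) :: L))).val vac u = 0 := by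
  induction L with
  | nil =>
    intro a b _
    have h1 : (rho p (FreeGroup.mk ([] : List (α × Bool)))).val vac = vac := by
      rw [← FreeGroup.one_eq_mk, map_one]; rfl
    refine ⟨[], 1, by simp, one_pos, ?_, ?_, ?_, ?_⟩
    · simp only [rho_cons, h1]
      rw [opN_self _ _ _ (by simp), opN_nil]
      simp [vac]
    · simp only [rho_cons, h1, opN_nil]
      simp [vac]
    · intro u hu
      match u, hu with
      | c :: d :: u, hu =>
        simp only [rho_cons, h1, opN_cons]
        simp only [vac]
        split_ifs <;> simp_all
    · intro u hu hua
      match u, hu with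
      | c :: u, hu =>
        simp only [rho_cons, h1]
        rw [opN_of_head_ne _ _ _ hua]
        simp [vac]
  | cons c L ih =>
    obtain ⟨c, e⟩ := c
    intro a b hr
    rw [FreeGroup.IsReduced, List.isChain_cons_cons] at hr
    obtain ⟨t, n, ht, hn, h1, h2, h3, h4⟩ := ih c e hr.2
    set g := (rho p (FreeGroup.mk ((c, e) :: L))).val vac with hg
    by_cases hac : a = c
    · subst hac
      have hbe : b = e := hr.1 rfl
      subst hbe
      refine ⟨t, n + 1, ht, by omega, ?_, ?_, ?_, ?_⟩
      · rw [rho_cons p a b (_ :: L), rho_cons p a b (_ :: L), ← hg, opN_self _ _ _ ht, opN_of_head_ne _ _ _ ht, h1]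
        push_cast; ring
      · rw [rho_cons p a b (_ :: L), ← hg, opN_of_head_ne _ _ _ ht]
        simpa using h2
      · intro u hu
        rw [rho_cons p a b (_ :: L), ← hg, h3 u hu]
        cases u with
        | nil => simp [opN_nil]
        | cons d u =>
          rw [opN_cons]
          split_ifs with h
          · obtain ⟨rfl, hh⟩ := h
            rw [h4 u (by simp at hu; omega) hh]; simp
          · simp
      · intro u hu hua
        rw [rho_cons p a b (_ :: L), ← hg, opN_of_head_ne _ _ _ hua, h4 u hu hua]
        simp
    · have hh : (c :: t).head? ≠ some a := by simpa using fun h => hac h.symm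
      refine ⟨c :: t, 1, hh, one_pos, ?_, ?_, ?_, ?_⟩
      · rw [rho_cons p a b (_ :: L), rho_cons p a b (_ :: L), ← hg, opN_self _ _ _ hh, opN_of_head_ne _ _ _ hh,
          h3 (a :: c :: t) (by simp)]
        push_cast; ring
      · rw [rho_cons p a b (_ :: L), ← hg, opN_of_head_ne _ _ _ hh, h1]
        have : sg e ≠ 0 := by cases e <;> simp [sg]
        simp [this, hn.ne', hp, h2]
      · intro u hu
        rw [rho_cons p a b (_ :: L), ← hg, h3 u (by simp at hu; omega)]
        cases u with
        | nil => simp [opN_nil]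
        | cons d u =>
          rw [opN_cons, h3 u (by simp at hu; omega)]
          simp
      · intro u hu hua
        rw [rho_cons p a b (_ :: L), ← hg, opN_of_head_ne _ _ _ hua, h3 u (by simpa using hu)]
        simp

theorem rho_injective {α : Type*} (p : ℤ) (hp : p ≠ 0) :
    Function.Injective (rho p : FreeGroup α →* _) := by
  classical
  rw [injective_iff_map_eq_one]
  intro x hx
  by_contra hne
  have hr : FreeGroup.IsReduced x.toWord := FreeGroup.isReduced_toWord
  have hm : FreeGroup.mk x.toWord = x := FreeGroup.mk_toWord
  rcases hL : x.toWord with _ | ⟨⟨a, b⟩, L⟩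
  · exact hne (FreeGroup.toWord_eq_nil_iff.1 hL)
  · rw [hL] at hr hm
    obtain ⟨t, n, ht, hn, h1, h2, -, -⟩ := rho_word p hp L a b hr
    rw [hm, hx] at h1 h2
    have hs : sg b ≠ 0 := by cases b <;> simp [sg]
    have h3 : (sg b * n * p * ((1 : (Module.End ℤ (List α → ℤ))ˣ).val vac t) : ℤ) ≠ 0 := by
      have : (n : ℤ) ≠ 0 := by exact_mod_cast hn.ne'
      exact mul_ne_zero (mul_ne_zero (mul_ne_zero hs this) hp) h2
    rw [← h1] at h3
    simp [vac] at h3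

theorem rho_sub_one {α : Type*} (p : ℤ) (x : FreeGroup α) :
    ∃ Y : Module.End ℤ (List α → ℤ), (rho p x).val - 1 = p • Y := by
  have h : ∀ L : List (α × Bool),
      ∃ Y : Module.End ℤ (List α → ℤ), (rho p (FreeGroup.mk L)).val - 1 = p • Y := by
    intro L
    induction L with
    | nil => exact ⟨0, by rw [← FreeGroup.one_eq_mk, map_one]; simp⟩
    | cons c L ih =>
      obtain ⟨a, b⟩ := c
      obtain ⟨Y, hY⟩ := ih
      refine ⟨Y + sg b • (opN a * (rho p (FreeGroup.mk L)).val), ?_⟩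
      rw [smul_add, ← hY]
      ext f w
      simp only [LinearMap.sub_apply, LinearMap.add_apply, LinearMap.smul_apply, Pi.add_apply,
        Pi.sub_apply, Pi.smul_apply, Module.End.mul_apply, rho_cons, smul_eq_mul]
      ring
  obtain ⟨L, rfl⟩ := Quot.exists_rep x
  exact h L
end Magnus

section Finite

theorem finite_hom (G Q : Type*) [Group G] [Group.FG G] [Group Q] [Finite Q] :
    Finite (G →* Q) := by
  obtain ⟨S, hS⟩ := Group.fg_def.1 (inferInstance : Group.FG G)
  refine Finite.of_injective (fun (f : G →* Q) (s : S) => f s) ?_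
  intro f g h
  refine MonoidHom.eq_of_eqOn_dense hS ?_
  intro s hs
  exact congrFun h ⟨s, hs⟩

theorem exists_shift {G Q : Type*} [Group G] [Group.FG G] [Group Q] [Finite Q]
    (φ : Monoid.End G) (h : G →* Q) :
    ∃ i d : ℕ, 1 ≤ d ∧ ∀ y, h ((φ ^ (i + d)) y) = h ((φ ^ i) y) := by
  have := finite_hom G Q
  obtain ⟨i, j, hij, he⟩ :=
    Finite.exists_ne_map_eq_of_infinite (fun n : ℕ => h.comp (φ ^ n : Monoid.End G))
  rcases lt_or_gt_of_ne hij with hl | hl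
  · refine ⟨i, j - i, by omega, fun y => ?_⟩
    rw [show i + (j - i) = j by omega]
    exact (DFunLike.congr_fun he y).symm
  · refine ⟨j, i - j, by omega, fun y => ?_⟩
    rw [show j + (i - j) = i by omega]
    exact DFunLike.congr_fun he y

theorem pow_apply_add {G : Type*} [Group G] (φ : Monoid.End G) (m n : ℕ) (x : G) :
    (φ ^ (m + n)) x = (φ ^ m) ((φ ^ n) x) := by
  rw [pow_add]; rfl

theorem pow_mul_fix {G : Type*} [Group G] (φ : Monoid.End G) {n : ℕ} {x : G}
    (h : (φ ^ n) x = x) (k : ℕ) : (φ ^ (n * k)) x = x := by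
  induction k with
  | zero => rfl
  | succ k ih => rw [Nat.mul_succ, pow_apply_add, h, ih]

end Finite

section Filtration
variable {K : Type*} [Group K]

/-- augmentation -/
noncomputable def aug : MonoidAlgebra ℤ K →ₐ[ℤ] ℤ := MonoidAlgebra.lift ℤ ℤ K 1

/-- the ideal `(p, I)` of the integral group ring, as an additive subgroup -/
noncomputable def J (K : Type*) [Group K] (p : ℤ) : Submodule ℤ (MonoidAlgebra ℤ K) where
  carrier := {a | p ∣ aug a}
  add_mem' := by
    intro a b ha hb
    simpa using dvd_add ha hb
  zero_mem' := by simp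
  smul_mem' := by
    intro c a ha
    simpa using ha.mul_left c

theorem mem_J {p : ℤ} {a : MonoidAlgebra ℤ K} : a ∈ J K p ↔ p ∣ aug a := Iff.rfl

/-- the group element in the group ring -/
noncomputable abbrev el (k : K) : MonoidAlgebra ℤ K := MonoidAlgebra.of ℤ K k

theorem aug_el (k : K) : aug (el k) = 1 := by
  simp [aug, el]

theorem el_sub_mem (p : ℤ) (x y : K) : el x - el y ∈ J K p := by
  rw [mem_J, map_sub, aug_el, aug_el]; simp

theorem p_mem (p : ℤ) : (p • (1 : MonoidAlgebra ℤ K)) ∈ J K p := by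
  rw [mem_J]; simp

theorem p_smul_mem (p : ℤ) (m : ℕ) {a : MonoidAlgebra ℤ K} (ha : a ∈ J K p ^ m) :
    p • a ∈ J K p ^ (m + 1) := by
  rw [pow_succ]
  have := Submodule.mul_mem_mul ha (p_mem (K := K) p)
  rwa [mul_smul_comm, mul_one] at this

/-- The induced endomorphisms of the group ring. -/
noncomputable def P (φ : Monoid.End K) (n : ℕ) : MonoidAlgebra ℤ K →ₐ[ℤ] MonoidAlgebra ℤ K :=
  MonoidAlgebra.lift ℤ (MonoidAlgebra ℤ K) K ((MonoidAlgebra.of ℤ K).comp (φ ^ n : Monoid.End K))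

theorem P_el (φ : Monoid.End K) (n : ℕ) (k : K) : P φ n (el k) = el ((φ ^ n) k) := by
  rw [P, MonoidAlgebra.lift_of]; rfl

theorem P_add (φ : Monoid.End K) (m n : ℕ) (a : MonoidAlgebra ℤ K) :
    P φ (m + n) a = P φ m (P φ n a) := by
  induction a using MonoidAlgebra.induction_on with
  | of k => exact (P_el φ _ k).trans (by
      rw [pow_apply_add, ← P_el, ← P_el])
  | add x y hx hy => simp only [map_add, hx, hy]
  | smul r x hx => simp only [map_smul, hx]

theorem P_zero (φ : Monoid.End K) (a : MonoidAlgebra ℤ K) : P φ 0 a = a := by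
  induction a using MonoidAlgebra.induction_on with
  | of k => exact (P_el φ _ k)
  | add x y hx hy => simp only [map_add, hx, hy]
  | smul r x hx => simp only [map_smul, hx]

theorem aug_P (φ : Monoid.End K) (n : ℕ) (a : MonoidAlgebra ℤ K) : aug (P φ n a) = aug a := by
  induction a using MonoidAlgebra.induction_on with
  | of k => 
    change aug (P φ n (el k)) = aug (el k)
    rw [P_el, aug_el, aug_el]
  | add x y hx hy => simp only [map_add, hx, hy]
  | smul r x hx => simp only [map_smul, hx]

theorem P_mem (p : ℤ) (φ : Monoid.End K) (n m : ℕ) {a : MonoidAlgebra ℤ K} (ha : a ∈ J K p ^ m) :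
    P φ n a ∈ J K p ^ m := by
  have h : (J K p).map (P φ n).toLinearMap ≤ J K p := by
    rintro _ ⟨a, ha, rfl⟩
    change p ∣ aug (P φ n a)
    rw [aug_P]
    exact ha
  have h2 : (J K p ^ m).map (P φ n).toLinearMap ≤ J K p ^ m := by
    rw [Submodule.map_pow]
    gcongr
  exact h2 ⟨a, ha, rfl⟩

theorem P_mul_fix (φ : Monoid.End K) {n : ℕ} {v : MonoidAlgebra ℤ K}
    (h : P φ n v = v) (k : ℕ) : P φ (n * k) v = v := by
  induction k with
  | zero => exact P_zero φ v
  | succ k ih => rw [Nat.mul_succ, P_add, h, ih]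

theorem P_comm_fix (φ : Monoid.End K) {n : ℕ} {v : MonoidAlgebra ℤ K}
    (h : P φ n v = v) (k : ℕ) : P φ n (P φ k v) = P φ k v := by
  rw [← P_add, add_comm, P_add, h]

/-- the homomorphism `k ↦ k - 1 mod J²` -/
noncomputable def theta (p : ℤ) :
    K →* Multiplicative (MonoidAlgebra ℤ K ⧸ (J K p ^ 2)) where
  toFun k := Multiplicative.ofAdd (Submodule.Quotient.mk (el k - 1))
  map_one' := by
    rw [show el (1 : K) - 1 = 0 by rw [el, map_one, sub_self]]; rfl
  map_mul' k l := by
    rw [← ofAdd_add, ← Submodule.Quotient.mk_add]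
    congr 1
    rw [Submodule.Quotient.eq]
    have : el (k * l) - 1 - (el k - 1 + (el l - 1)) = (el k - el 1) * (el l - el (1 : K)) := by
      simp only [el, map_mul, map_one]
      noncomm_ring
    rw [this, pow_two]
    exact Submodule.mul_mem_mul (el_sub_mem p _ _) (el_sub_mem p _ _)

theorem theta_range_finite [Group.FG K] (p : ℕ) (hp : 0 < p) :
    Finite (theta (K := K) (p : ℤ)).range := by
  have hfg : Group.FG (theta (K := K) (p : ℤ)).range := inferInstance
  refine CommGroup.finite_of_fg_isMulTorsion _ ?_
  rintro ⟨_, k, rfl⟩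
  rw [isOfFinOrder_iff_pow_eq_one]
  refine ⟨p, hp, ?_⟩
  apply Subtype.ext
  change (theta (p : ℤ) k) ^ p = 1
  change Multiplicative.ofAdd (p • (Submodule.Quotient.mk (el k - 1) : MonoidAlgebra ℤ K ⧸ _)) = 1
  rw [ofAdd_eq_one, ← Submodule.Quotient.mk_smul, Submodule.Quotient.mk_eq_zero]
  have := p_smul_mem (K := K) (p : ℤ) 1 (a := el k - 1) (by
    rw [pow_one]
    have := el_sub_mem (p : ℤ) k 1
    rwa [el, el, map_one] at this)
  simpa using this

theorem exists_shift_J [Group.FG K] (p : ℕ) (hp : 0 < p) (φ : Monoid.End K) :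
    ∃ i d : ℕ, 1 ≤ d ∧ ∀ m : ℕ, ∀ a ∈ J K (p : ℤ) ^ (m + 1),
      P φ (i + d) a - P φ i a ∈ J K (p : ℤ) ^ (m + 2) := by
  have := theta_range_finite (K := K) p hp
  obtain ⟨i, d, hd, h⟩ := exists_shift φ (theta (K := K) (p : ℤ)).rangeRestrict
  refine ⟨i, d, hd, ?_⟩
  have h0 : ∀ a : MonoidAlgebra ℤ K, P φ (i + d) a - P φ i a ∈
      J K (p : ℤ) ^ 2 := by
    intro a
    induction a using MonoidAlgebra.induction_on with
    | of k =>
      change P φ (i + d) (el k) - P φ i (el k) ∈ _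
      rw [P_el, P_el]
      have h1 := congrArg Subtype.val (h k)
      have h2 : (Submodule.Quotient.mk (el ((φ ^ (i + d)) k) - 1) :
        MonoidAlgebra ℤ K ⧸ (J K (p : ℤ) ^ 2))
        = Submodule.Quotient.mk (el ((φ ^ i) k) - 1) := h1
      rw [Submodule.Quotient.eq] at h2
      simpa using h2
    | add x y hx hy =>
      have := add_mem hx hy
      simp only [map_add]
      convert this using 1
      abel
    | smul r x hx =>
      simp only [map_smul, ← smul_sub]
      exact Submodule.smul_mem _ _ hx
  intro m
  induction m with
  | zero => intro a _; exact h0 a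
  | succ m ih =>
    intro a ha
    rw [pow_succ] at ha
    induction ha using Submodule.mul_induction_on' with
    | mem_mul_mem b hb c hc =>
      have e : P φ (i + d) (b * c) - P φ i (b * c)
        = (P φ (i + d) b - P φ i b) * P φ (i + d) c
          + P φ i b * (P φ (i + d) c - P φ i c) := by
        simp only [map_mul]; noncomm_ring
      rw [e]
      refine add_mem ?_ ?_
      · rw [pow_succ]
        refine Submodule.mul_mem_mul (ih b hb) ?_
        simpa using P_mem (p : ℤ) φ (i + d) 1 (a := c) (by simpa using hc)
      · rw [show m + 1 + 2 = (m + 1) + 2 from rfl, pow_add]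
        exact Submodule.mul_mem_mul (P_mem _ _ _ _ hb) (h0 c)
    | add x hx y hy hx' hy' =>
      have := add_mem hx' hy'
      simp only [map_add]
      convert this using 1
      abel

/-- On periodic vectors the shift by `d` is the identity modulo the next filtration step. -/
theorem shift_periodic (p : ℤ) (φ : Monoid.End K) {i d : ℕ}
    (h : ∀ m : ℕ, ∀ a ∈ J K p ^ (m + 1),
      P φ (i + d) a - P φ i a ∈ J K p ^ (m + 2))
    {n : ℕ} (hn : 1 ≤ n) {m : ℕ} {v : MonoidAlgebra ℤ K} (hv : v ∈ J K p ^ (m + 1))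
    (hf : P φ n v = v) :
    P φ d v - v ∈ J K p ^ (m + 2) := by
  have h1 := h m (P φ (n * i - i) v) (P_mem _ _ _ _ hv)
  have h2 : i + (n * i - i) = n * i := by
    have : i ≤ n * i := Nat.le_mul_of_pos_left _ hn
    omega
  rw [add_comm i d, P_add, ← P_add φ i, h2, P_mul_fix φ hf] at h1
  exact h1

theorem shift_periodic_mul (p : ℤ) (φ : Monoid.End K) {i d : ℕ}
    (h : ∀ m : ℕ, ∀ a ∈ J K p ^ (m + 1),
      P φ (i + d) a - P φ i a ∈ J K p ^ (m + 2))
    {n : ℕ} (hn : 1 ≤ n) {m : ℕ} {v : MonoidAlgebra ℤ K} (hv : v ∈ J K p ^ (m + 1))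
    (hf : P φ n v = v) (k : ℕ) :
    P φ (d * k) v - v ∈ J K p ^ (m + 2) := by
  induction k with
  | zero => simp [P_zero]
  | succ k ih =>
    have h1 := shift_periodic p φ h hn (P_mem p φ (d * k) _ hv) (P_comm_fix φ hf _)
    rw [← P_add] at h1
    rw [Nat.mul_succ, add_comm (d * k)]
    simpa using add_mem h1 ih

theorem shift_p_pow (p : ℕ) (φ : Monoid.End K) {i d : ℕ}
    (h : ∀ m : ℕ, ∀ a ∈ J K (p : ℤ) ^ (m + 1),
      P φ (i + d) a - P φ i a ∈ J K (p : ℤ) ^ (m + 2))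
    {n : ℕ} (hn : 1 ≤ n) (a : ℕ) : ∀ {m : ℕ} {v : MonoidAlgebra ℤ K}, v ∈ J K (p : ℤ) ^ (m + 1) →
    P φ n v = v →
    P φ (d * p ^ a) v - v ∈ J K (p : ℤ) ^ (m + a + 2) := by
  induction a with
  | zero =>
    intro m v hv hf
    simpa using shift_periodic (p : ℤ) φ h hn hv hf
  | succ a ih =>
    intro m v hv hf
    have hw := ih hv hf
    set D := d * p ^ a with hD
    set w := P φ D v - v with hw'
    have hwf : P φ n w = w := by
      rw [hw', map_sub, P_comm_fix φ hf, hf]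
    have key : ∀ k : ℕ, P φ (D * k) v - v - (k : ℤ) • w ∈
        J K (p : ℤ) ^ (m + a + 3) := by
      intro k
      induction k with
      | zero => simp [P_zero]
      | succ k ihk =>
        have h1 := shift_periodic_mul (p : ℤ) φ h hn (m := m + a + 1) (v := w) hw hwf (p ^ a * k)
        rw [← mul_assoc, ← hD] at h1
        have h2 := add_mem ihk h1
        convert h2 using 1
        rw [Nat.mul_succ, P_add]
        have : P φ D v = w + v := by rw [hw']; abel
        rw [this, map_add]
        push_cast
        rw [add_smul, one_smul]
        abel
    have h3 := add_mem (key p) (p_smul_mem (p : ℤ) _ hw)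
    rw [pow_succ p a, ← mul_assoc, ← hD]
    rw [sub_add_cancel] at h3
    exact h3

theorem J_map_dvd {α : Type*} (p : ℤ) (ι : K →* FreeGroup α) (m : ℕ) :
    ∀ a ∈ J K p ^ m,
    ∃ Y : Module.End ℤ (List α → ℤ),
      MonoidAlgebra.lift ℤ _ K ((Units.coeHom _).comp ((rho p).comp ι)) a = p ^ m • Y := by
  set Ψ := MonoidAlgebra.lift ℤ _ K ((Units.coeHom _).comp ((rho (α := α) p).comp ι)) with hΨ
  have h0 : ∀ a : MonoidAlgebra ℤ K, ∃ Y : Module.End ℤ (List α → ℤ),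
      Ψ a - aug a • 1 = p • Y := by
    intro a
    induction a using MonoidAlgebra.induction_on with
    | of k =>
      obtain ⟨Y, hY⟩ := rho_sub_one p (ι k)
      refine ⟨Y, ?_⟩
      rw [← hY]
      change Ψ (MonoidAlgebra.of ℤ K k) - aug (el k) • 1 = _
      rw [aug_el, hΨ, MonoidAlgebra.lift_of, one_smul]
      rfl
    | add x y hx hy =>
      obtain ⟨X, hX⟩ := hx
      obtain ⟨Y, hY⟩ := hy
      refine ⟨X + Y, ?_⟩
      rw [smul_add, ← hX, ← hY, map_add, map_add, add_smul]
      abel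
    | smul r x hx =>
      obtain ⟨X, hX⟩ := hx
      refine ⟨r • X, ?_⟩
      rw [smul_comm, ← hX, map_smul, map_smul, smul_sub, smul_assoc]
  have h1 : ∀ a ∈ J K p,
      ∃ Y : Module.End ℤ (List α → ℤ), Ψ a = p • Y := by
    intro a ha
    obtain ⟨c, hc⟩ := mem_J.1 ha
    obtain ⟨Y, hY⟩ := h0 a
    refine ⟨Y + c • 1, ?_⟩
    rw [smul_add, ← hY, hc, mul_smul]
    abel
  induction m with
  | zero => intro a _; exact ⟨Ψ a, by simp⟩
  | succ m ih =>
    intro a ha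
    rw [pow_succ] at ha
    induction ha using Submodule.mul_induction_on' with
    | mem_mul_mem b hb c hc =>
      obtain ⟨X, hX⟩ := ih b hb
      obtain ⟨Y, hY⟩ := h1 c hc
      exact ⟨X * Y, by rw [map_mul, hX, hY, smul_mul_smul_comm, pow_succ]⟩
    | add x hx y hy hx' hy' =>
      obtain ⟨X, hX⟩ := hx'
      obtain ⟨Y, hY⟩ := hy'
      exact ⟨X + Y, by rw [map_add, hX, hY, smul_add]⟩

theorem eq_of_mem_J_pow {α : Type*} (p : ℕ) (hp : 2 ≤ p) (ι : K →* FreeGroup α)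
    (hι : Function.Injective ι) (x y : K)
    (h : ∀ t : ℕ, ∃ m, t ≤ m ∧ el x - el y ∈ J K (p : ℤ) ^ m) :
    x = y := by
  apply hι
  apply rho_injective (p : ℤ) (by exact_mod_cast (by omega : p ≠ 0))
  apply Units.ext
  rw [← sub_eq_zero]
  ext f w
  set c := ((rho (p : ℤ) (ι x)).val - (rho (p : ℤ) (ι y)).val) f w with hc
  change c = 0
  obtain ⟨m, hm, hmem⟩ := h c.natAbs
  obtain ⟨Y, hY⟩ := J_map_dvd (p : ℤ) ι m _ hmem
  rw [map_sub, MonoidAlgebra.lift_of, MonoidAlgebra.lift_of] at hY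
  have hY2 : (rho (p : ℤ) (ι x)).val - (rho (p : ℤ) (ι y)).val = (p : ℤ) ^ m • Y := hY
  rw [hY2] at hc
  have hdvd : (p : ℤ) ^ m ∣ c := ⟨Y f w, hc⟩
  refine Int.eq_zero_of_abs_lt_dvd hdvd ?_
  have h1 : c.natAbs < p ^ m := lt_of_le_of_lt hm (Nat.lt_pow_self (by omega))
  rw [Int.abs_eq_natAbs]
  exact_mod_cast h1

theorem p_power_period {α : Type*} [Group.FG K] (p : ℕ) (hp : p.Prime) (ι : K →* FreeGroup α)
    (hι : Function.Injective ι) (φ : Monoid.End K) :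
    ∃ d : ℕ, 1 ≤ d ∧ ∀ x : K, ∀ n, 1 ≤ n → (φ ^ n) x = x → ∃ b, (φ ^ (d * p ^ b)) x = x := by
  obtain ⟨i, d, hd, h⟩ := exists_shift_J (K := K) p hp.pos φ
  refine ⟨d, hd, fun x n hn hx => ?_⟩
  obtain ⟨b, n', hpn, rfl⟩ := Nat.exists_eq_pow_mul_and_not_dvd (n := n) (by omega) p hp.ne_one
  refine ⟨b, eq_of_mem_J_pow p hp.two_le ι hι _ _ fun t => ?_⟩
  have hn' : 0 < n' := Nat.pos_of_ne_zero (by rintro rfl; simp at hpn)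
  have hcop : Nat.Coprime p n' := (Nat.Prime.coprime_iff_not_dvd hp).2 hpn
  set s := n'.totient * t with hs
  have hst : t ≤ s := Nat.le_mul_of_pos_left _ (Nat.totient_pos.2 hn')
  have hmod : p ^ s ≡ 1 [MOD n'] := by
    rw [hs, pow_mul]
    simpa using (Nat.ModEq.pow_totient hcop).pow t
  have hone : 1 ≤ p ^ s := Nat.one_le_pow _ _ hp.pos
  obtain ⟨q, hq⟩ := (Nat.modEq_iff_dvd' hone).1 hmod.symm
  have hps : p ^ s = n' * q + 1 := by omega
  have e : (φ ^ (d * p ^ (b + s))) x = (φ ^ (d * p ^ b)) x := by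
    have : d * p ^ (b + s) = d * p ^ b + (p ^ b * n') * (d * q) := by
      rw [pow_add, hps]; ring
    rw [this, pow_apply_add, pow_mul_fix φ hx]
  have hv : el x - el 1 ∈ J K (p : ℤ) ^ (0 + 1) := by
    simpa using el_sub_mem (p : ℤ) x 1
  have hf : P φ (p ^ b * n') (el x - el 1) = el x - el 1 := by
    rw [map_sub, P_el, P_el, hx, map_one]
  have hfin := shift_p_pow p φ h hn (b + s) hv hf
  refine ⟨0 + (b + s) + 2, by omega, ?_⟩
  convert hfin using 1
  rw [map_sub, P_el, P_el, e, map_one]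
  abel

theorem uniform_period_residual {α : Type*} [Group.FG K] (ι : K →* FreeGroup α)
    (hι : Function.Injective ι) (φ : Monoid.End K) :
    ∃ R : ℕ, 1 ≤ R ∧ ∀ x : K, ∀ n, 1 ≤ n → (φ ^ n) x = x → (φ ^ R) x = x := by
  obtain ⟨d, hd, h2⟩ := p_power_period 2 Nat.prime_two ι hι φ
  obtain ⟨e, he, h3⟩ := p_power_period 3 Nat.prime_three ι hι φ
  refine ⟨d * e, Nat.mul_pos hd he, fun x n hn hx => ?_⟩
  obtain ⟨b, hb⟩ := h2 x n hn hx
  obtain ⟨c, hc⟩ := h3 x n hn hx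
  have per : ∀ k, (φ ^ k) x = x ↔ Function.IsPeriodicPt φ k x := by
    intro k
    have : ((φ ^ k : Monoid.End K) : K → K) = φ^[k] := Monoid.End.coe_pow K φ k
    rw [this]; rfl
  have hb' : Function.IsPeriodicPt φ (d * e * 2 ^ b) x := by
    rw [← per, show d * e * 2 ^ b = d * 2 ^ b * e by ring]
    exact pow_mul_fix φ hb e
  have hc' : Function.IsPeriodicPt φ (d * e * 3 ^ c) x := by
    rw [← per, show d * e * 3 ^ c = e * 3 ^ c * d by ring]
    exact pow_mul_fix φ hc d
  have hg := hb'.gcd hc'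
  rw [Nat.gcd_mul_left, Nat.Coprime.gcd_eq_one (Nat.Coprime.pow b c (by norm_num)), mul_one] at hg
  exact (per _).2 hg

end Filtration

theorem main {G : Type*} [Group G] [Group.FG G]
    (F : Subgroup G) [IsFreeGroup ↥F] [F.FiniteIndex] (φ : Monoid.End G) :
    ∃ R, 1 ≤ R ∧ ∀ x n, 1 ≤ n → (φ ^ n) x = x → (φ ^ R) x = x := by
  have := finite_hom G (Equiv.Perm (G ⧸ F))
  set K : Subgroup G := ⨅ f : G →* Equiv.Perm (G ⧸ F), f.ker with hK
  have hKfi : K.FiniteIndex := by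
    apply Subgroup.finiteIndex_iInf
    intro f
    infer_instance
  have hKn : K.Normal := Subgroup.normal_iInf_normal fun f => inferInstance
  have hKF : K ≤ F := by
    refine (iInf_le _ (MulAction.toPermHom G (G ⧸ F))).trans ?_
    rw [← Subgroup.normalCore_eq_ker]
    exact Subgroup.normalCore_le F
  have hKφ : ∀ x ∈ K, φ x ∈ K := by
    intro x hx
    rw [hK, Subgroup.mem_iInf] at hx ⊢
    intro f
    exact hx (f.comp φ)
  let ψ : Monoid.End K := ((φ : G →* G).comp K.subtype).codRestrict K fun x => hKφ x x.2
  have hψ : ∀ (n : ℕ) (x : K), (((ψ ^ n) x : K) : G) = (φ ^ n) x := by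
    intro n
    induction n with
    | zero => intro x; rfl
    | succ n ih => 
      intro x
      rw [pow_apply_add, pow_apply_add, ih]
      rfl
  let ι : K →* FreeGroup (IsFreeGroup.Generators F) :=
    (IsFreeGroup.toFreeGroup F).toMonoidHom.comp (Subgroup.inclusion hKF)
  have hι : Function.Injective ι :=
    (IsFreeGroup.toFreeGroup F).injective.comp (Subgroup.inclusion_injective hKF)
  obtain ⟨R, hR, hR'⟩ := uniform_period_residual ι hι ψ
  have hQ : Finite (G ⧸ K) := inferInstance
  obtain ⟨i, d, hd, h⟩ := exists_shift φ (QuotientGroup.mk' K)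
  refine ⟨d * R, Nat.mul_pos hd hR, fun x n hn hx => ?_⟩
  have h1 : ∀ y, (φ ^ n) y = y → QuotientGroup.mk' K ((φ ^ d) y) = QuotientGroup.mk' K y := by
    intro y hy
    have h1 := h ((φ ^ (n * i - i)) y)
    have h2 : i + (n * i - i) = n * i := by
      have : i ≤ n * i := Nat.le_mul_of_pos_left _ hn
      omega
    rw [add_comm i d, pow_apply_add, ← pow_apply_add φ i, h2, pow_mul_fix φ hy] at h1
    exact h1
  have h2' : ∀ j, QuotientGroup.mk' K ((φ ^ (d * j)) x) = QuotientGroup.mk' K x := by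
    intro j
    induction j with
    | zero => rfl
    | succ j ih =>
      rw [Nat.mul_succ, add_comm, pow_apply_add, h1, ih]
      rw [← pow_apply_add, add_comm, pow_apply_add, hx]
  have h2 := h2' R
  have h3 : x⁻¹ * (φ ^ (d * R)) x ∈ K := QuotientGroup.eq.1 h2.symm
  set T := φ ^ (d * R) with hT
  set k : K := ⟨x⁻¹ * T x, h3⟩ with hk
  have hkp : (ψ ^ n) k = k := by
    apply Subtype.ext
    rw [hψ]
    simp only [hk, map_mul, map_inv, hx]
    rw [hT, ← pow_apply_add, add_comm, pow_apply_add, hx]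
  have hTk : T (x⁻¹ * T x) = x⁻¹ * T x := by
    have := hR' k n hn hkp
    have := pow_mul_fix ψ this d
    have := congrArg Subtype.val this
    rw [hψ, mul_comm R d] at this
    exact this
  have hpow : ∀ j : ℕ, (T ^ j) x = x * (x⁻¹ * T x) ^ j := by
    intro j
    induction j with
    | zero => simp
    | succ j ih =>
      rw [add_comm, pow_apply_add, ih, map_mul, pow_one, map_pow, hTk, pow_add, pow_one,
        ← mul_assoc]
      simp
  have h4 : (T ^ n) x = x := by
    rw [hT, ← pow_mul, mul_comm]
    exact pow_mul_fix φ hx _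
  have h5 : (x⁻¹ * T x) ^ n = 1 := by
    have := hpow n
    rw [h4] at this
    simpa using this.symm
  have h6 : k ^ n = 1 := Subtype.ext h5
  have h7 : ι k ^ n = 1 := by rw [← map_pow, h6, map_one]
  have h8 : ι k = 1 := by
    have : Function.Injective fun y : FreeGroup (IsFreeGroup.Generators F) => y ^ n :=
      pow_left_injective (by omega)
    apply this
    simpa using h7
  have h9 : k = 1 := hι (by rw [h8, map_one])
  have h10 : x⁻¹ * T x = 1 := congrArg Subtype.val h9
  exact (inv_mul_eq_one.1 h10).symm
end VFree

/-- if `G` is a finitely generated group with a free subgroup of finite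
index and `φ` is an endomorphism of `G`, then there is a constant `R_φ ≥ 1` such that
`φ^(R_φ)(x) = x` for all `x ∈ Per(φ)`, i.e. every `x ∈ Per(φ)` has period at most
`R_φ`. -/
theorem exists_uniform_period_of_virtually_free {G : Type*} [Group G] [Group.FG G]
    (F : Subgroup G) [IsFreeGroup ↥F] [F.FiniteIndex] (φ : Monoid.End G) :
    ∃ R, 1 ≤ R ∧ ∀ x ∈ perSet φ, (φ ^ R) x = x := by
  obtain ⟨R, hR, h⟩ := VFree.main F φ
  exact ⟨R, hR, fun x ⟨n, hn, hx⟩ => h x n hn hx⟩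
end

section
/- Let F be a free group and let K_1, K_2 be finitely generated nontrivial subgroups of F. Then rk(K_1 ∩ K_2) ≤ (rk(K_1) − 1)(rk(K_2) − 1) + 1 (the strengthened Hanna Neumann Conjecture, proved by Friedman and Mineyev). -/
/-- The rank of a subgroup: the minimal cardinality of a finite generating set. -/
noncomputable def Subgroup.rk {G : Type*} [Group G] (H : Subgroup G) : ℕ :=
  sInf {n : ℕ | ∃ S : Finset G, Subgroup.closure (S : Set G) = H ∧ S.card = n}


namespace HNC

open scoped Pointwise

theorem exists_ne_of_finsum {ι : Type*} {f : ι → ℚ} (h : ∑ᶠ i, f i ≠ 0) : ∃ i, f i ≠ 0 := by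
  by_contra hcon
  push Not at hcon
  exact h (finsum_eq_zero_of_forall_eq_zero hcon)

section Conv

variable {G E : Type*} [Group G] [LinearOrder G] [LinearOrder E] [MulAction G E]

/-- Finiteness of the set of decompositions of `e` in terms of the two sets. -/
theorem finite_decomp [IsOrderedCancelSMul G E] {s : Set G} {t : Set E} (hs : s.IsPWO)
    (ht : t.IsPWO) (e : E) : {g | g ∈ s ∧ g⁻¹ • e ∈ t}.Finite := by
  refine ((Set.SMulAntidiagonal.finite_of_isPWO hs ht e).image Prod.fst).subset ?_
  rintro g ⟨h1, h2⟩
  exact ⟨(g, g⁻¹ • e), ⟨h1, h2, by simp⟩, rfl⟩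

variable [IsOrderedCancelSMul G E]

theorem conv_support_finite (a : HahnSeries G ℚ) (v : HahnSeries E ℚ) (e : E) :
    (Function.support fun g => a.coeff g * v.coeff (g⁻¹ • e)).Finite := by
  refine (finite_decomp a.isPWO_support v.isPWO_support e).subset ?_
  intro g hg
  simp only [Function.mem_support, ne_eq, mul_eq_zero, not_or] at hg
  exact hg

/-- Convolution of a series on `G` with a series on a `G`-set `E`. -/
noncomputable def conv (a : HahnSeries G ℚ) (v : HahnSeries E ℚ) : HahnSeries E ℚ where
  coeff e := ∑ᶠ g, a.coeff g * v.coeff (g⁻¹ • e)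
  isPWO_support' := by
    refine (a.isPWO_support.smul v.isPWO_support).mono ?_
    intro e he
    obtain ⟨g, hg⟩ := exists_ne_of_finsum he
    simp only [ne_eq, mul_eq_zero, not_or] at hg
    exact ⟨g, hg.1, g⁻¹ • e, hg.2, by simp⟩

theorem conv_coeff (a : HahnSeries G ℚ) (v : HahnSeries E ℚ) (e : E) :
    (conv a v).coeff e = ∑ᶠ g, a.coeff g * v.coeff (g⁻¹ • e) := rfl

theorem conv_support (a : HahnSeries G ℚ) (v : HahnSeries E ℚ) :
    (conv a v).support ⊆ a.support • v.support := by
  intro e he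
  obtain ⟨g, hg⟩ := exists_ne_of_finsum he
  simp only [ne_eq, mul_eq_zero, not_or] at hg
  exact ⟨g, hg.1, g⁻¹ • e, hg.2, by simp⟩

theorem conv_add (a : HahnSeries G ℚ) (v w : HahnSeries E ℚ) :
    conv a (v + w) = conv a v + conv a w := by
  ext e
  simp only [conv_coeff, HahnSeries.coeff_add, mul_add]
  exact finsum_add_distrib (conv_support_finite a v e) (conv_support_finite a w e)

theorem add_conv (a b : HahnSeries G ℚ) (v : HahnSeries E ℚ) :
    conv (a + b) v = conv a v + conv b v := by
  ext e
  simp only [conv_coeff, HahnSeries.coeff_add, add_mul]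
  exact finsum_add_distrib (conv_support_finite a v e) (conv_support_finite b v e)

theorem conv_zero (a : HahnSeries G ℚ) : conv a (0 : HahnSeries E ℚ) = 0 := by
  ext e; simp [conv_coeff]

theorem zero_conv (v : HahnSeries E ℚ) : conv (0 : HahnSeries G ℚ) v = 0 := by
  ext e; simp [conv_coeff]

theorem single_conv_coeff (g : G) (c : ℚ) (v : HahnSeries E ℚ) (e : E) :
    (conv (HahnSeries.single g c) v).coeff e = c * v.coeff (g⁻¹ • e) := by
  rw [conv_coeff, finsum_eq_single _ g]
  · simp
  · intro h hh
    simp [HahnSeries.coeff_single_of_ne hh]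

theorem single_conv_single (g : G) (c : ℚ) (e : E) (d : ℚ) :
    conv (HahnSeries.single g c) (HahnSeries.single e d) = HahnSeries.single (g • e) (c * d) := by
  ext e'
  rw [single_conv_coeff]
  by_cases h : e' = g • e
  · subst h; simp
  · rw [HahnSeries.coeff_single_of_ne h, HahnSeries.coeff_single_of_ne, mul_zero]
    rintro h'
    exact h (by rw [← h']; simp)

theorem one_conv (v : HahnSeries E ℚ) : conv (HahnSeries.single (1 : G) (1 : ℚ)) v = v := by
  ext e; rw [single_conv_coeff]; simp

theorem conv_one [IsOrderedCancelSMul G G] (a : HahnSeries G ℚ) :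
    conv a (HahnSeries.single (1 : G) (1 : ℚ)) = a := by
  ext e
  rw [conv_coeff, finsum_eq_single _ e]
  · simp
  · intro h hh
    rw [HahnSeries.coeff_single_of_ne, mul_zero]
    rw [smul_eq_mul, ne_eq, inv_mul_eq_one]
    exact hh

theorem conv_assoc [IsOrderedCancelSMul G G] (a b : HahnSeries G ℚ) (v : HahnSeries E ℚ) :
    conv (conv a b) v = conv a (conv b v) := by
  ext e
  have hA := finite_decomp a.isPWO_support (b.isPWO_support.smul v.isPWO_support) e
  have hB := finite_decomp (a.isPWO_support.smul b.isPWO_support) v.isPWO_support e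
  have h1 : (conv (conv a b) v).coeff e = ∑ g ∈ hB.toFinset, ∑ h ∈ hA.toFinset,
      a.coeff h * b.coeff (h⁻¹ * g) * v.coeff (g⁻¹ • e) := by
    rw [conv_coeff, finsum_eq_sum_of_support_subset (s := hB.toFinset)]
    · refine Finset.sum_congr rfl fun g _ => ?_
      rw [← Finset.sum_mul]
      by_cases hv : v.coeff (g⁻¹ • e) = 0
      · simp [hv]
      · congr 1
        rw [conv_coeff]
        refine finsum_eq_sum_of_support_subset _ ?_
        intro h hh
        simp only [Function.mem_support, ne_eq, mul_eq_zero, not_or, smul_eq_mul] at hh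
        simp only [Set.Finite.coe_toFinset, Set.mem_ofPred_eq]
        exact ⟨hh.1, h⁻¹ * g, hh.2, g⁻¹ • e, hv, by simp [mul_smul]⟩
    · intro g hg
      simp only [Function.mem_support, ne_eq, mul_eq_zero, not_or] at hg
      simp only [Set.Finite.coe_toFinset, Set.mem_ofPred_eq]
      exact ⟨conv_support a b hg.1, hg.2⟩
  have h2 : (conv a (conv b v)).coeff e = ∑ h ∈ hA.toFinset, ∑ g ∈ hB.toFinset,
      a.coeff h * b.coeff (h⁻¹ * g) * v.coeff (g⁻¹ • e) := by
    rw [conv_coeff, finsum_eq_sum_of_support_subset (s := hA.toFinset)]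
    · refine Finset.sum_congr rfl fun h _ => ?_
      simp only [mul_assoc]
      rw [← Finset.mul_sum]
      by_cases ha : a.coeff h = 0
      · simp [ha]
      · congr 1
        rw [conv_coeff, ← finsum_comp_equiv (f := fun g => b.coeff g * v.coeff (g⁻¹ • h⁻¹ • e))
          (Equiv.mulLeft h⁻¹)]
        have : ∀ g : G, ((Equiv.mulLeft h⁻¹) g)⁻¹ • h⁻¹ • e = g⁻¹ • e := by
          intro g; simp [mul_smul]
        simp only [this]
        refine finsum_eq_sum_of_support_subset _ ?_
        intro g hg
        simp only [Function.mem_support, ne_eq, mul_eq_zero, not_or] at hg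
        simp only [Set.Finite.coe_toFinset, Set.mem_ofPred_eq]
        exact ⟨⟨h, ha, h⁻¹ * g, hg.1, by simp⟩, hg.2⟩
    · intro h hh
      simp only [Function.mem_support, ne_eq, mul_eq_zero, not_or] at hh
      simp only [Set.Finite.coe_toFinset, Set.mem_ofPred_eq]
      exact ⟨hh.1, conv_support b v hh.2⟩
  rw [h1, h2, Finset.sum_comm]

theorem prod_le_prod_of_sublistForall₂ [IsOrderedCancelSMul G G] {l₁ l₂ : List G}
    (h : List.SublistForall₂ (· ≤ ·) l₁ l₂) (h1 : ∀ x ∈ l₂, 1 ≤ x) : l₁.prod ≤ l₂.prod := by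
  induction h with
  | nil =>
    rename_i l
    induction l with
    | nil => simp
    | cons x l ih =>
      rw [List.prod_cons, List.prod_nil, ← one_mul (1 : G)]
      exact IsOrderedSMul.smul_le_smul (h1 x (by simp)) (ih fun y hy => h1 y (by simp [hy]))
  | cons hab _ ih =>
    rw [List.prod_cons, List.prod_cons]
    exact IsOrderedSMul.smul_le_smul hab (ih fun y hy => h1 y (by simp [hy]))
  | cons_right _ ih =>
    rename_i a l₁ l₂ _
    rw [List.prod_cons, ← one_mul l₁.prod]
    exact IsOrderedSMul.smul_le_smul (h1 _ (by simp)) (ih fun y hy => h1 y (by simp [hy]))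

theorem isPWO_closure [IsOrderedCancelSMul G G] {s : Set G} (hpos : ∀ x ∈ s, 1 ≤ x)
    (h : s.IsPWO) : (Submonoid.closure s : Set G).IsPWO := by
  rw [Submonoid.closure_eq_image_prod]
  refine (h.partiallyWellOrderedOn_sublistForall₂ (· ≤ ·)).image_of_monotone_on ?_
  exact fun l1 _ l2 hl2 h12 => prod_le_prod_of_sublistForall₂ h12 fun x hx => hpos x <| hl2 x hx

/-- Solving `v + u * v = w` when `u` is supported on elements `> 1`. -/
theorem exists_add_conv_eq [IsOrderedCancelSMul G G] (u : HahnSeries G ℚ)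
    (hu : ∀ g ∈ u.support, 1 < g) (w : HahnSeries E ℚ) : ∃ v, v + conv u v = w := by
  classical
  set C : Set G := (Submonoid.closure u.support : Set G) with hC
  set P : Set E := C • w.support with hP
  have hPpwo : P.IsPWO :=
    (isPWO_closure (fun x hx => (hu x hx).le) u.isPWO_support).smul w.isPWO_support
  have hwP : w.support ⊆ P := fun e he => ⟨1, Submonoid.one_mem _, e, he, by simp⟩
  have huP : ∀ g ∈ u.support, ∀ e ∈ P, g • e ∈ P := by
    rintro g hg _ ⟨c, hc, e, he, rfl⟩
    exact ⟨g * c, Submonoid.mul_mem _ (Submonoid.subset_closure hg) hc, e, he, by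
      simp [mul_smul]⟩
  have hwf : WellFounded (fun x y : P => (x : E) < y) := hPpwo.isWF
  have hdec : ∀ g ∈ u.support, ∀ e : E, g⁻¹ • e < e := by
    intro g hg e
    have : (1 : G) • (g⁻¹ • e) < g • (g⁻¹ • e) :=
      SMul.smul_lt_smul_of_lt_of_le (hu g hg) le_rfl
    simpa using this
  let step : ∀ x : P, (∀ y : P, (y : E) < x → ℚ) → ℚ := fun x rec =>
    w.coeff x - ∑ᶠ g : G, if h : g⁻¹ • (x : E) ∈ P ∧ g⁻¹ • (x : E) < x then
      u.coeff g * rec ⟨g⁻¹ • (x : E), h.1⟩ h.2 else 0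
  let f : P → ℚ := hwf.fix step
  have hf : ∀ x : P, f x = w.coeff x - ∑ᶠ g : G,
      if h : g⁻¹ • (x : E) ∈ P ∧ g⁻¹ • (x : E) < x then
        u.coeff g * f ⟨g⁻¹ • (x : E), h.1⟩ else 0 := fun x => hwf.fix_eq step x
  let v : HahnSeries E ℚ :=
    { coeff := fun e => if h : e ∈ P then f ⟨e, h⟩ else 0
      isPWO_support' := hPpwo.mono (by
        intro e he
        by_contra h
        simp [h] at he) }
  have hv : ∀ e, v.coeff e = if h : e ∈ P then f ⟨e, h⟩ else 0 := fun _ => rfl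
  refine ⟨v, ?_⟩
  ext e
  rw [HahnSeries.coeff_add, conv_coeff]
  by_cases he : e ∈ P
  · rw [hv e, dif_pos he, hf]
    have : ∀ g : G, u.coeff g * v.coeff (g⁻¹ • e) =
      if h : g⁻¹ • e ∈ P ∧ g⁻¹ • e < e then u.coeff g * f ⟨g⁻¹ • e, h.1⟩ else 0 := by
      intro g
      by_cases hg : u.coeff g = 0
      · simp [hg]
      · have hlt := hdec g hg e
        rw [hv]
        by_cases hge : g⁻¹ • e ∈ P
        · rw [dif_pos hge, dif_pos ⟨hge, hlt⟩]
        · rw [dif_neg hge, dif_neg (fun h => hge h.1), mul_zero]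
    simp only [this]
    ring
  · have hw : w.coeff e = 0 := by
      by_contra h
      exact he (hwP h)
    rw [hv e, dif_neg he, hw, zero_add]
    apply finsum_eq_zero_of_forall_eq_zero
    intro g
    by_cases hg : u.coeff g = 0
    · simp [hg]
    · rw [hv, dif_neg, mul_zero]
      intro hge
      apply he
      simpa using huP g hg _ hge

theorem exists_conv_eq [IsOrderedCancelSMul G G] (a : HahnSeries G ℚ) (ha : a ≠ 0)
    (w : HahnSeries E ℚ) : ∃ v, conv a v = w := by
  have hne : a.support.Nonempty := HahnSeries.support_nonempty_iff.2 ha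
  set g0 := a.isWF_support.min hne with hg0
  have hg0m : a.coeff g0 ≠ 0 := a.isWF_support.min_mem hne
  have hmin : ∀ g ∈ a.support, g0 ≤ g := fun g hg => a.isWF_support.min_le hne hg
  set c0 := a.coeff g0
  set s : HahnSeries G ℚ := HahnSeries.single g0⁻¹ c0⁻¹ with hs
  set u : HahnSeries G ℚ := conv s a - HahnSeries.single 1 1 with hu
  have hsa : conv s a = HahnSeries.single 1 1 + u := by rw [hu]; abel
  have hucoeff : ∀ g, u.coeff g = c0⁻¹ * a.coeff (g0 * g) - (HahnSeries.single 1 1 :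
      HahnSeries G ℚ).coeff g := by
    intro g
    rw [hu, HahnSeries.coeff_sub, hs, single_conv_coeff]
    simp
  have hupos : ∀ g ∈ u.support, 1 < g := by
    intro g hg
    rw [HahnSeries.mem_support, hucoeff] at hg
    by_cases h1 : g = 1
    · subst h1
      exfalso
      apply hg
      simp only [mul_one, HahnSeries.coeff_single_same]
      rw [inv_mul_cancel₀ hg0m, sub_self]
    · rw [HahnSeries.coeff_single_of_ne h1, sub_zero] at hg
      have h2 := hmin (g0 * g) (right_ne_zero_of_mul hg)
      refine lt_of_le_of_ne ?_ (Ne.symm h1)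
      refine IsOrderedCancelSMul.le_of_smul_le_smul_left g0 1 g ?_
      simpa using h2
  obtain ⟨v, hv⟩ := exists_add_conv_eq u hupos (conv s w)
  refine ⟨v, ?_⟩
  have h3 : conv s (conv a v) = conv s w := by
    rw [← conv_assoc, hsa, add_conv, one_conv, hv]
  have h4 : conv (HahnSeries.single g0 c0) s = HahnSeries.single (1 : G) (1 : ℚ) := by
    rw [hs, single_conv_single]
    simp [mul_inv_cancel₀ hg0m]
  have h5 := congrArg (conv (HahnSeries.single g0 c0)) h3
  rw [← conv_assoc, h4, one_conv] at h5
  rwa [← conv_assoc, h4, one_conv] at h5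

end Conv

section MN

/-- The Malcev-Neumann division ring of a bi-ordered group. -/
def MN (G : Type*) [LinearOrder G] : Type _ := HahnSeries G ℚ

variable {G E : Type*} [Group G] [LinearOrder G] [IsOrderedCancelSMul G G]
  [LinearOrder E] [MulAction G E] [IsOrderedCancelSMul G E]

noncomputable instance : AddCommGroup (MN G) := inferInstanceAs (AddCommGroup (HahnSeries G ℚ))

noncomputable instance : Ring (MN G) where
  __ := (inferInstance : AddCommGroup (MN G))
  mul a b := conv (E := G) a b
  one := (HahnSeries.single (1 : G) (1 : ℚ) : HahnSeries G ℚ)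
  left_distrib a b c := conv_add (E := G) a b c
  right_distrib a b c := add_conv (E := G) a b c
  zero_mul a := zero_conv (E := G) a
  mul_zero a := conv_zero (E := G) a
  mul_assoc a b c := conv_assoc (E := G) a b c
  one_mul a := one_conv (E := G) a
  mul_one a := conv_one a

instance : Nontrivial (MN G) := inferInstanceAs (Nontrivial (HahnSeries G ℚ))

theorem MN.exists_inv (a : MN G) (ha : a ≠ 0) : ∃ b : MN G, a * b = 1 :=
  exists_conv_eq (E := G) a ha (HahnSeries.single (1 : G) (1 : ℚ) : HahnSeries G ℚ)

open Classical in
noncomputable instance : DivisionRing (MN G) where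
  __ := (inferInstance : Ring (MN G))
  __ := (inferInstance : Nontrivial (MN G))
  inv a := if h : a = 0 then 0 else (MN.exists_inv a h).choose
  mul_inv_cancel a ha := by
    change a * (if h : a = 0 then 0 else (MN.exists_inv a h).choose) = 1
    rw [dif_neg ha]
    exact (MN.exists_inv a ha).choose_spec
  inv_zero := by
    change (if h : (0 : MN G) = 0 then 0 else (MN.exists_inv (0 : MN G) h).choose) = 0
    simp
  nnqsmul := _
  nnqsmul_def := fun _ _ => rfl
  qsmul := _
  qsmul_def := fun _ _ => rfl

noncomputable instance instModuleMN : Module (MN G) (HahnSeries E ℚ) where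
  smul a v := conv a v
  one_smul v := one_conv (G := G) v
  mul_smul a b v := conv_assoc a b v
  smul_zero a := conv_zero a
  smul_add a v w := conv_add a v w
  add_smul a b v := add_conv a b v
  zero_smul v := zero_conv (G := G) v

theorem MN.smul_def (a : MN G) (v : HahnSeries E ℚ) : a • v = conv (G := G) a v := rfl
theorem MN.mul_def (a b : MN G) : a * b = conv (G := G) (E := G) a b := rfl

/-- The embedding of the group into the Malcev-Neumann division ring. -/
noncomputable def MN.of : G →* MN G where
  toFun g := (HahnSeries.single g (1 : ℚ) : HahnSeries G ℚ)
  map_one' := rfl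
  map_mul' g h := by
    have := single_conv_single (E := G) g 1 h 1
    rw [one_mul] at this
    exact this.symm

theorem MN.of_smul_single (g : G) (e : E) (c : ℚ) :
    MN.of g • (HahnSeries.single e c : HahnSeries E ℚ) = HahnSeries.single (g • e) c := by
  rw [MN.smul_def]
  change conv (HahnSeries.single g (1 : ℚ)) _ = _
  rw [single_conv_single, one_mul]

end MN

end HNC


namespace HNC

section Cone

theorem exists_order_of_cone {G : Type*} [Group G] (pos : G → Prop)
    (hmul : ∀ a b, pos a → pos b → pos (a * b)) (hconj : ∀ a g, pos a → pos (g * a * g⁻¹))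
    (hone : ¬ pos 1) (htri : ∀ a, a = 1 ∨ pos a ∨ pos a⁻¹) :
    ∃ _ : LinearOrder G, IsOrderedCancelSMul G G := by
  classical
  let I : LinearOrder G :=
    { le := fun a b => a = b ∨ pos (a⁻¹ * b)
      le_refl := fun a => Or.inl rfl
      le_trans := by
        rintro a b c (rfl | h1) (rfl | h2)
        · exact Or.inl rfl
        · exact Or.inr h2
        · exact Or.inr h1
        · right
          have := hmul _ _ h1 h2
          simpa [mul_assoc] using this
      le_antisymm := by
        rintro a b (rfl | h1) (h | h2)
        · rfl
        · rfl
        · exact h.symm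
        · exfalso
          have := hmul _ _ h1 h2
          apply hone
          simpa [mul_assoc] using this
      le_total := by
        intro a b
        rcases htri (a⁻¹ * b) with h | h | h
        · left; left; exact inv_mul_eq_one.1 h
        · left; right; exact h
        · right; right; simpa using h
      toDecidableLE := Classical.decRel _ }
  have hle : ∀ a b : G, a ≤ b ↔ a = b ∨ pos (a⁻¹ * b) := fun _ _ => Iff.rfl
  have hl : ∀ a b : G, a ≤ b → ∀ c : G, c • a ≤ c • b := by
    intro a b h c
    rcases (hle a b).1 h with rfl | h
    · exact le_rfl
    · refine (hle _ _).2 (Or.inr ?_)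
      simpa [mul_assoc] using h
  have hr : ∀ c d : G, c ≤ d → ∀ a : G, c • a ≤ d • a := by
    intro c d h a
    rcases (hle c d).1 h with rfl | h
    · exact le_rfl
    · refine (hle _ _).2 (Or.inr ?_)
      have := hconj _ a⁻¹ h
      simpa [mul_assoc] using this
  refine ⟨I, ?_⟩
  exact
    { smul_le_smul_left := hl
      smul_le_smul_right := hr
      le_of_smul_le_smul_left := by
        intro a b c h
        simpa using hl _ _ h a⁻¹
      le_of_smul_le_smul_right := by
        intro a b c h
        simpa using hr _ _ h c⁻¹ }

end Cone

section Poly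

open Polynomial

variable {A : Type*} [Ring A]

theorem coeff_mul_low {p q : A[X]} {m n : ℕ} (hp : ∀ i < m, p.coeff i = 0)
    (hq : ∀ i < n, q.coeff i = 0) : ∀ i < m + n, (p * q).coeff i = 0 := by
  intro i hi
  rw [coeff_mul]
  refine Finset.sum_eq_zero ?_
  rintro ⟨a, b⟩ hab
  rw [Finset.HasAntidiagonal.mem_antidiagonal] at hab
  simp only at hab ⊢
  by_cases ha : a < m
  · rw [hp a ha, zero_mul]
  · rw [hq b (by omega), mul_zero]

theorem coeff_mul_lead {p q : A[X]} {m n : ℕ} (hp : ∀ i < m, p.coeff i = 0)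
    (hq : ∀ i < n, q.coeff i = 0) : (p * q).coeff (m + n) = p.coeff m * q.coeff n := by
  rw [coeff_mul, Finset.sum_eq_single (m, n)]
  · rintro ⟨a, b⟩ hab hne
    rw [Finset.HasAntidiagonal.mem_antidiagonal] at hab
    simp only at hab ⊢
    by_cases ha : a < m
    · rw [hp a ha, zero_mul]
    · by_cases hb : b < n
      · rw [hq b hb, mul_zero]
      · exact absurd (Prod.ext (by simp; omega) (by simp; omega)) hne
  · intro h
    simp at h

theorem exists_order_of_poly {G Λ : Type*} [Group G] [AddCommGroup Λ] [LinearOrder Λ]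
    [IsOrderedAddMonoid Λ] (j : A →+ Λ) (hj : Function.Injective j) (μ : G →* A[X])
    (hμ : Function.Injective μ) (hμ0 : ∀ g, (μ g).coeff 0 = 1) :
    ∃ _ : LinearOrder G, IsOrderedCancelSMul G G := by
  classical
  have h00 : ∀ g, (μ g - 1).coeff 0 = 0 := by intro g; simp [hμ0]
  have h01 : ∀ g, ∀ i < 1, (μ g - 1).coeff i = 0 := by
    intro g i hi
    obtain rfl : i = 0 := by omega
    exact h00 g
  refine exists_order_of_cone
    (fun g => ∃ k, (∀ i < k, (μ g - 1).coeff i = 0) ∧ 0 < j ((μ g - 1).coeff k)) ?_ ?_ ?_ ?_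
  · rintro a b ⟨k, hk, hk'⟩ ⟨l, hl, hl'⟩
    have key : μ (a * b) - 1 = (μ a - 1) + (μ b - 1) + (μ a - 1) * (μ b - 1) := by
      rw [map_mul]; noncomm_ring
    have c1 := coeff_mul_low hk (h01 b)
    have c2 := coeff_mul_low (h01 a) hl
    rcases lt_trichotomy k l with h | h | h
    · refine ⟨k, ?_, ?_⟩
      · intro i hi
        rw [key, coeff_add, coeff_add, hk i hi, hl i (by omega), c1 i (by omega)]; simp
      · rw [key, coeff_add, coeff_add, hl k h, c1 k (by omega)]; simpa using hk'
    · subst h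
      refine ⟨k, ?_, ?_⟩
      · intro i hi
        rw [key, coeff_add, coeff_add, hk i hi, hl i (by omega), c1 i (by omega)]; simp
      · rw [key, coeff_add, coeff_add, c1 k (by omega), add_zero, map_add]
        exact add_pos hk' hl'
    · refine ⟨l, ?_, ?_⟩
      · intro i hi
        rw [key, coeff_add, coeff_add, hk i (by omega), hl i (by omega), c2 i (by omega)]; simp
      · rw [key, coeff_add, coeff_add, hk l h, c2 l (by omega)]; simpa using hl'
  · rintro a g ⟨k, hk, hk'⟩
    have hgg : μ g * μ g⁻¹ = 1 := by rw [← map_mul]; simp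
    have key : μ (g * a * g⁻¹) - 1 = μ g * (μ a - 1) * μ g⁻¹ := by
      rw [map_mul, map_mul, mul_sub, sub_mul, mul_one, hgg]
    have z : ∀ h, ∀ i < 0, (μ h).coeff i = 0 := by intro h i hi; omega
    have c1 := coeff_mul_low (z g) hk
    have c2 := coeff_mul_lead (z g) hk
    rw [zero_add] at c1 c2
    have c3 := coeff_mul_low c1 (z g⁻¹)
    have c4 := coeff_mul_lead c1 (z g⁻¹)
    rw [add_zero] at c3 c4
    refine ⟨k, ?_, ?_⟩
    · intro i hi
      rw [key, c3 i hi]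
    · rw [key, c4, c2, hμ0, hμ0, one_mul, mul_one]
      exact hk'
  · rintro ⟨k, _, hk⟩
    simp at hk
  · intro a
    by_cases ha : a = 1
    · exact Or.inl ha
    right
    have hne : μ a - 1 ≠ 0 := by
      intro h
      apply ha
      apply hμ
      rw [map_one]
      exact sub_eq_zero.1 h
    have hex : ∃ k, (μ a - 1).coeff k ≠ 0 := by
      by_contra hcon
      push Not at hcon
      exact hne (Polynomial.ext (by simpa using hcon))
    have hk := Nat.find_spec hex
    have hlt : ∀ i < Nat.find hex, (μ a - 1).coeff i = 0 := fun i hi => by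
      simpa using Nat.find_min hex hi
    have hjk : j ((μ a - 1).coeff (Nat.find hex)) ≠ 0 := by
      intro h
      exact hk (hj (by rw [h, map_zero]))
    rcases lt_or_gt_of_ne hjk with h | h
    · right
      have haa : μ a⁻¹ * μ a = 1 := by rw [← map_mul]; simp
      have key : μ a⁻¹ - 1 = -(μ a⁻¹ * (μ a - 1)) := by
        rw [mul_sub, haa, mul_one]; abel
      have z : ∀ h, ∀ i < 0, (μ h).coeff i = 0 := by intro h i hi; omega
      have c1 := coeff_mul_low (z a⁻¹) hlt
      have c2 := coeff_mul_lead (z a⁻¹) hlt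
      rw [zero_add] at c1 c2
      refine ⟨Nat.find hex, ?_, ?_⟩
      · intro i hi
        rw [key, coeff_neg, c1 i hi, neg_zero]
      · rw [key, coeff_neg, c2, hμ0, one_mul, map_neg]
        exact neg_pos.2 h
    · exact Or.inl ⟨_, hlt, h⟩

end Poly

section Rep

variable {X : Type*}

open Classical in
/-- Left multiplication by a square-zero letter on formal sums of words. -/
noncomputable def op (x : X) : Module.End ℤ (List X → ℤ) where
  toFun u := fun w => match w with
    | [] => 0
    | y :: w' => if y = x ∧ w'.head? ≠ some x then u w' else 0
  map_add' u v := by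
    funext w
    cases w with
    | nil => simp
    | cons y w' => by_cases h : y = x ∧ w'.head? ≠ some x <;> simp [h]
  map_smul' c u := by
    funext w
    cases w with
    | nil => simp
    | cons y w' => by_cases h : y = x ∧ w'.head? ≠ some x <;> simp [h]

theorem op_nil (x : X) (u : List X → ℤ) : op x u [] = 0 := rfl

open Classical in
theorem op_cons (x y : X) (w : List X) (u : List X → ℤ) :
    op x u (y :: w) = if y = x ∧ w.head? ≠ some x then u w else 0 := rfl

theorem op_op (x : X) (u : List X → ℤ) : op x (op x u) = 0 := by
  funext w
  cases w with
  | nil => rfl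
  | cons y w =>
    rw [op_cons]
    split_ifs with h
    · cases w with
      | nil => rfl
      | cons z w =>
        rw [op_cons, if_neg]
        · rfl
        · rintro ⟨rfl, _⟩
          simp at h
    · rfl

theorem op_mul_op (x : X) : op x * op x = 0 := LinearMap.ext fun u => op_op x u

open Polynomial in
/-- The unit `1 + x t`. -/
noncomputable def gen (x : X) : (Module.End ℤ (List X → ℤ))[X]ˣ where
  val := 1 + C (op x) * Polynomial.X
  inv := 1 - C (op x) * Polynomial.X
  val_inv := by
    have : C (op x) * Polynomial.X * (C (op x) * Polynomial.X) = 0 := by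
      rw [← mul_assoc, mul_assoc (C (op x)) Polynomial.X (C (op x)), X_mul_C, ← mul_assoc,
        ← C_mul, op_mul_op]; simp
    rw [mul_sub, mul_one, add_mul, one_mul, this]; simp
  inv_val := by
    have : C (op x) * Polynomial.X * (C (op x) * Polynomial.X) = 0 := by
      rw [← mul_assoc, mul_assoc (C (op x)) Polynomial.X (C (op x)), X_mul_C, ← mul_assoc,
        ← C_mul, op_mul_op]; simp
    rw [mul_add, mul_one, sub_mul, one_mul, this]; simp

/-- The sign of a letter. -/
def sg (b : Bool) : ℤ := cond b 1 (-1)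

open Classical in
/-- The image of the empty word under a word of the free group. -/
noncomputable def vec : List (X × Bool) → (List X → ℤ)
  | [] => Pi.single [] 1
  | (x, b) :: L => vec L + sg b • op x (vec L)

theorem vec_inv (x : X) (b : Bool) (L : List (X × Bool)) (h : FreeGroup.IsReduced ((x, b) :: L)) :
    ∃ (u : List X → ℤ) (n : ℕ) (W : List X), 1 ≤ n ∧
      vec ((x, b) :: L) = u + (sg b * n) • op x u ∧ W.head? ≠ some x ∧ u W ≠ 0 ∧
      ∀ w : List X, W.length < w.length → u w = 0 := by
  classical
  induction L generalizing x b with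
  | nil =>
    refine ⟨Pi.single [] 1, 1, [], le_rfl, by simp [vec], by simp, by simp, ?_⟩
    intro w hw
    rw [Pi.single_eq_of_ne]
    rintro rfl
    simp at hw
  | cons a L ih =>
    obtain ⟨y, c⟩ := a
    have h' : FreeGroup.IsReduced ((y, c) :: L) := (List.isChain_cons_cons.1 h).2
    have hxy : x = y → b = c := (List.isChain_cons_cons.1 h).1
    obtain ⟨u, n, W, hn, hv, hW, huW, hu⟩ := ih y c h'
    by_cases e : x = y
    · subst e
      obtain rfl := hxy rfl
      refine ⟨u, n + 1, W, by omega, ?_, hW, huW, hu⟩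
      rw [vec, hv, map_add, map_smul, op_op, smul_zero, add_zero, add_assoc, ← add_smul]
      congr 2
      push_cast; ring
    · have e' : ∀ w, vec ((y, c) :: L) w = u w + sg c * n * op y u w := by
        intro w; rw [hv]; simp
      refine ⟨vec ((y, c) :: L), 1, y :: W, le_rfl, ?_, ?_, ?_, ?_⟩
      · rw [vec]; simp
      · simpa using fun h => e h.symm
      · rw [e', hu (y :: W) (by simp), op_cons, if_pos ⟨rfl, hW⟩, zero_add]
        have : sg c ≠ 0 := by cases c <;> simp [sg]
        have hn' : (n : ℤ) ≠ 0 := by exact_mod_cast (by omega : n ≠ 0)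
        exact mul_ne_zero (mul_ne_zero this hn') huW
      · intro w hw
        simp only [List.length_cons] at hw
        rw [e', hu w (by omega), zero_add]
        cases w with
        | nil => simp [op_nil]
        | cons z w =>
          simp only [List.length_cons] at hw
          rw [op_cons, hu w (by omega)]
          simp

theorem vec_ne (L : List (X × Bool)) (h : FreeGroup.IsReduced L) (hL : L ≠ []) :
    vec L ≠ vec [] := by
  classical
  obtain _ | ⟨⟨x, b⟩, L⟩ := L
  · exact absurd rfl hL
  obtain ⟨u, n, W, hn, hv, hW, huW, hu⟩ := vec_inv x b L h
  intro heq
  have h1 := congrFun heq (x :: W)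
  rw [hv] at h1
  simp only [Pi.add_apply, Pi.smul_apply, smul_eq_mul] at h1
  rw [hu (x :: W) (by simp), op_cons, if_pos ⟨rfl, hW⟩, zero_add, vec,
    Pi.single_eq_of_ne (by simp)] at h1
  have : sg b ≠ 0 := by cases b <;> simp [sg]
  have hn' : (n : ℤ) ≠ 0 := by exact_mod_cast (by omega : n ≠ 0)
  exact mul_ne_zero (mul_ne_zero this hn') huW h1

open Polynomial in
/-- Evaluation at `t = 1`. -/
noncomputable def ev1 (A : Type*) [Ring A] : A[X] →+* A :=
  eval₂RingHom' (RingHom.id A) 1 (fun a => Commute.one_right a)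

open Polynomial in
/-- The Magnus-type representation. -/
noncomputable def mag (X : Type*) : FreeGroup X →* (Module.End ℤ (List X → ℤ))[X] :=
  (Units.coeHom _).comp (FreeGroup.lift gen)

theorem ev1_mag (L : List (X × Bool)) :
    ev1 _ (mag X (FreeGroup.mk L)) (vec []) = vec L := by
  induction L with
  | nil =>
    have : (FreeGroup.mk ([] : List (X × Bool))) = 1 := rfl
    rw [this]; simp
  | cons a L ih =>
    obtain ⟨x, b⟩ := a
    have h1 : (FreeGroup.mk ((x, b) :: L)) = FreeGroup.mk [(x, b)] * FreeGroup.mk L := by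
      rw [FreeGroup.mul_mk]; rfl
    rw [h1, map_mul, map_mul, Module.End.mul_apply, ih, vec]
    have h2 : mag X (FreeGroup.mk [(x, b)]) = ((cond b (gen x) (gen x)⁻¹ : Units _) :
        Polynomial (Module.End ℤ (List X → ℤ))) := by
      simp [mag, FreeGroup.lift_mk]
    rw [h2]
    cases b
    · change ev1 (Module.End ℤ (List X → ℤ)) (1 - Polynomial.C (op x) * Polynomial.X) (vec L) = _
      simp [ev1, sg, sub_eq_add_neg]
    · change ev1 (Module.End ℤ (List X → ℤ)) (1 + Polynomial.C (op x) * Polynomial.X) (vec L) = _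
      simp [ev1, sg]

theorem mag_injective (X : Type*) : Function.Injective (mag X) := by
  classical
  rw [injective_iff_map_eq_one]
  intro g hg
  by_contra hne
  have h1 := ev1_mag g.toWord
  rw [FreeGroup.mk_toWord, hg, map_one] at h1
  refine vec_ne g.toWord FreeGroup.isReduced_toWord ?_ h1.symm
  simpa using hne

theorem mag_coeff_zero (g : FreeGroup X) : (mag X g).coeff 0 = 1 := by
  have : (Polynomial.constantCoeff.toMonoidHom.comp (mag X)) = 1 := by
    ext x
    simp [mag, gen]
  have h := DFunLike.congr_fun this g
  simpa using h

end Rep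

theorem exists_biorder (F : Type*) [Group F] [IsFreeGroup F] :
    ∃ _ : LinearOrder F, IsOrderedCancelSMul F F := by
  set X := IsFreeGroup.Generators F
  let I := (List X → ℤ) × List X
  obtain ⟨_, hwf⟩ := exists_wellFoundedLT I
  let j : Module.End ℤ (List X → ℤ) →+ Lex (I → ℤ) :=
    { toFun := fun a => toLex fun i => a i.1 i.2
      map_zero' := rfl
      map_add' := fun _ _ => rfl }
  have hj : Function.Injective j := by
    intro a b h
    refine LinearMap.ext fun u => funext fun w => ?_
    exact congrFun (toLex.injective h) (u, w)
  refine exists_order_of_poly j hj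
    ((mag X).comp (IsFreeGroup.toFreeGroup F).toMonoidHom) ?_ ?_
  · exact (mag_injective X).comp (IsFreeGroup.toFreeGroup F).injective
  · intro g
    exact mag_coeff_zero _

end HNC


namespace HNC

section Free

theorem free_induction {G : Type*} [Group G] [IsFreeGroup G] (S : Subgroup G)
    (h : ∀ x, IsFreeGroup.of x ∈ S) (g : G) : g ∈ S := by
  let L : G →* S := IsFreeGroup.lift fun x => ⟨IsFreeGroup.of x, h x⟩
  have : S.subtype.comp L = MonoidHom.id G := by
    apply IsFreeGroup.ext_hom
    intro x
    simp [L]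
  have h2 := DFunLike.congr_fun this g
  simp only [MonoidHom.comp_apply, Subgroup.subtype_apply, MonoidHom.id_apply] at h2
  rw [← h2]
  exact (L g).2

theorem exists_crossed {G R N : Type*} [Group G] [IsFreeGroup G] [Ring R] [AddCommGroup N]
    [Module R N] (ρ : G →* R) (f : IsFreeGroup.Generators G → N) :
    ∃ c : G → N, (∀ x, c (IsFreeGroup.of x) = f x) ∧ ∀ g h, c (g * h) = c g + ρ g • c h := by
  have hinv : ∀ g n, ρ g • ρ g⁻¹ • (n : N) = n := by
    intro g n
    rw [smul_smul, ← map_mul]; simp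
  have hinv' : ∀ g n, ρ g⁻¹ • ρ g • (n : N) = n := by
    intro g n
    rw [smul_smul, ← map_mul]; simp
  let σ : IsFreeGroup.Generators G → Equiv.Perm N := fun x =>
    { toFun := fun n => ρ (IsFreeGroup.of x) • n + f x
      invFun := fun n => ρ (IsFreeGroup.of x)⁻¹ • (n - f x)
      left_inv := fun n => by simp [hinv']
      right_inv := fun n => by simp [hinv] }
  let T : G →* Equiv.Perm N := IsFreeGroup.lift σ
  have hT : ∀ x n, T (IsFreeGroup.of x) n = ρ (IsFreeGroup.of x) • n + f x := by
    intro x n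
    simp only [T, IsFreeGroup.lift_of]
    rfl
  let S : Subgroup G :=
    { carrier := {g | ∀ n, T g n = ρ g • n + T g 0}
      one_mem' := by intro n; simp
      mul_mem' := by
        intro g h hg hh n
        rw [map_mul, Equiv.Perm.mul_apply, Equiv.Perm.mul_apply, hg, hg (T h 0), hh n, map_mul,
          mul_smul, smul_add, add_assoc]
      inv_mem' := by
        intro g hg n
        apply (T g).injective
        have h0 : T g (T g⁻¹ 0) = 0 := by
          rw [← Equiv.Perm.mul_apply, ← map_mul]; simp
        have hn : T g (T g⁻¹ n) = n := by
          rw [← Equiv.Perm.mul_apply, ← map_mul]; simp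
        rw [hn, hg (ρ g⁻¹ • n + T g⁻¹ 0), smul_add, hinv, add_assoc, ← hg, h0, add_zero] }
  have hS : ∀ g n, T g n = ρ g • n + T g 0 := fun g => free_induction S (by
    intro x n
    rw [hT, hT]; simp) g
  refine ⟨fun g => T g 0, ?_, ?_⟩
  · intro x
    simp [hT]
  · intro g h
    simp only [map_mul, Equiv.Perm.mul_apply]
    rw [hS g (T h 0), add_comm]

end Free

section Lead

variable {G E : Type*} [Group G] [LinearOrder G] [IsOrderedCancelSMul G G]
  [LinearOrder E] [MulAction G E] [IsOrderedCancelSMul G E]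

/-- `e` is the smallest element of the support of `v`. -/
def IsLead {Γ : Type*} [LinearOrder Γ] (v : HahnSeries Γ ℚ) (e : Γ) : Prop :=
  v.coeff e ≠ 0 ∧ ∀ e', v.coeff e' ≠ 0 → e ≤ e'

theorem exists_lead {Γ : Type*} [LinearOrder Γ] (v : HahnSeries Γ ℚ) (hv : v ≠ 0) :
    ∃ e, IsLead v e := by
  have hne : v.support.Nonempty := HahnSeries.support_nonempty_iff.2 hv
  exact ⟨v.isWF_support.min hne, v.isWF_support.min_mem hne,
    fun e he => v.isWF_support.min_le hne he⟩

theorem IsLead.conv {a : HahnSeries G ℚ} {v : HahnSeries E ℚ} {g : G} {e : E}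
    (ha : IsLead a g) (hv : IsLead v e) : IsLead (conv a v) (g • e) := by
  constructor
  · rw [conv_coeff, finsum_eq_single _ g]
    · simpa using ⟨ha.1, hv.1⟩
    · intro h hh
      by_contra hne
      rw [mul_eq_zero, not_or] at hne
      have h1 := ha.2 h hne.1
      have h2 := hv.2 _ hne.2
      have h3 : g • e < h • (h⁻¹ • g • e) :=
        SMul.smul_lt_smul_of_lt_of_le (lt_of_le_of_ne h1 (Ne.symm hh)) h2
      simp at h3
  · intro e' he'
    obtain ⟨h, hh, z, hz, rfl⟩ := conv_support a v he'
    exact IsOrderedSMul.smul_le_smul (ha.2 h hh) (hv.2 _ hz)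

/-- The orbits of leading terms of elements of `V`. -/
def leadOrb (V : Submodule (MN G) (HahnSeries E ℚ)) : Set (MulAction.orbitRel.Quotient G E) :=
  {q | ∃ e, (∃ v ∈ V, IsLead v e) ∧ (Quotient.mk _ e : MulAction.orbitRel.Quotient G E) = q}

theorem lead_indep (V : Submodule (MN G) (HahnSeries E ℚ)) :
    ∃ b : leadOrb V → V, LinearIndependent (MN G) b := by
  classical
  have hch : ∀ q : leadOrb V, ∃ (v : V) (e : E), IsLead (v : HahnSeries E ℚ) e ∧
      (Quotient.mk _ e : MulAction.orbitRel.Quotient G E) = q := by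
    rintro ⟨q, e, ⟨v, hv, hl⟩, hq⟩
    exact ⟨⟨v, hv⟩, e, hl, hq⟩
  choose b e hl hq using hch
  refine ⟨b, ?_⟩
  rw [linearIndependent_iff']
  intro s d hsum
  by_contra hcon
  push Not at hcon
  obtain ⟨q1, hq1, hdq1⟩ := hcon
  have hg : ∀ q, d q ≠ 0 → ∃ g, IsLead (Γ := G) (d q) g := fun q h => exists_lead (Γ := G) _ h
  choose! g hg using hg
  have hne : (s.filter fun q => d q ≠ 0).Nonempty := ⟨q1, by simp [hq1, hdq1]⟩
  obtain ⟨q0, hq0, hmin⟩ := Finset.exists_min_image _ (fun q => g q • e q) hne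
  simp only [Finset.mem_filter] at hq0 hmin
  have hc := congrArg (fun v : V => (v : HahnSeries E ℚ).coeff (g q0 • e q0)) hsum
  simp only [Submodule.coe_sum, Submodule.coe_smul, Submodule.coe_zero,
    HahnSeries.coeff_sum, HahnSeries.coeff_zero] at hc
  rw [Finset.sum_eq_single q0] at hc
  · exact ((hg q0 hq0.2).conv (hl q0)).1 hc
  · intro q hqs hqne
    by_cases hd : d q = 0
    · rw [hd, zero_smul]; rfl
    · by_contra hne
      have h1 := ((hg q hd).conv (hl q)).2 _ hne
      have h2 := hmin q ⟨hqs, hd⟩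
      have h3 : g q • e q = g q0 • e q0 := le_antisymm h1 h2
      apply hqne
      apply Subtype.ext
      rw [← hq q, ← hq q0]
      apply Quotient.sound
      refine (MulAction.orbitRel_apply).2 ?_
      refine ⟨(g q)⁻¹ * g q0, ?_⟩
      simp only [mul_smul, ← h3]
      simp
  · intro h; exact absurd hq0.1 h

/-- The coordinates of a series along the orbit of `e`. -/
noncomputable def coord (e : E) : HahnSeries E ℚ →ₗ[MN G] MN G where
  toFun v := (
    { coeff := fun g : G => v.coeff (g • e)
      isPWO_support' := by
        rw [Set.IsPWO, Set.partiallyWellOrderedOn_iff_exists_lt]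
        intro f hf
        obtain ⟨m, n, hmn, hle⟩ :=
          (v.isPWO_support).exists_lt (f := fun n => f n • e) (fun n => hf n)
        exact ⟨m, n, hmn, IsOrderedCancelSMul.le_of_smul_le_smul_right _ _ e hle⟩ } :
      HahnSeries G ℚ)
  map_add' v w := by
    apply HahnSeries.ext; funext g; rfl
  map_smul' a v := by
    apply HahnSeries.ext; funext g
    refine (conv_coeff (G := G) a v (g • e)).trans (finsum_congr fun h => ?_)
    rw [smul_smul]
    rfl

theorem coord_coeff (e : E) (v : HahnSeries E ℚ) (g : G) :
    HahnSeries.coeff (Γ := G) (coord e v : MN G) g = v.coeff (g • e) := rfl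

theorem finrank_le_leadOrb {M : Type*} [AddCommGroup M] [Module (MN G) M]
    (V : Submodule (MN G) (HahnSeries E ℚ)) (hfin : (leadOrb V).Finite)
    (f : M →ₗ[MN G] HahnSeries E ℚ) (hf : Function.Injective f) (hfV : ∀ m, f m ∈ V) :
    Module.finrank (MN G) M ≤ (leadOrb V).ncard := by
  classical
  haveI := hfin.fintype
  let φ : M →ₗ[MN G] (leadOrb V → MN G) :=
    LinearMap.pi fun q => (coord (q : MulAction.orbitRel.Quotient G E).out).comp f
  have hφ : Function.Injective φ := by
    rw [← LinearMap.ker_eq_bot, LinearMap.ker_eq_bot']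
    intro m hm
    by_contra hne
    have hfm : f m ≠ 0 := fun h => hne (hf (by rw [h, map_zero]))
    obtain ⟨e, he⟩ := exists_lead _ hfm
    let q : MulAction.orbitRel.Quotient G E := Quotient.mk _ e
    have hq : q ∈ leadOrb V := ⟨e, ⟨f m, hfV m, he⟩, rfl⟩
    have h1 : (MulAction.orbitRel G E) q.out e := Quotient.exact (Quotient.out_eq q)
    obtain ⟨g, hg⟩ := MulAction.orbitRel_apply.1 ((MulAction.orbitRel G E).symm h1)
    have h2 := congrFun hm ⟨q, hq⟩
    have h3 := congrArg (fun a : HahnSeries G ℚ => a.coeff g) h2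
    change (f m).coeff (g • q.out) = 0 at h3
    apply he.1
    rw [← h3]
    exact congrArg _ hg.symm
  have := LinearMap.finrank_le_finrank_of_injective hφ
  rwa [Module.finrank_fintype_fun_eq_card, ← Nat.card_eq_fintype_card, Nat.card_coe_set_eq] at this

theorem leadOrb_le_finrank (V : Submodule (MN G) (HahnSeries E ℚ)) [Module.Finite (MN G) V] :
    (leadOrb V).Finite ∧ (leadOrb V).ncard ≤ Module.finrank (MN G) V := by
  obtain ⟨b, hb⟩ := lead_indep V
  have hfin : Finite (leadOrb V) := hb.finite
  refine ⟨Set.toFinite _, ?_⟩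
  haveI := Fintype.ofFinite (leadOrb V)
  rw [← Nat.card_coe_set_eq, Nat.card_eq_fintype_card]
  exact hb.fintype_card_le_finrank

theorem exists_extension {N : Type*} [AddCommGroup N] [Module (MN G) N] (ψ : E → N)
    (hψ : ∀ (g : G) e, ψ (g • e) = MN.of g • ψ e) :
    ∃ Ψ : HahnSeries E ℚ →ₗ[MN G] N, ∀ e, Ψ (HahnSeries.single e 1) = ψ e := by
  classical
  let b : MulAction.orbitRel.Quotient G E → HahnSeries E ℚ := fun q => HahnSeries.single q.out 1
  have hdual : ∀ q q', coord (G := G) q.out (b q') = if q = q' then 1 else 0 := by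
    intro q q'
    apply HahnSeries.ext (Γ := G)
    funext g
    rw [coord_coeff]
    split_ifs with h
    · subst h
      change (HahnSeries.single q.out (1 : ℚ)).coeff (g • q.out) =
        (HahnSeries.single (1 : G) (1 : ℚ)).coeff g
      by_cases hg : g = 1
      · subst hg; simp
      · rw [HahnSeries.coeff_single_of_ne hg, HahnSeries.coeff_single_of_ne]
        intro h
        apply hg
        exact IsCancelSMul.right_cancel g 1 q.out (by simpa using h)
    · change (HahnSeries.single q'.out (1 : ℚ)).coeff (g • q.out) = 0
      rw [HahnSeries.coeff_single_of_ne]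
      intro h'
      apply h
      rw [← Quotient.out_eq q, ← Quotient.out_eq q']
      symm
      apply Quotient.sound
      exact MulAction.orbitRel_apply.2 ⟨g, h'⟩
  have hb : LinearIndependent (MN G) b := by
    rw [linearIndependent_iff']
    intro s d hs q hq
    have h := congrArg (coord (G := G) q.out) hs
    rw [map_sum, map_zero] at h
    simp only [map_smul, hdual, smul_eq_mul, mul_ite, mul_one, mul_zero] at h
    rwa [Finset.sum_ite_eq, if_pos hq] at h
  obtain ⟨Ψ, hΨ⟩ := LinearMap.exists_extend
    ((Module.Basis.span hb).constr ℕ (fun q => ψ (Quotient.out q)))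
  have hΨb : ∀ q : MulAction.orbitRel.Quotient G E, Ψ (b q) = ψ q.out := by
    intro q
    have h1 := DFunLike.congr_fun hΨ (Module.Basis.span hb q)
    rw [Module.Basis.constr_basis] at h1
    rw [← h1]
    simp [Module.Basis.span_apply]
  refine ⟨Ψ, fun e => ?_⟩
  let q : MulAction.orbitRel.Quotient G E := Quotient.mk _ e
  have h1 : (MulAction.orbitRel G E) q.out e := Quotient.exact (Quotient.out_eq q)
  obtain ⟨g, hg⟩ := MulAction.orbitRel_apply.1 ((MulAction.orbitRel G E).symm h1)
  change g • q.out = e at hg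
  rw [← hg, ← MN.of_smul_single, map_smul, hψ]
  exact congrArg _ (hΨb q)

theorem MN.of_smul_coeff (g : G) (v : HahnSeries E ℚ) (e : E) :
    (MN.of g • v).coeff e = v.coeff (g⁻¹ • e) := by
  change (HNC.conv (HahnSeries.single g (1 : ℚ)) v).coeff e = _
  rw [single_conv_coeff, one_mul]

end Lead

end HNC


namespace HNC

section SubgroupPart

variable {F E : Type*} [Group F] [LinearOrder F] [IsOrderedCancelSMul F F]
  [LinearOrder E] [MulAction F E] [IsOrderedCancelSMul F E]

instance instSubE (J : Subgroup F) : IsOrderedCancelSMul J E where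
  smul_le_smul_left a b h c := IsOrderedSMul.smul_le_smul_left a b h (c : F)
  smul_le_smul_right a b h c := IsOrderedSMul.smul_le_smul_right (a : F) (b : F) h c
  le_of_smul_le_smul_left c a b h := IsOrderedCancelSMul.le_of_smul_le_smul_left (c : F) a b h
  le_of_smul_le_smul_right a b c h :=
    IsOrderedCancelSMul.le_of_smul_le_smul_right (a : F) (b : F) c h

instance instSubJ (J : Subgroup F) : IsOrderedCancelSMul J J where
  smul_le_smul_left a b h c := IsOrderedSMul.smul_le_smul_left (a : F) (b : F) h (c : F)
  smul_le_smul_right a b h c := IsOrderedSMul.smul_le_smul_right (a : F) (b : F) h (c : F)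
  le_of_smul_le_smul_left c a b h :=
    IsOrderedCancelSMul.le_of_smul_le_smul_left (c : F) (a : F) (b : F) h
  le_of_smul_le_smul_right a b c h :=
    IsOrderedCancelSMul.le_of_smul_le_smul_right (a : F) (b : F) (c : F) h

theorem of_sub_smul (J : Subgroup F) (j : J) (v : HahnSeries E ℚ) :
    MN.of j • v = MN.of (j : F) • v := by
  ext e
  rw [MN.of_smul_coeff, MN.of_smul_coeff]
  rfl

theorem exists_incl {J H : Subgroup F} (h : J ≤ H) (a : MN J) : ∃ b : MN H,
    (∀ v : HahnSeries E ℚ, b • v = a • v) ∧ ∀ v : HahnSeries F ℚ, b • v = a • v := by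
  let f : J ↪o H := ⟨⟨fun j => ⟨j, h j.2⟩, fun j k hjk => by
    exact Subtype.ext (congrArg (fun x : H => (x : F)) hjk)⟩, Iff.rfl⟩
  let b : HahnSeries H ℚ := HahnSeries.embDomain f (show HahnSeries J ℚ from a)
  have key : ∀ w : H → ℚ, ∑ᶠ k : H, b.coeff k * w k =
      ∑ᶠ j : J, HahnSeries.coeff (Γ := J) a j * w (f j) := by
    intro w
    have h1 : ∀ j : J, HahnSeries.coeff (Γ := J) a j * w (f j) = b.coeff (f j) * w (f j) := by
      intro j
      rw [HahnSeries.embDomain_coeff]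
    rw [finsum_congr h1, ← finsum_mem_range (f := fun k => b.coeff k * w k) f.injective,
      finsum_mem_def]
    refine finsum_congr fun k => ?_
    by_cases hk : k ∈ Set.range f
    · rw [Set.indicator_of_mem hk]
    · rw [Set.indicator_of_notMem hk, HahnSeries.embDomain_of_notMem_range hk, zero_mul]
  refine ⟨b, fun v => ?_, fun v => ?_⟩
  · ext e
    exact key fun k => v.coeff (k⁻¹ • e)
  · ext e
    exact key fun k => v.coeff (k⁻¹ • e)

variable (d : F → HahnSeries E ℚ)

/-- The span of the Fox derivatives paired with the augmentation elements. -/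
noncomputable def W (H : Subgroup F) : Submodule (MN H) (HahnSeries E ℚ × HahnSeries F ℚ) :=
  Submodule.span (MN H) (Set.range fun h : H =>
    (d h, HahnSeries.single (h : F) 1 - HahnSeries.single 1 1))

/-- The cycles. -/
noncomputable def V (H : Subgroup F) : Submodule (MN H) (HahnSeries E ℚ) :=
  (W d H).comap (LinearMap.inl (MN H) (HahnSeries E ℚ) (HahnSeries F ℚ))

theorem mem_V (H : Subgroup F) (v : HahnSeries E ℚ) : v ∈ V d H ↔ (v, 0) ∈ W d H := Iff.rfl

theorem W_mono {J H : Subgroup F} (h : J ≤ H) {w : HahnSeries E ℚ × HahnSeries F ℚ}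
    (hw : w ∈ W d J) : w ∈ W d H := by
  induction hw using Submodule.span_induction with
  | mem x hx =>
    obtain ⟨j, rfl⟩ := hx
    exact Submodule.subset_span ⟨⟨j, h j.2⟩, rfl⟩
  | zero => exact Submodule.zero_mem _
  | add x y _ _ hx hy => exact Submodule.add_mem _ hx hy
  | smul a x _ hx =>
    obtain ⟨b, hb1, hb2⟩ := exists_incl (E := E) h a
    have : a • x = b • x := by
      ext1
      · exact (hb1 _).symm
      · exact (hb2 _).symm
    rw [this]
    exact Submodule.smul_mem _ _ hx

theorem V_mono {J H : Subgroup F} (h : J ≤ H) {v : HahnSeries E ℚ}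
    (hv : v ∈ V d J) : v ∈ V d H := W_mono d h hv

theorem leadOrb_inter (K₁ K₂ : Subgroup F) (f1 : (leadOrb (V d K₁)).Finite)
    (f2 : (leadOrb (V d K₂)).Finite) :
    (leadOrb (V d (K₁ ⊓ K₂))).Finite ∧ (leadOrb (V d (K₁ ⊓ K₂))).ncard ≤
      (leadOrb (V d K₁)).ncard * (leadOrb (V d K₂)).ncard := by
  classical
  have hch : ∀ q : leadOrb (V d (K₁ ⊓ K₂)), ∃ e, (∃ v ∈ V d (K₁ ⊓ K₂), IsLead v e) ∧
    (Quotient.mk _ e : MulAction.orbitRel.Quotient (K₁ ⊓ K₂ : Subgroup F) E) = q :=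
    fun q => q.2
  choose e he hq using hch
  let φ : leadOrb (V d (K₁ ⊓ K₂)) → (leadOrb (V d K₁)) × (leadOrb (V d K₂)) := fun q =>
    (⟨Quotient.mk _ (e q), e q, ⟨(he q).choose, V_mono d inf_le_left (he q).choose_spec.1,
        (he q).choose_spec.2⟩, rfl⟩,
     ⟨Quotient.mk _ (e q), e q, ⟨(he q).choose, V_mono d inf_le_right (he q).choose_spec.1,
        (he q).choose_spec.2⟩, rfl⟩)
  have hφ : Function.Injective φ := by
    intro q q' hqq
    have h1 := congrArg (fun p => (p.1 : MulAction.orbitRel.Quotient K₁ E)) hqq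
    have h2 := congrArg (fun p => (p.2 : MulAction.orbitRel.Quotient K₂ E)) hqq
    obtain ⟨g1, hg1⟩ := MulAction.orbitRel_apply.1 (Quotient.exact h1)
    obtain ⟨g2, hg2⟩ := MulAction.orbitRel_apply.1 (Quotient.exact h2)
    change (g1 : F) • e q' = e q at hg1
    change (g2 : F) • e q' = e q at hg2
    have h3 : (g1 : F) = g2 := IsCancelSMul.right_cancel _ _ (e q') (hg1.trans hg2.symm)
    apply Subtype.ext
    rw [← hq q, ← hq q']
    apply Quotient.sound
    exact MulAction.orbitRel_apply.2 ⟨⟨g1, g1.2, h3 ▸ g2.2⟩, hg1⟩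
  have := f1.to_subtype
  have := f2.to_subtype
  have hfin := Finite.of_injective φ hφ
  refine ⟨Set.toFinite _, ?_⟩
  rw [← Nat.card_coe_set_eq, ← Nat.card_coe_set_eq, ← Nat.card_coe_set_eq, ← Nat.card_prod]
  exact Nat.card_le_card_of_injective φ hφ

theorem W_eq (hd : ∀ g h, d (g * h) = d g + MN.of g • d h)
    (H : Subgroup F) (S : Finset F) (hS : Subgroup.closure (S : Set F) = H) :
    W d H = Submodule.span (MN H) (Set.range fun s : S =>
    (d s, HahnSeries.single (s : F) 1 - HahnSeries.single 1 1)) := by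
  set c : F → HahnSeries E ℚ × HahnSeries F ℚ := fun g =>
    (d g, HahnSeries.single (g : F) 1 - HahnSeries.single 1 1) with hc
  have hcm : ∀ (g : H) (k : F), c (g * k) = c g + MN.of g • c k := by
    intro g k
    ext1
    · change d (g * k) = d g + MN.of g • d k
      rw [hd, of_sub_smul]
    · change HahnSeries.single ((g : F) * k) (1 : ℚ) - HahnSeries.single 1 1 =
        (HahnSeries.single (g : F) (1 : ℚ) - HahnSeries.single 1 1) +
        MN.of g • (HahnSeries.single k (1 : ℚ) - HahnSeries.single 1 1)
      rw [smul_sub, MN.of_smul_single, MN.of_smul_single]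
      change HahnSeries.single ((g : F) * k) (1 : ℚ) - HahnSeries.single 1 1 =
        (HahnSeries.single (g : F) (1 : ℚ) - HahnSeries.single 1 1) +
        (HahnSeries.single ((g : F) * k) (1 : ℚ) - HahnSeries.single ((g : F) * 1) 1)
      rw [mul_one]
      abel
  have h1 : c 1 = 0 := by
    have := hcm 1 1
    simpa using this
  set L := Submodule.span (MN H) (Set.range fun s : S => c s) with hL
  apply le_antisymm
  · refine Submodule.span_le.2 ?_
    rintro _ ⟨⟨h, hh⟩, rfl⟩
    change c h ∈ L
    have hSH : ∀ s ∈ (S : Set F), s ∈ H := fun s hs => hS ▸ Subgroup.subset_closure hs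
    have : ∀ x (hx : x ∈ Subgroup.closure (S : Set F)), c x ∈ L := by
      intro x hx
      induction hx using Subgroup.closure_induction with
      | mem x hx => exact Submodule.subset_span ⟨⟨x, hx⟩, rfl⟩
      | one => rw [h1]; exact Submodule.zero_mem _
      | mul x y hx hy ihx ihy =>
        rw [hcm ⟨x, hS ▸ hx⟩ y]
        exact Submodule.add_mem _ ihx (Submodule.smul_mem _ _ ihy)
      | inv x hx ih =>
        have h2 := hcm (⟨x, hS ▸ hx⟩⁻¹) x
        have h3 : ((⟨x, hS ▸ hx⟩⁻¹ : H) : F) = x⁻¹ := rfl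
        rw [h3, inv_mul_cancel, h1] at h2
        rw [eq_neg_of_add_eq_zero_left h2.symm]
        exact Submodule.neg_mem _ (Submodule.smul_mem _ _ ih)
    exact this h (hS ▸ hh)
  · refine Submodule.span_le.2 ?_
    rintro _ ⟨⟨s, hs⟩, rfl⟩
    exact Submodule.subset_span ⟨⟨s, hS ▸ Subgroup.subset_closure hs⟩, rfl⟩

theorem V_upper (hd : ∀ g h, d (g * h) = d g + MN.of g • d h)
    (H : Subgroup F) (hH : H ≠ ⊥) (S : Finset F)
    (hS : Subgroup.closure (S : Set F) = H) :
    Module.Finite (MN H) (V d H) ∧ Module.finrank (MN H) (V d H) + 1 ≤ S.card := by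
  have hW := W_eq d hd H S hS
  have hfW : Module.Finite (MN H) (W d H) := by
    rw [hW]
    exact Module.Finite.span_of_finite _ (Set.finite_range _)
  have hWr : Module.finrank (MN H) (W d H) ≤ S.card := by
    rw [hW]
    refine (finrank_range_le_card _).trans ?_
    simp
  let sn : W d H →ₗ[MN H] HahnSeries F ℚ :=
    (LinearMap.snd (MN H) (HahnSeries E ℚ) (HahnSeries F ℚ)).comp (W d H).subtype
  let φ : V d H →ₗ[MN H] LinearMap.ker sn :=
    LinearMap.codRestrict _ (LinearMap.codRestrict (W d H)
      ((LinearMap.inl (MN H) (HahnSeries E ℚ) (HahnSeries F ℚ)).comp (V d H).subtype)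
      (fun v => v.2)) (fun v => rfl)
  have hφ : Function.Injective φ := by
    intro v w h
    apply Subtype.ext
    exact congrArg (fun p : LinearMap.ker sn => (p : W d H).1.1) h
  refine ⟨Module.Finite.of_injective φ hφ, ?_⟩
  have h1 := LinearMap.finrank_le_finrank_of_injective hφ
  have h2 := LinearMap.finrank_range_add_finrank_ker sn
  have h3 : 0 < Module.finrank (MN H) (LinearMap.range sn) := by
    rw [Nat.pos_iff_ne_zero]
    intro h0
    rw [Submodule.finrank_eq_zero] at h0
    obtain ⟨h, hne'⟩ := Subgroup.ne_bot_iff_exists_ne_one.1 hH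
    have hne : (h : F) ≠ 1 := fun hx => hne' (Subtype.ext hx)
    have h4 : sn ⟨_, Submodule.subset_span ⟨h, rfl⟩⟩ = 0 := by
      have : sn ⟨_, Submodule.subset_span ⟨h, rfl⟩⟩ ∈ LinearMap.range sn := ⟨_, rfl⟩
      rw [h0] at this
      exact this
    change HahnSeries.single (h : F) (1 : ℚ) - HahnSeries.single 1 1 = 0 at h4
    have h5 := congrArg (fun v => v.coeff (h : F)) h4
    simp [HahnSeries.coeff_single_of_ne hne] at h5
  omega

theorem V_lower (J : Subgroup F) (hfin : (leadOrb (V d J)).Finite) (m : ℕ)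
    (y : Fin (m + 1) → J) (hy : LinearIndependent (MN J) fun i => d (y i)) :
    m ≤ (leadOrb (V d J)).ncard := by
  let u : Fin (m + 1) → HahnSeries F ℚ := fun i =>
    HahnSeries.single (y i : F) 1 - HahnSeries.single 1 1
  let A : (Fin (m + 1) → MN J) →ₗ[MN J] HahnSeries F ℚ := Fintype.linearCombination (MN J) u
  let B : (Fin (m + 1) → MN J) →ₗ[MN J] HahnSeries E ℚ :=
    Fintype.linearCombination (MN J) fun i => d (y i)
  have hB : Function.Injective B := linearIndependent_iff_injective_fintypeLinearCombination.1 hy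
  have hA : Module.finrank (MN J) (LinearMap.range A) ≤ 1 := by
    have hle : LinearMap.range A ≤ Submodule.span (MN J) {(HahnSeries.single 1 1 :
        HahnSeries F ℚ)} := by
      rw [Fintype.range_linearCombination, Submodule.span_le]
      rintro _ ⟨i, rfl⟩
      have h1 : (HahnSeries.single 1 1 : HahnSeries F ℚ) ∈
        Submodule.span (MN J) {(HahnSeries.single 1 1 : HahnSeries F ℚ)} :=
        Submodule.subset_span rfl
      refine Submodule.sub_mem _ ?_ h1
      have := Submodule.smul_mem _ (MN.of (y i)) h1
      rw [MN.of_smul_single] at this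
      change HahnSeries.single ((y i : F) * 1) 1 ∈ _ at this
      rwa [mul_one] at this
    exact (Submodule.finrank_mono hle).trans ((finrank_span_le_card _).trans (by simp))
  have h2 := LinearMap.finrank_range_add_finrank_ker A
  rw [Module.finrank_fin_fun] at h2
  have h3 := finrank_le_leadOrb (V d J) hfin (B.comp (LinearMap.ker A).subtype)
    (hB.comp Subtype.val_injective) (by
      rintro ⟨a, ha⟩
      change (B a, 0) ∈ W d J
      have : (B a, (0 : HahnSeries F ℚ)) = ∑ i, a i • (d (y i), u i) := by
        rw [← show A a = 0 from ha]
        simp only [A, B, Fintype.linearCombination_apply]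
        ext1
        · simp [Prod.fst_sum]
        · simp [Prod.snd_sum]
      rw [this]
      exact Submodule.sum_mem _ fun i _ => Submodule.smul_mem _ _
        (Submodule.subset_span ⟨y i, rfl⟩))
  omega

end SubgroupPart

end HNC


namespace HNC

/-- Edges of the Cayley graph. -/
structure Ed (F X : Type*) where
  /-- the origin -/
  v : F
  /-- the label -/
  x : X

section EdPart

variable {F X : Type*} [Group F] [LinearOrder F] [LinearOrder X]

/-- The lexicographic encoding of edges. -/
def Ed.enc (e : Ed F X) : F ×ₗ X := toLex (e.v, e.x)

theorem Ed.enc_injective : Function.Injective (Ed.enc : Ed F X → F ×ₗ X) := by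
  rintro ⟨f, x⟩ ⟨g, y⟩ h
  have h1 : (f, x) = (g, y) := toLex.injective h
  cases h1
  rfl

noncomputable instance : LinearOrder (Ed F X) := LinearOrder.lift' Ed.enc Ed.enc_injective

theorem Ed.le_iff (e e' : Ed F X) : e ≤ e' ↔ e.v < e'.v ∨ e.v = e'.v ∧ e.x ≤ e'.x :=
  Prod.Lex.toLex_le_toLex

instance : MulAction F (Ed F X) where
  smul g e := ⟨g * e.v, e.x⟩
  one_smul e := by
    change Ed.mk (1 * e.v) e.x = e
    rw [one_mul]
  mul_smul g h e := by
    change Ed.mk (g * h * e.v) e.x = Ed.mk (g * (h * e.v)) e.x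
    rw [mul_assoc]

theorem Ed.smul_mk (g f : F) (x : X) : g • Ed.mk f x = Ed.mk (g * f) x := rfl

variable [IsOrderedCancelSMul F F]

theorem Ed.smul_le (a b : Ed F X) (h : a ≤ b) (c : F) : c • a ≤ c • b := by
  rw [Ed.le_iff] at h ⊢
  rcases h with h | ⟨h, h'⟩
  · left
    exact SMul.smul_lt_smul_of_le_of_lt (le_refl c) h
  · right
    exact ⟨congrArg (c * ·) h, h'⟩

instance : IsOrderedCancelSMul F (Ed F X) where
  smul_le_smul_left a b h c := Ed.smul_le a b h c
  smul_le_smul_right a b h c := by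
    rw [Ed.le_iff]
    rcases h.eq_or_lt with h | h
    · right
      subst h
      exact ⟨rfl, le_rfl⟩
    · left
      exact SMul.smul_lt_smul_of_lt_of_le h (le_refl c.v)
  le_of_smul_le_smul_left c a b h := by
    have := Ed.smul_le _ _ h c⁻¹
    simpa using this
  le_of_smul_le_smul_right a b c h := by
    refine IsOrderedCancelSMul.le_of_smul_le_smul_right a b c.v ?_
    rw [Ed.le_iff] at h
    rcases h with h | h
    · exact h.le
    · exact h.1.le

theorem exists_retraction {F : Type*} [Group F] (J : Subgroup F) :
    ∃ p : F → J, p 1 = 1 ∧ ∀ (k : J) f, p (k * f) = k * p f := by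
  classical
  have hch : ∀ f : F, ∃ j : J,
      (j : F) * (Quotient.mk (MulAction.orbitRel J F) f).out = f := by
    intro f
    have h1 : (MulAction.orbitRel J F) (Quotient.mk (MulAction.orbitRel J F) f).out f :=
      Quotient.exact (Quotient.out_eq _)
    obtain ⟨g, hg⟩ := MulAction.orbitRel_apply.1 ((MulAction.orbitRel J F).symm h1)
    exact ⟨g, hg⟩
  choose j hj using hch
  refine ⟨fun f => j f * (j 1)⁻¹, by simp, fun k f => ?_⟩
  have h1 : (Quotient.mk (MulAction.orbitRel J F) (k * f)) = Quotient.mk _ f :=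
    Quotient.sound (MulAction.orbitRel_apply.2 ⟨k, rfl⟩)
  have h2 := hj (k * f)
  rw [h1] at h2
  have h3 : j (k * f) = k * j f := by
    apply Subtype.ext
    apply mul_right_cancel (b := (Quotient.mk (MulAction.orbitRel J F) f).out)
    rw [h2, Subgroup.coe_mul, mul_assoc, hj]
  simp only [h3, mul_assoc]

end EdPart

section Indep

variable {F : Type*} [Group F] [IsFreeGroup F] [LinearOrder F] [IsOrderedCancelSMul F F]
  [LinearOrder (IsFreeGroup.Generators F)]

theorem fox_indep (d : F → HahnSeries (Ed F (IsFreeGroup.Generators F)) ℚ)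
    (hdx : ∀ x, d (IsFreeGroup.of x) = HahnSeries.single ⟨1, x⟩ 1)
    (hd : ∀ g h, d (g * h) = d g + MN.of g • d h) (J : Subgroup F) [IsFreeGroup J] :
    LinearIndependent (MN J)
      fun y : IsFreeGroup.Generators J => d ((IsFreeGroup.of y : J) : F) := by
  classical
  obtain ⟨D, hDy, hD⟩ := exists_crossed (G := J) (R := MN J)
    (N := IsFreeGroup.Generators J →₀ MN J) MN.of fun y => Finsupp.single y 1
  obtain ⟨p, hp1, hp⟩ := exists_retraction J
  have hD1 : D 1 = 0 := by
    have := hD 1 1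
    simpa using this
  have hd1 : d 1 = 0 := by
    have := hd 1 1
    simpa using this
  obtain ⟨Ψ, hΨ⟩ := exists_extension (G := J) (E := Ed F (IsFreeGroup.Generators F))
    (fun e => D (p (e.v * IsFreeGroup.of e.x)) - D (p e.v)) (by
      rintro k ⟨f, x⟩
      change D (p ((k : F) * f * IsFreeGroup.of x)) - D (p ((k : F) * f)) =
        MN.of k • (D (p (f * IsFreeGroup.of x)) - D (p f))
      rw [mul_assoc, hp, hp, hD, hD, smul_sub]
      abel)
  have hdi : ∀ g, d g⁻¹ = - (MN.of g⁻¹ • d g) := by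
    intro g
    have h := hd g⁻¹ g
    rw [inv_mul_cancel, hd1] at h
    exact eq_neg_of_add_eq_zero_left h.symm
  let S : Subgroup F :=
    { carrier := {g | ∀ f, D (p (f * g)) - D (p f) = Ψ (MN.of f • d g)}
      one_mem' := by
        intro f
        rw [mul_one, sub_self, hd1, smul_zero, map_zero]
      mul_mem' := by
        intro g h hg hh f
        rw [hd, smul_add, map_add, smul_smul, ← map_mul, ← hg, ← hh, mul_assoc]
        abel
      inv_mem' := by
        intro g hg f
        rw [hdi, smul_neg, map_neg, smul_smul, ← map_mul, ← hg, inv_mul_cancel_right]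
        abel }
  have hS : ∀ g f, D (p (f * g)) - D (p f) = Ψ (MN.of f • d g) := fun g => free_induction S (by
    intro x f
    rw [hdx, MN.of_smul_single, hΨ, Ed.smul_mk, mul_one]) g
  have hJ : ∀ j : J, Ψ (d j) = D j := by
    intro j
    have h := hS j 1
    rw [map_one, one_smul, one_mul, hp1, hD1, sub_zero] at h
    rw [← h]
    have h2 := hp j 1
    rw [hp1, mul_one, mul_one] at h2
    rw [h2]
  apply LinearIndependent.of_comp Ψ
  have : (Ψ ∘ fun y : IsFreeGroup.Generators J => d ((IsFreeGroup.of y : J) : F)) =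
      fun y => Finsupp.single y (1 : MN J) := by
    funext y
    rw [Function.comp_apply, hJ, hDy]
  rw [this]
  have h := (Finsupp.basisSingleOne (R := MN J) (ι := IsFreeGroup.Generators J)).linearIndependent
  rwa [Finsupp.coe_basisSingleOne] at h

theorem core (K₁ K₂ : Subgroup F) (h₁ : K₁ ≠ ⊥) (h₂ : K₂ ≠ ⊥) (S₁ S₂ : Finset F)
    (hS₁ : Subgroup.closure (S₁ : Set F) = K₁) (hS₂ : Subgroup.closure (S₂ : Set F) = K₂) :
    ∃ S : Finset F, Subgroup.closure (S : Set F) = K₁ ⊓ K₂ ∧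
      S.card ≤ (S₁.card - 1) * (S₂.card - 1) + 1 := by
  classical
  obtain ⟨d, hdx, hd⟩ := exists_crossed (G := F) (R := MN F)
    (N := HahnSeries (Ed F (IsFreeGroup.Generators F)) ℚ) MN.of
    fun x => HahnSeries.single ⟨1, x⟩ 1
  obtain ⟨i1, r1⟩ := V_upper d hd K₁ h₁ S₁ hS₁
  obtain ⟨i2, r2⟩ := V_upper d hd K₂ h₂ S₂ hS₂
  obtain ⟨f1, l1⟩ := leadOrb_le_finrank (V d K₁)
  obtain ⟨f2, l2⟩ := leadOrb_le_finrank (V d K₂)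
  obtain ⟨f, l⟩ := leadOrb_inter d K₁ K₂ f1 f2
  set J : Subgroup F := K₁ ⊓ K₂ with hJ
  set n := (S₁.card - 1) * (S₂.card - 1) with hn
  have hln : (leadOrb (V d J)).ncard ≤ n :=
    l.trans (Nat.mul_le_mul (by omega) (by omega))
  have hind := fox_indep d hdx hd J
  have hno : ∀ φ : Fin (n + 1 + 1) → IsFreeGroup.Generators J, ¬ Function.Injective φ := by
    intro φ hφ
    have h := V_lower d J f (n + 1) (fun i => IsFreeGroup.of (φ i)) (hind.comp φ hφ)
    omega
  have hfinY : Finite (IsFreeGroup.Generators J) := by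
    by_contra hinf
    rw [not_finite_iff_infinite] at hinf
    let φ := (Fin.valEmbedding (n := n + 1 + 1)).trans
      (Infinite.natEmbedding (IsFreeGroup.Generators J))
    exact hno φ φ.injective
  have := Fintype.ofFinite (IsFreeGroup.Generators J)
  have hcard : Fintype.card (IsFreeGroup.Generators J) ≤ n + 1 := by
    by_contra hc
    have h3 : Fintype.card (Fin (n + 1 + 1)) ≤ Fintype.card (IsFreeGroup.Generators J) := by
      rw [Fintype.card_fin]; omega
    obtain ⟨φ⟩ := Function.Embedding.nonempty_of_card_le h3
    exact hno φ φ.injective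
  let T : Finset F :=
    Finset.univ.image fun y : IsFreeGroup.Generators J => ((IsFreeGroup.of y : J) : F)
  refine ⟨T, ?_, Finset.card_image_le.trans hcard⟩
  apply le_antisymm
  · rw [Subgroup.closure_le]
    intro x hx
    simp only [T, Finset.coe_image, Finset.coe_univ, Set.image_univ, Set.mem_range] at hx
    obtain ⟨y, rfl⟩ := hx
    exact (IsFreeGroup.of y : J).2
  · intro x hx
    have := free_induction (G := J) ((Subgroup.closure (T : Set F)).comap J.subtype) (fun y => by
      refine Subgroup.mem_comap.2 (Subgroup.subset_closure ?_)
      exact Finset.mem_coe.2 (Finset.mem_image_of_mem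
        (fun y : IsFreeGroup.Generators J => ((IsFreeGroup.of y : J) : F)) (Finset.mem_univ y)))
        ⟨x, hx⟩
    exact this

end Indep

end HNC

/-- strengthened Hanna Neumann Conjecture, Friedman–Mineyev: if `K₁, K₂`
are finitely generated nontrivial subgroups of a free group `F`, then `K₁ ⊓ K₂` is
finitely generated with `rk(K₁ ⊓ K₂) ≤ (rk(K₁) − 1)(rk(K₂) − 1) + 1`. -/
theorem hanna_neumann {F : Type*} [Group F] [IsFreeGroup F] (K₁ K₂ : Subgroup F)
    (h₁ : K₁ ≠ ⊥) (h₂ : K₂ ≠ ⊥)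
    (hfg₁ : ∃ S : Finset F, Subgroup.closure (S : Set F) = K₁)
    (hfg₂ : ∃ S : Finset F, Subgroup.closure (S : Set F) = K₂) :
    ∃ S : Finset F, Subgroup.closure (S : Set F) = K₁ ⊓ K₂ ∧
      S.card ≤ (K₁.rk - 1) * (K₂.rk - 1) + 1 := by
  classical
  have e₁ : K₁.rk ∈ {n : ℕ | ∃ S : Finset F, Subgroup.closure (S : Set F) = K₁ ∧ S.card = n} :=
    Nat.sInf_mem (by obtain ⟨S, hS⟩ := hfg₁; exact ⟨S.card, S, hS, rfl⟩)
  have e₂ : K₂.rk ∈ {n : ℕ | ∃ S : Finset F, Subgroup.closure (S : Set F) = K₂ ∧ S.card = n} :=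
    Nat.sInf_mem (by obtain ⟨S, hS⟩ := hfg₂; exact ⟨S.card, S, hS, rfl⟩)
  obtain ⟨S₁, hS₁, c₁⟩ := e₁
  obtain ⟨S₂, hS₂, c₂⟩ := e₂
  obtain ⟨iF, hF⟩ := HNC.exists_biorder F
  letI : LinearOrder (IsFreeGroup.Generators F) := linearOrderOfSTO WellOrderingRel
  rw [← c₁, ← c₂]
  exact HNC.core K₁ K₂ h₁ h₂ S₁ S₂ hS₁ hS₂
end
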